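/- arXiv:2411.17889 — 6 statements merged into one kernel-verified Lean document; each statement's English description precedes it below -/
import Mathlib

section
/- Let L be a countable first-order language and let U be a countable ultrahomogeneous L-structure. Assume that (i) the monoid of self-embeddings of U has the amalgamation property, i.e., for all embeddings f, g : U → U there exist embeddings f', g' : U → U with f' ∘ f = g' ∘ g, and (ii) some self-embedding of U is not surjective. Then there exists an L-structure N of cardinality ℵ₁ such that N is ultrahomogeneous and N has the same age as U. -/
open FirstOrder Language Cardinal CategoryTheory

/-!
Amalgamate countably many self-embeddings over and over, starting from the `e₀ ∘ h` for `h` in a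
countable set of automorphisms, together with a proper `e₀`. Composites of two consecutive steps do
not depend on `h`, so in the limit each `h` induces an automorphism (a zigzag argument). The limit
is again isomorphic to `U`, so countably many automorphisms of `U` extend simultaneously along one
proper self-embedding. Hence any choice of automorphisms witnessing the ultrahomogeneity of `U`
extends to such a choice on a proper extension. With these choices recorded by additional function
symbols, ultrahomogeneity passes to directed unions, and a maximal structure on a subset of a set
of size `ℵ₁`, given by Zorn's lemma, must be uncountable.
-/

universe u v w

namespace UltrahomogeneousExtension

variable {L : FirstOrder.Language.{u, v}}

section Embeddings

variable {B M N : Type*} [L.Structure B] [L.Structure M] [L.Structure N]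

theorem exists_comp_eq_of_image_subset_range {e : M ↪[L] N} {p : B ↪[L] N} {s : Set B}
    (hs : Substructure.closure L s = ⊤) (hp : p '' s ⊆ Set.range e) :
    ∃ p' : B ↪[L] M, e.comp p' = p := by
  have closure_le : Substructure.closure L s ≤ e.toHom.range.comap p.toHom :=
    Substructure.closure_le.2 fun x hx => hp ⟨x, hx, rfl⟩
  have mem_range (x : B) : p x ∈ e.toHom.range := closure_le (hs ▸ Substructure.mem_top x)
  refine ⟨e.equivRange.symm.toEmbedding.comp (p.codRestrict _ mem_range), Embedding.ext fun x => ?_⟩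
  exact congrArg Subtype.val (e.equivRange.apply_symm_apply (p.codRestrict _ mem_range x))

theorem embedding_eq_of_eqOn_generators {s : Set B} (hs : Substructure.closure L s = ⊤)
    {p q : B ↪[L] N} (h : Set.EqOn p q s) : p = q :=
  Embedding.toHom_injective (Hom.eq_of_eqOn_dense hs h)

/-- The isomorphism with underlying map a given surjective embedding. -/
noncomputable def equivOfSurjective (f : M ↪[L] N) (hf : Function.Surjective f) : M ≃[L] N :=
  ⟨_root_.Equiv.ofBijective f ⟨f.injective, hf⟩, f.map_fun', f.map_rel'⟩

theorem closure_preimage_val_closure (s : Set M) :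
    Substructure.closure L (Subtype.val ⁻¹' s : Set (Substructure.closure L s)) = ⊤ := by
  refine Substructure.map_injective_of_injective
    (f := (Substructure.closure L s).subtype.toHom) Subtype.val_injective ?_
  rw [Substructure.map_closure, ← Hom.range_eq_map, Substructure.range_subtype]
  exact congrArg (Substructure.closure L) <|
    (Subtype.image_preimage_coe _ s).trans (Set.inter_eq_right.2 Substructure.subset_closure)

end Embeddings

/-! ### Finite covers -/

section Covers

/-- The ranges of the maps `e i` are cofinal among the finite subsets of `N`; together with the
`e i` being embeddings, this is how a directed union of structures is described here. -/
def CoversFiniteSets {ι : Type*} {M : ι → Type*} {N : Type*} (e : ∀ i, M i → N) : Prop :=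
  ∀ s : Set N, s.Finite → ∃ i, s ⊆ Set.range (e i)

namespace CoversFiniteSets

theorem of_directed {ι : Type*} [Nonempty ι] {M : ι → Type*} {N : Type*} {e : ∀ i, M i → N}
    (hdir : Directed (· ⊆ ·) fun i => Set.range (e i)) (hsurj : ∀ z, ∃ i, z ∈ Set.range (e i)) :
    CoversFiniteSets e := fun _ hs =>
  let ⟨i, hi⟩ := hdir.exists_mem_subset_of_finset_subset_biUnion (s := hs.toFinset)
    fun z _ => Set.mem_iUnion.2 (hsurj z)
  ⟨i, hs.coe_toFinset ▸ hi⟩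

theorem restrict {ι : Type*} {M : ι → Type*} {N : Type*} {e : ∀ i, M i → N}
    (he : CoversFiniteSets e) {s : Set N} (hs : s.Finite) :
    CoversFiniteSets fun i : {i // s ⊆ Set.range (e i)} => e i := fun t ht =>
  let ⟨i, hi⟩ := he (s ∪ t) (hs.union ht)
  ⟨⟨i, Set.subset_union_left.trans hi⟩, Set.subset_union_right.trans hi⟩

theorem comp_surjective {ι : Type*} {M : ι → Type*} {N P : Type*} {e : ∀ i, M i → N}
    (he : CoversFiniteSets e) {g : N → P} (hg : Function.Surjective g) :
    CoversFiniteSets fun i => g ∘ e i := fun s hs => by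
  obtain ⟨i, hi⟩ := he _ (hs.image (Function.surjInv hg))
  refine ⟨i, fun z hz => ?_⟩
  obtain ⟨x, hx⟩ := hi ⟨z, hz, rfl⟩
  exact ⟨x, (congrArg g hx).trans (Function.surjInv_eq hg z)⟩

variable {ι : Type*} {M : ι → Type*} [∀ i, L.Structure (M i)] {N : Type*} [L.Structure N]
  {e : ∀ i, M i ↪[L] N} (he : CoversFiniteSets fun i => ⇑(e i))
include he

theorem exists_comp_eq {B : Type*} [L.Structure B] (hB : Structure.FG L B) (p : B ↪[L] N) :
    ∃ i, ∃ p' : B ↪[L] M i, (e i).comp p' = p := by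
  obtain ⟨s, hs, hcl⟩ := Structure.fg_iff.1 hB
  obtain ⟨i, hi⟩ := he (p '' s) (hs.image p)
  exact ⟨i, exists_comp_eq_of_image_subset_range hcl hi⟩

theorem exists_embedding {P : Type*} [L.Structure P] (p : ∀ i, M i ↪[L] P) {h : N → P}
    (hp : ∀ i x, h (e i x) = p i x) : ∃ k : N ↪[L] P, ⇑k = h := by
  have exists_lift {n : ℕ} (x : Fin n → N) : ∃ i, ∃ x' : Fin n → M i, e i ∘ x' = x := by
    obtain ⟨i, hi⟩ := he (Set.range x) (Set.finite_range x)
    choose x' hx' using fun j => hi (Set.mem_range_self j)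
    exact ⟨i, x', funext hx'⟩
  have comp_eq (i) {n : ℕ} (x : Fin n → M i) : h ∘ e i ∘ x = p i ∘ x := funext fun j => hp i (x j)
  have h_inj : Function.Injective h := by
    intro y z hyz
    obtain ⟨i, hi⟩ := he {y, z} (Set.toFinite _)
    obtain ⟨⟨y, rfl⟩, ⟨z, rfl⟩⟩ := Set.pair_subset_iff.1 hi
    rw [hp, hp] at hyz
    exact congrArg (e i) ((p i).injective hyz)
  refine ⟨⟨⟨h, h_inj⟩, fun f x => ?_, fun r x => ?_⟩, rfl⟩
  · obtain ⟨i, x, rfl⟩ := exists_lift x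
    change h (Structure.funMap f (e i ∘ x)) = Structure.funMap f (h ∘ e i ∘ x)
    rw [comp_eq, ← (e i).map_fun, hp, (p i).map_fun]
  · obtain ⟨i, x, rfl⟩ := exists_lift x
    change Structure.RelMap r (h ∘ e i ∘ x) ↔ Structure.RelMap r (e i ∘ x)
    rw [comp_eq, (e i).map_rel, (p i).map_rel]

theorem exists_equiv (k : ∀ i, M i ≃[L] M i) {h : N → N} (hk : ∀ i x, h (e i x) = e i (k i x)) :
    ∃ h' : N ≃[L] N, ⇑h' = h := by
  obtain ⟨h', rfl⟩ := he.exists_embedding (fun i => (e i).comp (k i).toEmbedding) hk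
  refine ⟨equivOfSurjective h' fun z => ?_, rfl⟩
  obtain ⟨i, hi⟩ := he {z} (Set.finite_singleton z)
  obtain ⟨x, rfl⟩ := hi rfl
  exact ⟨e i ((k i).symm x), (hk i _).trans (congrArg (e i) ((k i).apply_symm_apply x))⟩

theorem isExtensionPair {A : Type*} [L.Structure A] (h : ∀ i, L.IsExtensionPair A (M i)) :
    L.IsExtensionPair A N := by
  rw [isExtensionPair_iff_exists_embedding_closure_singleton_sup]
  intro S hS f m
  obtain ⟨i, f, rfl⟩ := he.exists_comp_eq ((Substructure.fg_iff_structure_fg S).1 hS) f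
  obtain ⟨g, rfl⟩ :=
    isExtensionPair_iff_exists_embedding_closure_singleton_sup.1 (h i) S hS f m
  exact ⟨(e i).comp g, (Embedding.comp_assoc _ _ _).symm⟩

omit he in
theorem age_eq {M : ι → Type w} [∀ i, L.Structure (M i)] {N : Type w} [L.Structure N]
    {e : ∀ i, M i ↪[L] N} (he : CoversFiniteSets fun i => ⇑(e i))
    {K : Set (Bundled.{w} L.Structure)} (hM : ∀ i, L.age (M i) = K) : L.age N = K := by
  refine Set.Subset.antisymm (fun B ⟨hB, ⟨p⟩⟩ => ?_) ?_
  · obtain ⟨i, p', -⟩ := he.exists_comp_eq hB p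
    exact hM i ▸ ⟨hB, ⟨p'⟩⟩
  · obtain ⟨i, -⟩ := he ∅ Set.finite_empty
    exact hM i ▸ (e i).age_subset_age

end CoversFiniteSets

theorem coversFiniteSets_directLimit_of {ι : Type*} [Preorder ι] [IsDirectedOrder ι] [Nonempty ι]
    (G : ι → Type*) [∀ i, L.Structure (G i)] (f : ∀ i j, i ≤ j → G i ↪[L] G j)
    [DirectedSystem G fun i j h => f i j h] :
    CoversFiniteSets fun i => ⇑(DirectLimit.of L ι G f i) := by
  refine .of_directed (directed_of_isDirected_le fun i j hij => ?_) DirectLimit.exists_of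
  rintro _ ⟨x, rfl⟩
  exact ⟨f i j hij x, DirectLimit.of_f⟩

end Covers

/-! ### Countable ultrahomogeneous structures -/

section CountableUltrahomogeneous

theorem isExtensionPair_of_age_subset {M N : Type w} [L.Structure M] [L.Structure N]
    (hN : L.IsUltrahomogeneous N) (hage : L.age M ⊆ L.age N) : L.IsExtensionPair M N := by
  refine isExtensionPair_iff_exists_embedding_closure_singleton_sup.2 fun S hS f m => ?_
  obtain ⟨-, hemb⟩ := hage (age.fg_substructure ((Substructure.fg_closure_singleton m).sup hS))
  exact hN.extend_embedding ((Substructure.fg_iff_structure_fg S).1 hS) (h := hemb) f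
    (Substructure.inclusion le_sup_right)

theorem nonempty_equiv_of_isExtensionPair {M N : Type w} [L.Structure M] [L.Structure N]
    [Countable M] [Countable N] (hage : L.age M ⊆ L.age N) (hMN : L.IsExtensionPair M N)
    (hNM : L.IsExtensionPair N M) : Nonempty (M ≃[L] N) := by
  obtain ⟨-, ⟨f⟩⟩ := hage (age.fg_substructure Substructure.fg_bot)
  obtain ⟨e, -⟩ := equiv_between_cg Structure.cg_of_countable Structure.cg_of_countable
    ⟨⟨⊥, f.toHom.range, f.equivRange⟩, Substructure.fg_bot⟩ hMN hNM
  exact ⟨e⟩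

theorem nonempty_equiv_of_isUltrahomogeneous {M N : Type w} [L.Structure M] [L.Structure N]
    [Countable M] [Countable N] (hM : L.IsUltrahomogeneous M) (hN : L.IsUltrahomogeneous N)
    (hage : L.age M = L.age N) : Nonempty (M ≃[L] N) :=
  nonempty_equiv_of_isExtensionPair hage.subset (isExtensionPair_of_age_subset hN hage.subset)
    (isExtensionPair_of_age_subset hM hage.superset)

theorem CoversFiniteSets.nonempty_equiv {U V : Type w} [L.Structure U] [L.Structure V]
    [Countable U] [Countable V] (hU : L.IsUltrahomogeneous U) {ι : Type*} {e : ι → (U ↪[L] V)}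
    (he : CoversFiniteSets fun i => ⇑(e i)) : Nonempty (V ≃[L] U) :=
  have hage : L.age V = L.age U := he.age_eq fun _ => rfl
  nonempty_equiv_of_isExtensionPair hage.subset (isExtensionPair_of_age_subset hU hage.subset)
    (he.isExtensionPair fun _ => isExtensionPair_of_age_subset hU Set.Subset.rfl)

end CountableUltrahomogeneous

/-! ### Sequential colimits -/

section SequentialColimits

variable {G : ℕ → Type*} [∀ n, L.Structure (G n)] {V W : Type*} [L.Structure V] [L.Structure W]

/-- `o` exhibits `V` as the union of the chain `G 0 → G 1 → ⋯` with transition maps `d`. -/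
structure IsSequentialColimit (d : ∀ n, G n ↪[L] G (n + 1)) (o : ∀ n, G n ↪[L] V) : Prop where
  comp_eq : ∀ n, (o (n + 1)).comp (d n) = o n
  exists_mem_range : ∀ z, ∃ n, z ∈ Set.range (o n)

namespace IsSequentialColimit

variable {d : ∀ n, G n ↪[L] G (n + 1)} {o : ∀ n, G n ↪[L] V} (ho : IsSequentialColimit d o)

include ho in
theorem apply_apply (n : ℕ) (x : G n) : o (n + 1) (d n x) = o n x :=
  DFunLike.congr_fun (ho.comp_eq n) x

include ho in
theorem coversFiniteSets : CoversFiniteSets fun n => ⇑(o n) := by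
  refine .of_directed (directed_of_isDirected_le <| monotone_nat_of_le_succ fun n => ?_)
    ho.exists_mem_range
  rintro _ ⟨x, rfl⟩
  exact ⟨d n x, ho.apply_apply n x⟩

include ho in
theorem countable [∀ n, Countable (G n)] : Countable V :=
  Function.Surjective.countable (f := fun p : Σ n, G n => o p.1 p.2) fun z =>
    let ⟨n, x, hx⟩ := ho.exists_mem_range z
    ⟨⟨n, x⟩, hx⟩

include ho in
theorem exists_lift {g : ∀ n, G n ↪[L] W} (hg : ∀ n, (g (n + 1)).comp (d n) = g n) :
    ∃ k : V ↪[L] W, ∀ n, k.comp (o n) = g n := by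
  have exists_later (m n : ℕ) (hmn : m ≤ n) (x : G m) : ∃ y, o n y = o m x ∧ g n y = g m x := by
    induction n, hmn using Nat.le_induction with
    | base => exact ⟨x, rfl, rfl⟩
    | succ n _ ih =>
      obtain ⟨y, hoy, hgy⟩ := ih
      exact ⟨d n y, (ho.apply_apply n y).trans hoy, (DFunLike.congr_fun (hg n) y).trans hgy⟩
  have well_defined {m n : ℕ} {x : G m} {y : G n} (hxy : o m x = o n y) : g m x = g n y := by
    obtain ⟨x', hox, hgx⟩ := exists_later m (max m n) (le_max_left m n) x
    obtain ⟨y', hoy, hgy⟩ := exists_later n (max m n) (le_max_right m n) y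
    obtain rfl : x' = y' := (o _).injective (hox.trans (hxy.trans hoy.symm))
    exact hgx.symm.trans hgy
  choose N X hX using ho.exists_mem_range
  obtain ⟨k, hk⟩ := ho.coversFiniteSets.exists_embedding g (h := fun z => g (N z) (X z))
    fun n x => well_defined (hX (o n x))
  exact ⟨k, fun n => Embedding.ext fun x => (congrFun hk _).trans (well_defined (hX (o n x)))⟩

include ho in
theorem comp_equiv (e : V ≃[L] W) : IsSequentialColimit d fun n => e.toEmbedding.comp (o n) where
  comp_eq n := by rw [Embedding.comp_assoc, ho.comp_eq]
  exists_mem_range z :=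
    let ⟨n, x, hx⟩ := ho.exists_mem_range (e.symm z)
    ⟨n, x, (congrArg e hx).trans (e.apply_symm_apply z)⟩

/-- The maps `g n` for even `n` go from the subchain of even stages to that of odd stages, and those
for odd `n` go back; on colimits they induce mutually inverse maps. -/
theorem exists_equiv_of_zigzag (ho : IsSequentialColimit d o) {g : ∀ n, G n ↪[L] G (n + 1)}
    (hg : ∀ n, (g (n + 1)).comp (g n) = (d (n + 1)).comp (d n)) :
    ∃ k : V ≃[L] V, ∀ x, k (o 0 x) = o 1 (g 0 x) := by
  have apply_g_g (n : ℕ) (x : G n) : o (n + 2) (g (n + 1) (g n x)) = o n x := by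
    rw [← Embedding.comp_apply (g (n + 1)), hg, Embedding.comp_apply, ho.apply_apply,
      ho.apply_apply]
  let kEven (n : ℕ) : G n ↪[L] V := (o (n + 1)).comp (g n)
  let kOdd (n : ℕ) : G n ↪[L] V := (kEven (n + 1)).comp (d n)
  have kOdd_comp (n : ℕ) : (kOdd (n + 1)).comp (d n) = kEven n := by
    rw [Embedding.comp_assoc, ← hg]
    exact Embedding.ext fun x => apply_g_g (n + 1) (g n x)
  obtain ⟨k, hk⟩ := ho.exists_lift (g := fun n => if Even n then kEven n else kOdd n) fun n => by
    by_cases hn : Even n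
    · simp only [hn, Nat.even_add_one, not_true_eq_false, if_true, if_false, kOdd_comp]
    · simp only [hn, Nat.even_add_one, not_false_eq_true, if_true, if_false, kOdd]
  have k_apply {n : ℕ} (hn : Even n) (x : G n) : k (o n x) = o (n + 1) (g n x) :=
    (DFunLike.congr_fun (hk n) x).trans (by rw [if_pos hn]; rfl)
  have mem_range_of_odd {n : ℕ} (hn : ¬ Even n) (x : G n) : ∃ z, k z = o n x :=
    ⟨o (n + 1) (g n x), (k_apply (Nat.even_add_one.2 hn) _).trans (apply_g_g n x)⟩
  refine ⟨equivOfSurjective k fun z => ?_, k_apply Even.zero⟩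
  obtain ⟨n, x, rfl⟩ := ho.exists_mem_range z
  by_cases hn : Even n
  · rw [← ho.apply_apply n x]
    exact mem_range_of_odd (Nat.even_add_one.not.2 (not_not.2 hn)) (d n x)
  · exact mem_range_of_odd hn x

end IsSequentialColimit

theorem isSequentialColimit_directLimit_of (d : ∀ n, G n ↪[L] G (n + 1)) :
    IsSequentialColimit d fun n => DirectLimit.of L ℕ G (DirectedSystem.natLERec d) n where
  comp_eq n := by
    ext x
    have natLERec_succ : DirectedSystem.natLERec d n (n + 1) n.le_succ x = d n x := by
      simp only [DirectedSystem.coe_natLERec, Nat.leRecOn_succ le_rfl, Nat.leRecOn_self]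
    rw [Embedding.comp_apply, ← natLERec_succ, DirectLimit.of_f]
  exists_mem_range := DirectLimit.exists_of

theorem exists_isSequentialColimit {U : Type w} [L.Structure U] [Countable U]
    (hU : L.IsUltrahomogeneous U) (d : ℕ → (U ↪[L] U)) :
    ∃ o : ℕ → (U ↪[L] U), IsSequentialColimit (G := fun _ => U) d o := by
  have hV := isSequentialColimit_directLimit_of (G := fun _ => U) d
  have := hV.countable
  obtain ⟨e⟩ := hV.coversFiniteSets.nonempty_equiv hU
  exact ⟨_, hV.comp_equiv e⟩

end SequentialColimits

/-! ### Amalgamation of self-embeddings -/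

section Amalgamation

variable {U : Type w} [L.Structure U]

variable (L U) in
/-- The monoid of self-embeddings of `U` has the amalgamation property. -/
def SelfEmbeddingsAmalgamate : Prop :=
  ∀ f g : U ↪[L] U, ∃ f' g' : U ↪[L] U, f'.comp f = g'.comp g

namespace SelfEmbeddingsAmalgamate

variable [Countable U] (hAP : SelfEmbeddingsAmalgamate L U) (hU : L.IsUltrahomogeneous U)
include hAP hU

theorem exists_comp_eq_of_nat (f : ℕ → (U ↪[L] U)) :
    ∃ (c : U ↪[L] U) (f' : ℕ → (U ↪[L] U)), ∀ n, (f' n).comp (f n) = c := by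
  choose A B hAB using hAP
  let c : ℕ → (U ↪[L] U) := fun n => n.rec (f 0) fun n c => (A c (f (n + 1))).comp c
  have exists_comp_eq_c : ∀ n, ∃ p : U ↪[L] U, p.comp (f n) = c n
    | 0 => ⟨Embedding.refl L U, Embedding.refl_comp (f 0)⟩
    | n + 1 => ⟨B (c n) (f (n + 1)), (hAB _ _).symm⟩
  obtain ⟨o, ho⟩ := exists_isSequentialColimit hU fun n => A (c n) (f (n + 1))
  have o_comp_c (n : ℕ) : (o n).comp (c n) = (o 0).comp (c 0) := by
    induction n with
    | zero => rfl
    | succ n ih => rw [← ih, ← ho.comp_eq n, Embedding.comp_assoc]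
  choose p hp using exists_comp_eq_c
  exact ⟨(o 0).comp (c 0), fun n => (o n).comp (p n), fun n => by
    rw [Embedding.comp_assoc, hp, o_comp_c]⟩

theorem exists_comp_eq {T : Type*} [Countable T] [Nonempty T] (f : T → (U ↪[L] U)) :
    ∃ (c : U ↪[L] U) (f' : T → (U ↪[L] U)), ∀ t, (f' t).comp (f t) = c := by
  obtain ⟨u, hu⟩ := exists_surjective_nat T
  choose v hv using hu
  obtain ⟨c, f', hf'⟩ := hAP.exists_comp_eq_of_nat hU (f ∘ u)
  exact ⟨c, f' ∘ v, fun t => by simpa only [Function.comp_apply, hv] using hf' (v t)⟩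

theorem exists_extension_of_equivs (hne : ∃ e : U ↪[L] U, ¬ Function.Surjective e) {T : Type*}
    [Countable T] (h : T → (U ≃[L] U)) :
    ∃ e : U ↪[L] U, ¬ Function.Surjective e ∧ ∀ t, ∃ k : U ≃[L] U, ∀ x, k (e x) = e (h t x) := by
  obtain ⟨e₀, he₀⟩ := hne
  choose c W hW using fun f : Option T → (U ↪[L] U) => hAP.exists_comp_eq hU f
  let F (n : ℕ) : Option T → (U ↪[L] U) :=
    W^[n] fun i => i.elim e₀ fun t => e₀.comp (h t).toEmbedding
  have F_comp (n : ℕ) (i j : Option T) :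
      (F (n + 1) i).comp (F n i) = (F (n + 1) j).comp (F n j) := by
    simp only [F, Function.iterate_succ_apply', hW]
  obtain ⟨o, ho⟩ := exists_isSequentialColimit hU fun n => F n none
  refine ⟨o 0, fun hsurj => he₀ fun y => ?_, fun t => ?_⟩
  · obtain ⟨x, hx⟩ := hsurj (o 1 y)
    exact ⟨x, (o 1).injective ((ho.apply_apply 0 x).trans hx)⟩
  · obtain ⟨k, hk⟩ := ho.exists_equiv_of_zigzag (g := fun n => F n (some t)) fun n => F_comp n _ _
    exact ⟨k, fun x => (hk x).trans (ho.apply_apply 0 (h t x))⟩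

end SelfEmbeddingsAmalgamate

end Amalgamation

/-! ### Homogeneity operators -/

section HomogeneityOperators

variable {M N U : Type*} [L.Structure M] [L.Structure N] [L.Structure U]

variable (L) in
/-- The families `a` and `b` have the same quantifier-free type, expressed without formulas: the
assignment `a i ↦ b i` extends to an embedding of the substructure generated by `a`. -/
def SameQFType {ι : Type*} (a : ι → M) (b : ι → N) : Prop :=
  ∃ f : Substructure.closure L (Set.range a) ↪[L] N,
    ∀ i, f ⟨a i, Substructure.subset_closure (Set.mem_range_self i)⟩ = b i

theorem SameQFType.of_comp {ι : Type*} {a b : ι → M} (e : M ↪[L] N)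
    (h : SameQFType L (e ∘ a) (e ∘ b)) : SameQFType L a b := by
  obtain ⟨f, hf⟩ := h
  have map_mem (x : Substructure.closure L (Set.range a)) :
      e x ∈ Substructure.closure L (Set.range (e ∘ a)) := by
    have := Substructure.mem_map_of_mem e.toHom x.2
    rwa [Substructure.map_closure, Embedding.coe_toHom, ← Set.range_comp] at this
  let p : Substructure.closure L (Set.range a) ↪[L] N :=
    f.comp ((e.comp (Substructure.subtype _)).codRestrict _ map_mem)
  have p_apply (i : ι) (hi : a i ∈ Substructure.closure L (Set.range a)) :
      p ⟨a i, hi⟩ = e (b i) := hf i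
  obtain ⟨q, hq⟩ := exists_comp_eq_of_image_subset_range (e := e) (p := p)
    (closure_preimage_val_closure (Set.range a)) (by
      rintro _ ⟨⟨_, hi⟩, ⟨i, rfl⟩, rfl⟩
      exact ⟨b i, (p_apply i hi).symm⟩)
  exact ⟨q, fun i => e.injective <| (DFunLike.congr_fun hq _).trans (p_apply i _)⟩

theorem exists_equiv_of_sameQFType (hM : L.IsUltrahomogeneous M) {ι : Type*} [Finite ι]
    {a b : ι → M} (h : SameQFType L a b) : ∃ k : M ≃[L] M, k ∘ a = b := by
  obtain ⟨f, hf⟩ := h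
  obtain ⟨k, rfl⟩ := hM _ (Substructure.fg_closure (Set.finite_range a)) f
  exact ⟨k, funext hf⟩

/-- An operator assigning a self-map of `M` to every pair of `n`-tuples of `M`. -/
abbrev TupleOperator (M : Type*) : Type _ :=
  ∀ n, (Fin n → M) → (Fin n → M) → M → M

variable (L) in
/-- `H` witnesses ultrahomogeneity: `H n a b` is an automorphism of `M`, and it maps the tuple `a`
to the tuple `b` whenever these have the same quantifier-free type. -/
def IsHomogeneityOperator (H : TupleOperator M) : Prop :=
  ∀ n a b, ∃ h : M ≃[L] M, ⇑h = H n a b ∧ (SameQFType L a b → h ∘ a = b)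

/-- The map `e` transports the operator `H` to the restriction of the operator `K` to the image
of `e`. -/
def Intertwines {M N : Type*} (e : M → N) (H : TupleOperator M) (K : TupleOperator N) : Prop :=
  ∀ n a b x, e (H n a b x) = K n (e ∘ a) (e ∘ b) (e x)

theorem exists_equiv_imp_sameQFType (hM : L.IsUltrahomogeneous M) {n : ℕ} (a b : Fin n → M) :
    ∃ h : M ≃[L] M, SameQFType L a b → h ∘ a = b := by
  by_cases hab : SameQFType L a b
  · exact (exists_equiv_of_sameQFType hM hab).imp fun _ h _ => h
  · exact ⟨Language.Equiv.refl L M, fun h => absurd h hab⟩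

theorem exists_isHomogeneityOperator (hM : L.IsUltrahomogeneous M) :
    ∃ H : TupleOperator M, IsHomogeneityOperator L H := by
  choose h hh using fun n (a b : Fin n → M) => exists_equiv_imp_sameQFType hM a b
  exact ⟨fun n a b => h n a b, fun n a b => ⟨h n a b, rfl, hh n a b⟩⟩

namespace IsHomogeneityOperator

theorem isUltrahomogeneous {H : TupleOperator M} (hH : IsHomogeneityOperator L H) :
    L.IsUltrahomogeneous M := by
  intro S hS f
  obtain ⟨n, a, rfl⟩ := Substructure.fg_iff_exists_fin_generating_family.1 hS
  have mem_closure (i : Fin n) : a i ∈ Substructure.closure L (Set.range a) :=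
    Substructure.subset_closure (Set.mem_range_self i)
  obtain ⟨h, -, h_comp⟩ := hH n a fun i => f ⟨a i, mem_closure i⟩
  refine ⟨h, embedding_eq_of_eqOn_generators (closure_preimage_val_closure _) ?_⟩
  rintro ⟨_, _⟩ ⟨i, rfl⟩
  exact (congrFun (h_comp ⟨f, fun _ => rfl⟩) i).symm

theorem of_cover {ι : Type*} {M : ι → Type*} [∀ i, L.Structure (M i)] {e : ∀ i, M i ↪[L] N}
    (he : CoversFiniteSets fun i => ⇑(e i)) {H : ∀ i, TupleOperator (M i)} {K : TupleOperator N}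
    (hH : ∀ i, IsHomogeneityOperator L (H i)) (hHK : ∀ i, Intertwines (e i) (H i) K) :
    IsHomogeneityOperator L K := by
  intro n a b
  have he' := he.restrict ((Set.finite_range a).union (Set.finite_range b))
  have exists_lift (i : {i // Set.range a ∪ Set.range b ⊆ Set.range (e i)}) :
      ∃ a₀ b₀, e i ∘ a₀ = a ∧ e i ∘ b₀ = b := by
    choose a₀ ha₀ using fun j => i.2 (Or.inl (Set.mem_range_self j))
    choose b₀ hb₀ using fun j => i.2 (Or.inr (Set.mem_range_self j))
    exact ⟨a₀, b₀, funext ha₀, funext hb₀⟩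
  choose a₀ b₀ ha₀ hb₀ using exists_lift
  choose h h_eq h_comp using fun i => hH i.1 n (a₀ i) (b₀ i)
  have intertwine (i : {i // Set.range a ∪ Set.range b ⊆ Set.range (e i)}) (x : M i) :
      K n a b (e i x) = e i (h i x) := by
    rw [h_eq, hHK, ha₀, hb₀]
  obtain ⟨k, hk⟩ := he'.exists_equiv h intertwine
  refine ⟨k, hk, fun hab => ?_⟩
  obtain ⟨i, -⟩ := he' ∅ Set.finite_empty
  have hab₀ : SameQFType L (a₀ i) (b₀ i) := .of_comp (e i) (by rwa [ha₀, hb₀])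
  calc k ∘ a = e i ∘ h i ∘ a₀ i := by
        rw [hk]; nth_rw 2 [← ha₀ i]; exact funext fun j => intertwine i _
    _ = b := by rw [h_comp i hab₀, hb₀]

theorem exists_extension {H : TupleOperator M} (hH : IsHomogeneityOperator L H)
    (hN : L.IsUltrahomogeneous N) (e : M ↪[L] N)
    (he : ∀ n a b, ∃ k : N ≃[L] N, ∀ x, k (e x) = e (H n a b x)) :
    ∃ K : TupleOperator N, IsHomogeneityOperator L K ∧ Intertwines e H K := by
  have exists_equiv (n) (a b : Fin n → N) : ∃ k : N ≃[L] N, (SameQFType L a b → k ∘ a = b) ∧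
      ∀ a₀ b₀, e ∘ a₀ = a → e ∘ b₀ = b → ∀ x, k (e x) = e (H n a₀ b₀ x) := by
    by_cases hab : ∃ a₀ b₀, e ∘ a₀ = a ∧ e ∘ b₀ = b
    · obtain ⟨a₀, b₀, rfl, rfl⟩ := hab
      obtain ⟨k, hk⟩ := he n a₀ b₀
      refine ⟨k, fun hab => funext fun i => ?_, fun a₁ b₁ ha hb x => ?_⟩
      · obtain ⟨h, h_eq, h_comp⟩ := hH n a₀ b₀
        rw [← h_comp hab.of_comp, Function.comp_apply, Function.comp_apply, hk, h_eq]
        rfl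
      · obtain rfl := e.injective.comp_left ha
        obtain rfl := e.injective.comp_left hb
        exact hk x
    · obtain ⟨k, hk⟩ := exists_equiv_imp_sameQFType hN a b
      exact ⟨k, hk, fun a₀ b₀ ha hb => absurd ⟨a₀, b₀, ha, hb⟩ hab⟩
  choose k hk hke using exists_equiv
  exact ⟨fun n a b => k n a b, fun n a b => ⟨k n a b, rfl, hk n a b⟩,
    fun n a b x => (hke n _ _ a b rfl rfl x).symm⟩

theorem exists_proper_extension {M U : Type w} [L.Structure M] [L.Structure U] [Countable M]
    [Countable U] {H : TupleOperator M} (hH : IsHomogeneityOperator L H)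
    (hU : L.IsUltrahomogeneous U) (hAP : SelfEmbeddingsAmalgamate L U)
    (hne : ∃ e : U ↪[L] U, ¬ Function.Surjective e) (hage : L.age M = L.age U) :
    ∃ e : M ↪[L] U, ¬ Function.Surjective e ∧
      ∃ K : TupleOperator U, IsHomogeneityOperator L K ∧ Intertwines e H K := by
  obtain ⟨θ⟩ := nonempty_equiv_of_isUltrahomogeneous hH.isUltrahomogeneous hU hage
  choose h h_eq using fun n a b => (hH n a b).imp fun _ => And.left
  obtain ⟨e, he, h_ext⟩ := hAP.exists_extension_of_equivs hU hne
    fun t : Σ n, (Fin n → M) × (Fin n → M) => (θ.comp (h t.1 t.2.1 t.2.2)).comp θ.symm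
  refine ⟨e.comp θ.toEmbedding, fun hsurj => he fun y => (hsurj y).imp' θ fun _ => id,
    hH.exists_extension hU _ fun n a b => ?_⟩
  obtain ⟨k, hk⟩ := h_ext ⟨n, a, b⟩
  refine ⟨k, fun x => (hk (θ x)).trans ?_⟩
  simp only [← h_eq, Language.Equiv.comp_apply, Language.Equiv.symm_apply_apply,
    Embedding.comp_apply, Language.Equiv.coe_toEmbedding]

end IsHomogeneityOperator

end HomogeneityOperators

/-! ### Classes closed under directed unions -/

section Uncountable

variable {κ : Type w}

theorem exists_injective_comp_eq {A V : Type*} [Countable V] [Uncountable κ] {e : A → V}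
    (he : Function.Injective e) {φ : A → κ} (hφ : Function.Injective φ) :
    ∃ ψ : V → κ, Function.Injective ψ ∧ ψ ∘ e = φ := by
  have := he.countable
  have range_infinite : ((Set.range φ)ᶜ).Infinite := fun hfin => Set.not_countable_univ <| by
    simpa only [Set.union_compl_self] using (Set.countable_range φ).union hfin.countable
  have := range_infinite.to_subtype
  obtain ⟨c, hc⟩ := exists_injective_nat V
  let j (v : V) : ((Set.range φ)ᶜ : Set κ) := Infinite.natEmbedding _ (c v)
  have j_inj : Function.Injective j := (Infinite.natEmbedding _).injective.comp hc
  have φ_ne_j (a : A) (v : V) : φ a ≠ j v := fun h => (j v).2 ⟨a, h⟩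
  refine ⟨Function.extend e φ fun v => j v, fun x y hxy => ?_, funext (he.extend_apply φ _)⟩
  by_cases hx : ∃ a, e a = x <;> by_cases hy : ∃ a, e a = y
  · obtain ⟨⟨a, rfl⟩, ⟨b, rfl⟩⟩ := hx, hy
    rw [he.extend_apply, he.extend_apply] at hxy
    rw [hφ hxy]
  · obtain ⟨a, rfl⟩ := hx
    rw [he.extend_apply, Function.extend_apply' _ _ _ hy] at hxy
    exact absurd hxy (φ_ne_j a y)
  · obtain ⟨b, rfl⟩ := hy
    rw [he.extend_apply, Function.extend_apply' _ _ _ hx] at hxy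
    exact absurd hxy.symm (φ_ne_j b x)
  · rw [Function.extend_apply' _ _ _ hx, Function.extend_apply' _ _ _ hy] at hxy
    exact j_inj (Subtype.ext hxy)

/-- A structure whose carrier is a subset of a fixed ambient type `κ`, so that being a substructure
is a preorder on such structures. -/
structure StructureIn (L : FirstOrder.Language.{u, v}) (κ : Type w) where
  carrier : Set κ
  [str : L.Structure carrier]

namespace StructureIn

attribute [instance] str

instance : Preorder (StructureIn L κ) where
  le p q := ∃ e : p.carrier ↪[L] q.carrier, ∀ x, (e x : κ) = x
  le_refl p := ⟨Embedding.refl L p.carrier, fun _ => rfl⟩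
  le_trans _ _ _ := fun ⟨e, he⟩ ⟨f, hf⟩ => ⟨f.comp e, fun x => (hf (e x)).trans (he x)⟩

theorem exists_equiv_carrier {V : Type*} [L.Structure V] {ψ : V → κ} (hψ : Function.Injective ψ) :
    ∃ (q : StructureIn L κ) (θ : V ≃[L] q.carrier), ∀ x, (θ x : κ) = ψ x :=
  let E := _root_.Equiv.ofInjective ψ hψ
  letI : L.Structure (Set.range ψ) := E.inducedStructure
  ⟨⟨Set.range ψ⟩, E.inducedStructureEquiv, fun _ => rfl⟩

theorem exists_extension [Uncountable κ] {p : StructureIn L κ} {V : Type*} [L.Structure V]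
    [Countable V] (e : p.carrier ↪[L] V) :
    ∃ (q : StructureIn L κ) (θ : V ≃[L] q.carrier), ∀ x, (θ (e x) : κ) = x := by
  obtain ⟨ψ, hψ, hψe⟩ := exists_injective_comp_eq (κ := κ) e.injective Subtype.val_injective
  obtain ⟨q, θ, hθ⟩ := exists_equiv_carrier (L := L) hψ
  exact ⟨q, θ, fun x => (hθ (e x)).trans (congrFun hψe x)⟩

theorem exists_union_of_isChain {C : Set (StructureIn L κ)} (hC : IsChain (· ≤ ·) C)
    (hne : C.Nonempty) :
    ∃ (q : StructureIn L κ) (e : ∀ p : C, p.1.carrier ↪[L] q.carrier),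
      (∀ p x, (e p x : κ) = x) ∧ CoversFiniteSets fun p => ⇑(e p) := by
  have := hne.to_subtype
  have : IsDirectedOrder C := ⟨hC.directedOn.directed_val⟩
  choose f hf using fun (p q : C) (hpq : p ≤ q) => (hpq : p.1 ≤ q.1)
  have : DirectedSystem (fun p : C => p.1.carrier) fun p q h => f p q h :=
    ⟨fun p x => Subtype.ext (hf p p le_rfl x), fun p q r hpq hqr x => Subtype.ext <| by
      rw [hf, hf, hf]⟩
  let o (p : C) := DirectLimit.of L C (fun p : C => p.1.carrier) f p
  have o_eq_iff {p q : C} (x : p.1.carrier) (y : q.1.carrier) : o p x = o q y ↔ (x : κ) = y := by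
    obtain ⟨r, hpr, hqr⟩ := directed_of (· ≤ ·) p q
    rw [← DirectLimit.of_f (hij := hpr), ← DirectLimit.of_f (hij := hqr),
      (o r).injective.eq_iff, Subtype.ext_iff, hf, hf]
  choose P x hx using fun z => DirectLimit.exists_of (L := L) (f := f) z
  have x_inj : Function.Injective fun z => (x z : κ) := fun y z hyz => by
    rw [← hx y, ← hx z]
    exact (o_eq_iff _ _).2 hyz
  obtain ⟨q, θ, hθ⟩ := exists_equiv_carrier (L := L) x_inj
  refine ⟨q, fun p => θ.toEmbedding.comp (o p), fun p y => ?_,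
    (coversFiniteSets_directLimit_of _ f).comp_surjective θ.surjective⟩
  exact (hθ (o p y)).trans ((o_eq_iff _ _).1 (hx (o p y)))

end StructureIn

/-- `K` is closed under isomorphism and under directed unions of nonempty families. -/
def IsClosedUnderDirectedUnions (K : Set (Bundled.{w} L.Structure)) : Prop :=
  ∀ ⦃ι : Type (max u v w)⦄ (M : ι → Bundled.{w} L.Structure) (N : Bundled.{w} L.Structure)
    (e : ∀ i, M i ↪[L] N), CoversFiniteSets (fun i => ⇑(e i)) → (∀ i, M i ∈ K) → N ∈ K

theorem IsClosedUnderDirectedUnions.mem_of_equiv {K : Set (Bundled.{w} L.Structure)}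
    (hK : IsClosedUnderDirectedUnions K) {M N : Bundled.{w} L.Structure} (hM : M ∈ K)
    (e : M ≃[L] N) : N ∈ K :=
  hK (fun _ : PUnit => M) N (fun _ => e.toEmbedding)
    (fun _ _ => ⟨⟨⟩, fun z _ => e.surjective z⟩) fun _ => hM

/-- By Zorn's lemma there is a maximal member of `K` on a subset of a set of size `ℵ₁`; if it were
countable, there would be room for a proper extension. -/
theorem IsClosedUnderDirectedUnions.exists_mk_eq_aleph_one {K : Set (Bundled.{w} L.Structure)}
    (hK : IsClosedUnderDirectedUnions K) (hne : ∃ M ∈ K, Countable M)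
    (hext : ∀ M ∈ K, Countable M →
      ∃ N ∈ K, Countable N ∧ ∃ e : M ↪[L] N, ¬ Function.Surjective e) :
    ∃ N ∈ K, #N = aleph 1 := by
  obtain ⟨κ, hκ⟩ : ∃ κ : Type w, #κ = aleph 1 := ⟨_, Cardinal.mk_out _⟩
  have : Uncountable κ := aleph0_lt_mk_iff.1 (hκ ▸ aleph0_lt_aleph_one)
  let S : Set (StructureIn L κ) := {p | ⟨p.carrier, p.str⟩ ∈ K}
  obtain ⟨p₀, hp₀⟩ : S.Nonempty := by
    obtain ⟨M, hM, _⟩ := hne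
    obtain ⟨ψ, hψ, -⟩ := exists_injective_comp_eq (κ := κ) (V := M) (e := Empty.elim)
      (φ := Empty.elim) (Function.injective_of_subsingleton _)
      (Function.injective_of_subsingleton _)
    obtain ⟨q, θ, -⟩ := StructureIn.exists_equiv_carrier (L := L) hψ
    exact ⟨q, hK.mem_of_equiv hM θ⟩
  obtain ⟨p, -, hp, p_max⟩ := zorn_le_nonempty₀ S (fun C hCS hC p hpC => by
    obtain ⟨q, e, he, hcov⟩ := StructureIn.exists_union_of_isChain hC ⟨p, hpC⟩
    exact ⟨q, hK (fun r : C => ⟨r.1.carrier, r.1.str⟩) ⟨q.carrier, q.str⟩ e hcov fun r => hCS r.2,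
      fun r hr => ⟨e ⟨r, hr⟩, he ⟨r, hr⟩⟩⟩) p₀ hp₀
  have not_countable : ¬ Countable p.carrier := fun hcount => by
    obtain ⟨N, hN, _, e, he⟩ := hext _ hp hcount
    obtain ⟨q, θ, hθ⟩ := StructureIn.exists_extension (κ := κ) e
    obtain ⟨f, hf⟩ := p_max (hK.mem_of_equiv hN θ) ⟨θ.toEmbedding.comp e, hθ⟩
    exact he fun y => ⟨f (θ y), θ.injective (Subtype.ext ((hθ _).trans (hf _)))⟩
  refine ⟨_, hp, le_antisymm (hκ ▸ mk_le_of_injective Subtype.val_injective) ?_⟩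
  exact aleph_one_le_iff.2 (aleph0_lt_mk_iff.2 (not_countable_iff.1 not_countable))

end Uncountable

/-! ### Expansion by homogeneity operators -/

section Expansion

/-- The symbol `apply n` stands for the map `(a, b, x) ↦ H n a b x` of a `TupleOperator`. -/
inductive OperatorSymbol : ℕ → Type
  | apply (n : ℕ) : OperatorSymbol (n + n + 1)

variable (L) in
/-- The expansion of `L` by function symbols for a `TupleOperator`, which turns embeddings that
intertwine operators into embeddings of structures. -/
abbrev withOperator : FirstOrder.Language.{u, v} :=
  L.sum ⟨OperatorSymbol, fun _ => Empty⟩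

/-- The encoding of the arguments of a `TupleOperator` by a single tuple. -/
def operatorArgs (n : ℕ) (M : Type*) :
    ((Fin n → M) × (Fin n → M)) × M ≃ (Fin (n + n + 1) → M) :=
  ((Fin.appendEquiv n n).prodCongr (.refl M)).trans (Fin.succFunEquiv M _).symm

theorem comp_operatorArgs {M N : Type*} (e : M → N) {n : ℕ} (a b : Fin n → M) (x : M) :
    e ∘ operatorArgs n M ((a, b), x) = operatorArgs n N ((e ∘ a, e ∘ b), e x) := by
  have comp_append {k l : ℕ} (y : Fin k → M) (z : Fin l → M) :
      e ∘ Fin.append y z = Fin.append (e ∘ y) (e ∘ z) :=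
    funext (Fin.addCases (by simp) (by simp))
  change e ∘ Fin.append (Fin.append a b) (fun _ => x) = _
  rw [comp_append, comp_append]
  rfl

/-- The `L`-structure underlying a `withOperator L`-structure. -/
abbrev reduct (M : Bundled.{w} (withOperator L).Structure) : Bundled.{w} L.Structure :=
  ⟨M, (LHom.sumInl : L →ᴸ withOperator L).reduct M⟩

/-- The operator interpreting the additional symbols of a `withOperator L`-structure. -/
def operator (M : Bundled.{w} (withOperator L).Structure) : TupleOperator M := fun n a b x =>
  Structure.funMap (L := withOperator L) (.inr (.apply n)) (operatorArgs n M ((a, b), x))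

/-- The expansion of `M` in which the additional symbols are interpreted by `H`. -/
def expand (M : Bundled.{w} L.Structure) (H : TupleOperator M) :
    Bundled.{w} (withOperator L).Structure where
  α := M
  str := {
    funMap := fun {_} f x => match f with
      | .inl f => Structure.funMap f x
      | .inr (.apply n) =>
        let ((a, b), y) := (operatorArgs n M).symm x
        H n a b y
    RelMap := fun {_} r x => match r with
      | .inl r => Structure.RelMap r x }

theorem operator_expand (M : Bundled.{w} L.Structure) (H : TupleOperator M) :
    operator (expand M H) = H := by
  funext n a b x
  have := (operatorArgs n M).symm_apply_apply ((a, b), x)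
  exact congrArg (fun t : ((Fin n → M) × (Fin n → M)) × M => H n t.1.1 t.1.2 t.2) this

theorem exists_reduct_embedding {M N : Bundled.{w} (withOperator L).Structure}
    (e : M ↪[withOperator L] N) :
    ∃ e' : reduct M ↪[L] reduct N, ⇑e' = e ∧ Intertwines e (operator M) (operator N) := by
  refine ⟨⟨e.toEmbedding, fun f x => e.map_fun (Sum.inl f) x, fun r x => e.map_rel (Sum.inl r) x⟩,
    rfl, fun n a b x => (e.map_fun _ _).trans ?_⟩
  rw [comp_operatorArgs]
  rfl

theorem exists_embedding_expand {M : Bundled.{w} (withOperator L).Structure}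
    {N : Bundled.{w} L.Structure} {K : TupleOperator N} (e : reduct M ↪[L] N)
    (he : Intertwines e (operator M) K) : ∃ e' : M ↪[withOperator L] expand N K, ⇑e' = e := by
  refine ⟨⟨e.toEmbedding, fun {_} f x => ?_, fun {_} r x => ?_⟩, rfl⟩
  · obtain f | f := f
    · exact e.map_fun f x
    · cases f with | apply n =>
      obtain ⟨⟨⟨a, b⟩, y⟩, rfl⟩ := (operatorArgs n M).surjective x
      have args_eq := (operatorArgs n N).eq_symm_apply.2 (comp_operatorArgs e a b y).symm
      exact (he n a b y).trans <| congrArg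
        (fun t : ((Fin n → N) × (Fin n → N)) × N => K n t.1.1 t.1.2 t.2) args_eq
  · obtain r | ⟨⟨⟩⟩ := r
    exact e.map_rel r x

end Expansion

/-! ### Expansions of structures of a given age -/

section operatorExpansions

variable {U : Type w} [L.Structure U]

variable (L U) in
/-- The structures of the same age as `U`, expanded by a homogeneity operator. -/
def operatorExpansions : Set (Bundled.{w} (withOperator L).Structure) :=
  {M | L.age (reduct M) = L.age U ∧ IsHomogeneityOperator (M := reduct M) L (operator M)}

theorem expand_mem_operatorExpansions {M : Bundled.{w} L.Structure} {H : TupleOperator M}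
    (hage : L.age M = L.age U) (hH : IsHomogeneityOperator L H) :
    expand M H ∈ operatorExpansions L U :=
  ⟨hage, (operator_expand M H).symm ▸ hH⟩

theorem isClosedUnderDirectedUnions_operatorExpansions :
    IsClosedUnderDirectedUnions (operatorExpansions L U) := by
  intro ι M N e he hM
  choose e' coe_e' he' using fun i => exists_reduct_embedding (e i)
  have hcov : CoversFiniteSets fun i => ⇑(e' i) := by simpa only [coe_e'] using he
  exact ⟨hcov.age_eq fun i => (hM i).1,
    .of_cover hcov (fun i => (hM i).2) fun i => (coe_e' i).symm ▸ he' i⟩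

variable [Countable U]

theorem exists_countable_mem_operatorExpansions (hU : L.IsUltrahomogeneous U) :
    ∃ M ∈ operatorExpansions L U, Countable M := by
  obtain ⟨H, hH⟩ := exists_isHomogeneityOperator hU
  exact ⟨expand ⟨U, _⟩ H, expand_mem_operatorExpansions rfl hH, ‹Countable U›⟩

theorem exists_proper_extension_mem_operatorExpansions (hU : L.IsUltrahomogeneous U)
    (hAP : SelfEmbeddingsAmalgamate L U) (hne : ∃ e : U ↪[L] U, ¬ Function.Surjective e)
    {M : Bundled.{w} (withOperator L).Structure} (hM : M ∈ operatorExpansions L U)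
    (hcount : Countable M) :
    ∃ N ∈ operatorExpansions L U, Countable N ∧
      ∃ e : M ↪[withOperator L] N, ¬ Function.Surjective e := by
  obtain ⟨e, e_proper, K, hK, he⟩ :=
    IsHomogeneityOperator.exists_proper_extension (M := reduct M) hM.2 hU hAP hne hM.1
  obtain ⟨e', he'⟩ := exists_embedding_expand (N := ⟨U, _⟩) e he
  exact ⟨expand ⟨U, _⟩ K, expand_mem_operatorExpansions rfl hK, ‹Countable U›, e', he' ▸ e_proper⟩

end operatorExpansions

end UltrahomogeneousExtension

open UltrahomogeneousExtension

theorem statement0_general (L : FirstOrder.Language.{u, v}) (U : Type w) [L.Structure U]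
    [Countable U] (hU : L.IsUltrahomogeneous U)
    (hAP : ∀ f g : U ↪[L] U, ∃ f' g' : U ↪[L] U, f'.comp f = g'.comp g)
    (hne : ∃ e : U ↪[L] U, ¬ Function.Surjective e) :
    ∃ N : Bundled.{w} L.Structure, #N = aleph 1 ∧
      L.IsUltrahomogeneous N ∧ L.age N = L.age U := by
  obtain ⟨N, ⟨hage, hN⟩, hcard⟩ :=
    (isClosedUnderDirectedUnions_operatorExpansions (L := L) (U := U)).exists_mk_eq_aleph_one
      (exists_countable_mem_operatorExpansions hU)
      fun _ => exists_proper_extension_mem_operatorExpansions hU hAP hne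
  exact ⟨reduct N, hcard, hN.isUltrahomogeneous, hage⟩

/-- If `U` is a countable ultrahomogeneous structure in a countable
language whose monoid of self-embeddings has the amalgamation property and contains a
non-surjective member, then there is an ultrahomogeneous structure of cardinality `ℵ₁`
with the same age as `U`. -/
theorem statement0 (L : FirstOrder.Language.{0, 0}) [Countable L.Symbols]
    (U : Type) [L.Structure U] [Countable U]
    (hU : L.IsUltrahomogeneous U)
    (hAP : ∀ f g : U ↪[L] U, ∃ f' g' : U ↪[L] U, f'.comp f = g'.comp g)
    (hne : ∃ e : U ↪[L] U, ¬ Function.Surjective e) :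
    ∃ N : Bundled.{0} L.Structure, #N = aleph 1 ∧
      L.IsUltrahomogeneous N ∧ L.age N = L.age U :=
  statement0_general L U hU hAP hne
end

section
/- Let L be a countable first-order language, let U be a countable ultrahomogeneous L-structure, and let S be a set of self-embeddings of U that contains the identity map and all automorphisms of U, is closed under composition, contains at least one non-surjective embedding, and has the amalgamation property: for all f, g ∈ S there exist f', g' ∈ S with f' ∘ f = g' ∘ g. Then there exists an ultrahomogeneous L-structure W of cardinality ℵ₁ with the same age as U, such that W is the union of an increasing chain, indexed by the countable ordinals, of substructures each of which is isomorphic to U. -/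
open FirstOrder Language Cardinal CategoryTheory

/-!
By amalgamation in `S`, the direct limit of a generic sequence `U → U → ⋯` of members of `S` is a
proper extension of `U` that is again a copy of `U`, and any countably many automorphisms of `U`
extend to it. The homogeneity of a stage is therefore preserved when it is witnessed by named maps:
expand each copy of `U` by function symbols that take a pair of tuples to an automorphism which, if
the tuples are isomorphic, carries the first to the second. Extensions that respect the named maps
can be iterated `ω₁` times with unions at limits, and in any union, of whatever length, the named
maps are still automorphisms. At countable stages the union is isomorphic to `U` because it is
countable, ultrahomogeneous and locally a copy of `U`.
-/

universe u v w u' v'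

section SetTheory

theorem exists_fun_forall_of_wellFoundedLT {I : Type u} {P : Type v} [Preorder I]
    [WellFoundedLT I] [Nonempty P] {Q : ∀ j : I, (Set.Iio j → P) → P → Prop}
    (h : ∀ (j : I) (f : Set.Iio j → P),
      (∀ i : Set.Iio j, Q i (fun k => f ⟨k, k.2.trans i.2⟩) (f i)) → ∃ p, Q j f p) :
    ∃ f : I → P, ∀ j, Q j (fun i => f i) (f j) := by
  classical
  let next (j : I) (f : ∀ i, i < j → P) : P := Classical.epsilon (Q j fun i => f i i.2)
  let F : I → P := WellFounded.fix (wellFounded_lt (α := I)) next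
  have F_eq (j : I) : F j = Classical.epsilon (Q j fun i => F i) :=
    WellFounded.fix_eq wellFounded_lt next j
  refine ⟨F, fun j => ?_⟩
  induction j using WellFoundedLT.induction with
  | ind j ih =>
    rw [F_eq]
    exact Classical.epsilon_spec (h j _ fun i => ih i i.2)

theorem exists_countable_superset_closed {α : Type*} {ops : Set (α → α → α)}
    (hops : ops.Countable) {s : Set α} (hs : s.Countable) :
    ∃ t : Set α, t.Countable ∧ s ⊆ t ∧ ∀ op ∈ ops, ∀ a ∈ t, ∀ b ∈ t, op a b ∈ t := by
  let enlarge (t : Set α) : Set α := t ∪ ⋃ op ∈ ops, Set.image2 op t t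
  let t (n : ℕ) : Set α := enlarge^[n] s
  have t_succ (n : ℕ) : t (n + 1) = enlarge (t n) := Function.iterate_succ_apply' _ _ _
  have t_mono : Monotone t := monotone_nat_of_le_succ fun n => t_succ n ▸ Set.subset_union_left
  have t_countable (n : ℕ) : (t n).Countable := by
    induction n with
    | zero => exact hs
    | succ n ih => exact t_succ n ▸ ih.union (hops.biUnion fun _ _ => ih.image2 ih _)
  refine ⟨⋃ n, t n, Set.countable_iUnion t_countable, Set.subset_iUnion t 0,
    fun op hop a ha b hb => ?_⟩
  obtain ⟨m, hm⟩ := Set.mem_iUnion.1 ha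
  obtain ⟨n, hn⟩ := Set.mem_iUnion.1 hb
  refine Set.mem_iUnion.2 ⟨max m n + 1, t_succ _ ▸ Or.inr (Set.mem_biUnion hop ?_)⟩
  exact Set.mem_image2_of_mem (t_mono (le_max_left m n) hm) (t_mono (le_max_right m n) hn)

theorem exists_injective_extension_of_uncountable {X : Type u} {V : Type v} [Uncountable X]
    [Countable V] {A : Set X} {e : A → V} (he : Function.Injective e) :
    ∃ j : V → X, Function.Injective j ∧ ∀ a, j (e a) = a := by
  have hA : A.Countable := Set.countable_coe_iff.1 he.countable
  have : Infinite (Aᶜ : Set X) :=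
    Set.infinite_coe_iff.2 fun h => Set.not_countable_univ (Set.union_compl_self A ▸
      hA.union h.countable)
  obtain ⟨fresh, hfresh⟩ := exists_injective_nat V
  let new (v : V) : X := Infinite.natEmbedding (Aᶜ : Set X) (fresh v)
  have new_notMem (v : V) : new v ∉ A := (Infinite.natEmbedding (Aᶜ : Set X) (fresh v)).2
  have new_injective : Function.Injective new :=
    Subtype.val_injective.comp ((Infinite.natEmbedding _).injective.comp hfresh)
  refine ⟨Function.extend e (↑) new, fun v w hvw => ?_, fun a => he.extend_apply _ _ a⟩
  by_cases hv : ∃ a, e a = v <;> by_cases hw : ∃ a, e a = w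
  · obtain ⟨a, rfl⟩ := hv
    obtain ⟨b, rfl⟩ := hw
    rw [he.extend_apply, he.extend_apply] at hvw
    rw [Subtype.ext hvw]
  · obtain ⟨a, rfl⟩ := hv
    rw [he.extend_apply, Function.extend_apply' _ _ _ hw] at hvw
    exact (new_notMem w (hvw ▸ a.2)).elim
  · obtain ⟨b, rfl⟩ := hw
    rw [he.extend_apply, Function.extend_apply' _ _ _ hv] at hvw
    exact (new_notMem v (hvw ▸ b.2)).elim
  · rw [Function.extend_apply' _ _ _ hv, Function.extend_apply' _ _ _ hw] at hvw
    exact new_injective hvw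

theorem countable_Iio_of_lt_ord_aleph_one (o : {o : Ordinal.{u} // o < (aleph 1).ord}) :
    Countable (Set.Iio o) := by
  have : Countable (Set.Iio o.1) := by
    rw [← Cardinal.mk_le_aleph0_iff, Cardinal.mk_Iio_ordinal, Cardinal.lift_le_aleph0,
      ← Order.lt_succ_iff, Cardinal.succ_aleph0]
    exact Cardinal.lt_ord.1 o.2
  exact Function.Injective.countable (f := fun i : Set.Iio o => (⟨i.1, i.2⟩ : Set.Iio o.1))
    fun i j hij => Subtype.ext (Subtype.ext (congrArg (fun k : Set.Iio o.1 => k.1) hij))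

theorem uncountable_lt_ord_aleph_one : Uncountable {o : Ordinal.{u} // o < (aleph 1).ord} := by
  change Uncountable (Set.Iio (aleph 1 : Cardinal.{u}).ord)
  rw [← Cardinal.aleph0_lt_mk_iff, Cardinal.mk_Iio_ordinal, Cardinal.card_ord,
    Cardinal.aleph0_lt_lift]
  exact Cardinal.aleph0_lt_aleph_one

end SetTheory

section Ultrahomogeneous

variable {L : FirstOrder.Language.{u, v}} {M N P U W : Type w} [L.Structure M] [L.Structure N]
  [L.Structure P] [L.Structure U] [L.Structure W]

theorem exists_comp_eq_of_range_le {f : M ↪[L] W} {j : U ↪[L] W}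
    (h : f.toHom.range ≤ j.toHom.range) : ∃ f₀ : M ↪[L] U, j.comp f₀ = f := by
  let f' : M ↪[L] j.toHom.range := Embedding.codRestrict _ f fun x => h ⟨x, rfl⟩
  refine ⟨j.equivRange.symm.toEmbedding.comp f', Embedding.ext fun x => ?_⟩
  rw [Embedding.comp_apply, Embedding.comp_apply, ← Embedding.equivRange_apply]
  exact congrArg Subtype.val (j.equivRange.apply_symm_apply (f' x))

theorem range_le_range_of_closure_eq_top {s : Set M} (hs : Substructure.closure L s = ⊤)
    {f : M ↪[L] W} {j : U ↪[L] W} (h : ∀ x ∈ s, f x ∈ Set.range j) :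
    f.toHom.range ≤ j.toHom.range := by
  rw [Hom.range_eq_map, ← hs, Substructure.map_closure, Substructure.closure_le]
  rintro _ ⟨x, hx, rfl⟩
  exact h x hx

theorem isUltrahomogeneous_iff_forall_exists_comp_eq :
    L.IsUltrahomogeneous M ↔ ∀ (P : Type w) [L.Structure P], Structure.FG L P →
      ∀ f g : P ↪[L] M, ∃ t : M ≃[L] M, t.toEmbedding.comp f = g := by
  refine ⟨fun h P _ hP f g => ?_, fun h T hT f => ?_⟩
  · obtain ⟨t, ht⟩ := h f.toHom.range (hP.range _) (g.comp f.equivRange.symm.toEmbedding)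
    refine ⟨t, Embedding.ext fun x => ?_⟩
    have := DFunLike.congr_fun ht (f.equivRange x)
    rwa [Embedding.comp_apply, Language.Equiv.coe_toEmbedding,
      Language.Equiv.symm_apply_apply, eq_comm] at this
  · obtain ⟨t, ht⟩ := h T (T.fg_iff_structure_fg.1 hT) T.subtype f
    exact ⟨t, ht.symm⟩

theorem isUltrahomogeneous_of_equiv (e : M ≃[L] N) (hM : L.IsUltrahomogeneous M) :
    L.IsUltrahomogeneous N := by
  rw [isUltrahomogeneous_iff_forall_exists_comp_eq] at hM ⊢
  intro P _ hP f g
  obtain ⟨t, ht⟩ := hM P hP (e.symm.toEmbedding.comp f) (e.symm.toEmbedding.comp g)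
  refine ⟨(e.comp t).comp e.symm, Embedding.ext fun x => ?_⟩
  exact (congrArg e (DFunLike.congr_fun ht x)).trans (e.apply_symm_apply (g x))

/-- `W` is locally a copy of `U` if every finite subset of `W` lies in an embedded copy of `U`. -/
def IsLocallyCopyOf (L : FirstOrder.Language.{u, v}) (U W : Type w) [L.Structure U]
    [L.Structure W] : Prop :=
  ∀ s : Finset W, ∃ j : U ↪[L] W, (s : Set W) ⊆ Set.range j

theorem IsLocallyCopyOf.of_forall_finset {ι : Sort*} {M : ι → Type w} [∀ i, L.Structure (M i)]
    (e : ∀ i, M i ↪[L] W) (he : ∀ s : Finset W, ∃ i, (s : Set W) ⊆ Set.range (e i))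
    (hM : ∀ i, Nonempty (M i ≃[L] U)) : IsLocallyCopyOf L U W := by
  intro s
  obtain ⟨i, hi⟩ := he s
  obtain ⟨t⟩ := hM i
  refine ⟨(e i).comp t.symm.toEmbedding, fun x hx => ?_⟩
  obtain ⟨y, rfl⟩ := hi hx
  exact ⟨t y, congrArg (e i) (t.symm_apply_apply y)⟩

theorem IsLocallyCopyOf.exists_fg_le_range (h : IsLocallyCopyOf L U W) {T : L.Substructure W}
    (hT : T.FG) : ∃ j : U ↪[L] W, T ≤ j.toHom.range := by
  obtain ⟨s, rfl⟩ := hT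
  obtain ⟨j, hj⟩ := h s
  exact ⟨j, Substructure.closure_le.2 hj⟩

theorem IsLocallyCopyOf.exists_comp_eq (h : IsLocallyCopyOf L U W) (hP : Structure.FG L P)
    (f : P ↪[L] W) : ∃ (j : U ↪[L] W) (f₀ : P ↪[L] U), j.comp f₀ = f := by
  obtain ⟨j, hj⟩ := h.exists_fg_le_range (hP.range f.toHom)
  exact ⟨j, exists_comp_eq_of_range_le hj⟩

theorem IsLocallyCopyOf.age_eq (h : IsLocallyCopyOf L U W) : L.age W = L.age U := by
  ext N
  refine ⟨fun ⟨hN, ⟨f⟩⟩ => ?_, fun ⟨hN, ⟨f⟩⟩ => ?_⟩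
  · obtain ⟨-, f₀, -⟩ := h.exists_comp_eq hN f
    exact ⟨hN, ⟨f₀⟩⟩
  · obtain ⟨j, -⟩ := h ∅
    exact ⟨hN, ⟨j.comp f⟩⟩

theorem IsLocallyCopyOf.isExtensionPair_left (h : IsLocallyCopyOf L U W)
    (hU : L.IsUltrahomogeneous U) : L.IsExtensionPair W U := by
  rw [isExtensionPair_iff_exists_embedding_closure_singleton_sup]
  intro T hT f m
  obtain ⟨-, f₀, -⟩ := h.exists_comp_eq
    ((Substructure.fg_iff_structure_fg _).1 ((Substructure.fg_closure_singleton m).sup hT))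
    (Substructure.subtype (Substructure.closure L {m} ⊔ T))
  exact hU.extend_embedding (T.fg_iff_structure_fg.1 hT) f
    (Substructure.inclusion le_sup_right) (h := ⟨f₀⟩)

theorem IsLocallyCopyOf.isExtensionPair_right (h : IsLocallyCopyOf L U W)
    (hU : L.IsUltrahomogeneous U) : L.IsExtensionPair U W := by
  rw [isExtensionPair_iff_exists_embedding_closure_singleton_sup]
  intro T hT f m
  have hT' := T.fg_iff_structure_fg.1 hT
  obtain ⟨j, f₀, rfl⟩ := h.exists_comp_eq hT' f
  obtain ⟨g, hg⟩ := hU.extend_embedding hT' f₀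
    (Substructure.inclusion (le_sup_right : T ≤ Substructure.closure L {m} ⊔ T))
    (h := ⟨Substructure.subtype _⟩)
  exact ⟨j.comp g, by rw [hg, Embedding.comp_assoc]⟩

theorem IsLocallyCopyOf.nonempty_equiv [Countable U] [Countable W] (h : IsLocallyCopyOf L U W)
    (hU : L.IsUltrahomogeneous U) : Nonempty (W ≃[L] U) := by
  obtain ⟨j, -⟩ := h ∅
  obtain ⟨t, -⟩ := equiv_between_cg Structure.cg_of_countable Structure.cg_of_countable
    ⟨⟨⊥, _, (j.comp (Substructure.subtype ⊥)).equivRange⟩, Substructure.fg_bot⟩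
    (h.isExtensionPair_right hU) (h.isExtensionPair_left hU)
  exact ⟨t.symm⟩

end Ultrahomogeneous

section BackAndForth

variable {L : FirstOrder.Language.{u, v}} {M N U : Type w} [L.Structure M] [L.Structure N]
  [L.Structure U]

theorem exists_equiv_ge_of_extension_property [Countable M] [Countable N]
    {𝓘 : Set (M ≃ₚ[L] N)} (hdom : ∀ f ∈ 𝓘, ∀ m, ∃ g ∈ 𝓘, f ≤ g ∧ m ∈ g.dom)
    (hcod : ∀ f ∈ 𝓘, ∀ n, ∃ g ∈ 𝓘, f ≤ g ∧ n ∈ g.cod) {f : M ≃ₚ[L] N} (hf : f ∈ 𝓘) :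
    ∃ e : M ≃[L] N, f ≤ e.toEmbedding.toPartialEquiv := by
  have : Encodable M := Encodable.ofCountable M
  have : Encodable N := Encodable.ofCountable N
  let D : M ⊕ N → Order.Cofinal 𝓘 := Sum.elim
    (fun m => ⟨{g | m ∈ g.1.dom}, fun g =>
      let ⟨g', hg', hle, hm⟩ := hdom g g.2 m; ⟨⟨g', hg'⟩, hm, hle⟩⟩)
    (fun n => ⟨{g | n ∈ g.1.cod}, fun g =>
      let ⟨g', hg', hle, hn⟩ := hcod g g.2 n; ⟨⟨g', hg'⟩, hn, hle⟩⟩)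
  let f₀ : 𝓘 := ⟨f, hf⟩
  let s : ℕ →o M ≃ₚ[L] N :=
    ⟨fun n => (Order.sequenceOfCofinals f₀ D n).1,
      (Subtype.mono_coe _).comp (Order.sequenceOfCofinals.monotone _ _)⟩
  let F := Language.DirectLimit.partialEquivLimit s
  have le_F (n : ℕ) : s n ≤ F := Language.DirectLimit.le_partialEquivLimit s n
  have dom_eq_top : F.dom = ⊤ := top_le_iff.1 fun m _ => by
    have hm : m ∈ (s (Encodable.encode (Sum.inl m : M ⊕ N) + 1)).dom :=
      Order.sequenceOfCofinals.encode_mem f₀ D (Sum.inl m)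
    exact PartialEquiv.dom_le_dom (le_F _) hm
  have cod_eq_top : F.cod = ⊤ := top_le_iff.1 fun n _ => by
    have hn : n ∈ (s (Encodable.encode (Sum.inr n : M ⊕ N) + 1)).cod :=
      Order.sequenceOfCofinals.encode_mem f₀ D (Sum.inr n)
    exact PartialEquiv.cod_le_cod (le_F _) hn
  refine ⟨PartialEquiv.toEquivOfEqTop dom_eq_top cod_eq_top, ?_⟩
  rw [PartialEquiv.toEquivOfEqTop_toEmbedding, Embedding.toPartialEquiv_toEmbedding]
  exact le_F 0

/-- The partial isomorphism `r ∘ l⁻¹` from the range of `l` to the range of `r`. -/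
noncomputable def spanPartialEquiv (l : U ↪[L] M) (r : U ↪[L] N) : M ≃ₚ[L] N :=
  ⟨l.toHom.range, r.toHom.range, r.equivRange.comp l.equivRange.symm⟩

theorem spanPartialEquiv_le_iff {l : U ↪[L] M} {r : U ↪[L] N} {f : M ≃ₚ[L] N} :
    spanPartialEquiv l r ≤ f ↔ ∀ x, ∃ h : l x ∈ f.dom, (f.toEquiv ⟨l x, h⟩ : N) = r x := by
  have span_apply (x : U) : ((spanPartialEquiv l r).toEquiv (l.equivRange x) : N) = r x := by
    change (r.equivRange (l.equivRange.symm (l.equivRange x)) : N) = r x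
    rw [Language.Equiv.symm_apply_apply, Embedding.equivRange_apply]
  refine ⟨fun h x => ⟨h.1 ⟨x, rfl⟩, ?_⟩, fun h => ⟨?_, ?_⟩⟩
  · rw [← span_apply]
    exact DFunLike.congr_fun h.2 (l.equivRange x)
  · rintro _ ⟨x, rfl⟩
    exact (h x).1
  · ext ⟨_, x, rfl⟩
    exact (h x).2.trans (span_apply x).symm

theorem spanPartialEquiv_le_comp (l : U ↪[L] M) (r : U ↪[L] N) (t : U ↪[L] U) :
    spanPartialEquiv (l.comp t) (r.comp t) ≤ spanPartialEquiv l r :=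
  spanPartialEquiv_le_iff.2 fun x => spanPartialEquiv_le_iff.1 le_rfl (t x)

theorem comp_eq_of_spanPartialEquiv_le {l : U ↪[L] M} {r : U ↪[L] N} {e : M ≃[L] N}
    (h : spanPartialEquiv l r ≤ e.toEmbedding.toPartialEquiv) : e.toEmbedding.comp l = r :=
  Embedding.ext fun x => (spanPartialEquiv_le_iff.1 h x).2

theorem exists_equiv_comp_eq_of_extension_property [Countable M] {A : Set (U ↪[L] M)}
    (hA : ∀ a ∈ A, ∀ b ∈ A, ∀ m, ∃ a' ∈ A, ∃ b' ∈ A, ∃ t : U ↪[L] U,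
      a'.comp t = a ∧ b'.comp t = b ∧ m ∈ Set.range a')
    {a b : U ↪[L] M} (ha : a ∈ A) (hb : b ∈ A) :
    ∃ e : M ≃[L] M, e.toEmbedding.comp a = b := by
  have hdom : ∀ f ∈ Set.image2 spanPartialEquiv A A, ∀ m,
      ∃ g ∈ Set.image2 spanPartialEquiv A A, f ≤ g ∧ m ∈ g.dom := by
    rintro _ ⟨l, hl, r, hr, rfl⟩ m
    obtain ⟨l', hl', r', hr', t, rfl, rfl, hm⟩ := hA l hl r hr m
    exact ⟨_, Set.mem_image2_of_mem hl' hr', spanPartialEquiv_le_comp l' r' t, hm⟩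
  have hsymm : ∀ f ∈ Set.image2 spanPartialEquiv A A,
      f.symm ∈ Set.image2 spanPartialEquiv A A := by
    rintro _ ⟨l, hl, r, hr, rfl⟩
    exact Set.mem_image2_of_mem hr hl
  have hcod : ∀ f ∈ Set.image2 spanPartialEquiv A A, ∀ m,
      ∃ g ∈ Set.image2 spanPartialEquiv A A, f ≤ g ∧ m ∈ g.cod := by
    intro f hf m
    obtain ⟨g, hg, hfg, hm⟩ := hdom f.symm (hsymm f hf) m
    exact ⟨g.symm, hsymm g hg, PartialEquiv.symm_le_iff.1 hfg, hm⟩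
  obtain ⟨e, he⟩ := exists_equiv_ge_of_extension_property hdom hcod (Set.mem_image2_of_mem ha hb)
  exact ⟨e, comp_eq_of_spanPartialEquiv_le he⟩

end BackAndForth

section AmalgamationMonoid

variable {L : FirstOrder.Language.{u, v}} {U : Type w} [L.Structure U] {S T : Set (U ↪[L] U)}

/-- A monoid of self-embeddings with the amalgamation property. -/
structure IsAmalgamationMonoid (S : Set (U ↪[L] U)) : Prop where
  refl_mem : Embedding.refl L U ∈ S
  comp_mem : ∀ f ∈ S, ∀ g ∈ S, f.comp g ∈ S
  exists_comp_eq_comp : ∀ f ∈ S, ∀ g ∈ S, ∃ f' ∈ S, ∃ g' ∈ S, f'.comp f = g'.comp g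

theorem IsAmalgamationMonoid.exists_countable_submonoid (hS : IsAmalgamationMonoid S)
    {H : Set (U ↪[L] U)} (hH : H.Countable) (hHS : H ⊆ S) :
    ∃ T : Set (U ↪[L] U), T.Countable ∧ H ⊆ T ∧ IsAmalgamationMonoid T := by
  choose left left_mem right right_mem left_comp_eq_right_comp using
    fun f g : S => hS.exists_comp_eq_comp f f.2 g g.2
  let one : S := ⟨Embedding.refl L U, hS.refl_mem⟩
  let comp (f g : S) : S := ⟨f.1.comp g.1, hS.comp_mem _ f.2 _ g.2⟩
  obtain ⟨t, ht, hHt, hclosed⟩ := exists_countable_superset_closed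
    (ops := {comp, fun f g => ⟨left f g, left_mem f g⟩, fun f g => ⟨right f g, right_mem f g⟩})
    (Set.toFinite _).countable
    ((hH.preimage (Subtype.val_injective (p := (· ∈ S)))).insert one)
  simp only [Set.mem_insert_iff, Set.mem_singleton_iff, forall_eq_or_imp, forall_eq] at hclosed
  obtain ⟨comp_mem, left_mem', right_mem'⟩ := hclosed
  refine ⟨Subtype.val '' t, ht.image _, fun f hf => ⟨⟨f, hHS hf⟩, hHt (Or.inr hf), rfl⟩,
    ⟨one, hHt (Or.inl rfl), rfl⟩, ?_, ?_⟩
  · rintro _ ⟨f, hf, rfl⟩ _ ⟨g, hg, rfl⟩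
    exact ⟨_, comp_mem f hf g hg, rfl⟩
  · rintro _ ⟨f, hf, rfl⟩ _ ⟨g, hg, rfl⟩
    exact ⟨_, ⟨_, left_mem' f hf g hg, rfl⟩, _, ⟨_, right_mem' f hf g hg, rfl⟩,
      left_comp_eq_right_comp f g⟩

/-- The composite `u (n - 1) ∘ ⋯ ∘ u m` of the stages `m ≤ i < n` of a sequence of
self-embeddings, as a transition map of the directed system `U → U → ⋯`. -/
abbrev transition (u : ℕ → (U ↪[L] U)) (m n : ℕ) (h : m ≤ n) : U ↪[L] U :=
  DirectedSystem.natLERec (G' := fun _ => U) u m n h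

theorem transition_self (u : ℕ → (U ↪[L] U)) (m : ℕ) :
    transition u m m le_rfl = Embedding.refl L U :=
  Nat.leRecOn_self _

theorem transition_succ (u : ℕ → (U ↪[L] U)) {m n : ℕ} (h : m ≤ n) :
    transition u m (n + 1) (h.trans n.le_succ) = (u n).comp (transition u m n h) :=
  Nat.leRecOn_succ h _

theorem transition_congr {u₁ u₂ : ℕ → (U ↪[L] U)} {m n : ℕ} (h : m ≤ n)
    (hu : ∀ i < n, u₁ i = u₂ i) : transition u₁ m n h = transition u₂ m n h := by
  induction n, h using Nat.le_induction with
  | base => rw [transition_self, transition_self]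
  | succ n h ih =>
    rw [transition_succ u₁ h, transition_succ u₂ h, hu n n.lt_succ_self,
      ih fun i hi => hu i (hi.trans n.lt_succ_self)]

theorem IsAmalgamationMonoid.transition_mem (hT : IsAmalgamationMonoid T)
    {u : ℕ → (U ↪[L] U)} (hu : ∀ n, u n ∈ T) {m n : ℕ} (h : m ≤ n) :
    transition u m n h ∈ T := by
  induction n, h using Nat.le_induction with
  | base => exact transition_self u m ▸ hT.refl_mem
  | succ n h ih => exact transition_succ u h ▸ hT.comp_mem _ (hu n) _ ih

/-- A sequence `u` in `T` is generic if each `f ∈ T`, placed at any stage of the directed system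
of `u`, can be completed within `T` to a transition map. -/
structure IsGenericSequence (T : Set (U ↪[L] U)) (u : ℕ → (U ↪[L] U)) : Prop where
  mem : ∀ n, u n ∈ T
  exists_comp_eq_transition : ∀ n, ∀ f ∈ T,
    ∃ (m : ℕ) (h : n ≤ m), ∃ f' ∈ T, f'.comp f = transition u n m h

theorem IsAmalgamationMonoid.exists_isGenericSequence (hT : IsAmalgamationMonoid T)
    (hc : T.Countable) : ∃ u, IsGenericSequence T u := by
  obtain ⟨t, rfl⟩ := hc.exists_eq_range ⟨_, hT.refl_mem⟩
  have : Nonempty (Set.range t) := ⟨⟨_, hT.refl_mem⟩⟩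
  obtain ⟨u, hu⟩ := exists_fun_forall_of_wellFoundedLT (I := ℕ) (P := Set.range t)
    (Q := fun j s p => ∀ v : ℕ → (U ↪[L] U), (∀ i, v i.1 = s i) →
      ∃ f' ∈ Set.range t,
        f'.comp (t j.unpair.2) = p.1.comp (transition v j.unpair.1 j j.unpair_left_le))
    (fun j s _ => by
      let v (i : ℕ) : U ↪[L] U := if h : i < j then s ⟨i, h⟩ else Embedding.refl L U
      have v_mem (i : ℕ) : v i ∈ Set.range t := by
        unfold v
        split_ifs with h
        · exact (s ⟨i, h⟩).2
        · exact hT.refl_mem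
      obtain ⟨f', hf', p, hp, hfp⟩ := hT.exists_comp_eq_comp _ (Set.mem_range_self j.unpair.2) _
        (hT.transition_mem v_mem j.unpair_left_le)
      refine ⟨⟨p, hp⟩, fun v' hv' => ⟨f', hf', hfp.trans ?_⟩⟩
      rw [transition_congr _ fun i hi => (dif_pos hi).trans (hv' ⟨i, hi⟩).symm])
  refine ⟨fun n => u n, fun n => (u n).2, ?_⟩
  rintro n _ ⟨k, rfl⟩
  obtain ⟨f', hf', h⟩ := hu (Nat.pair n k) (fun i => u i) fun _ => rfl
  simp only [Nat.unpair_pair] at h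
  refine ⟨Nat.pair n k + 1, (Nat.left_le_pair n k).trans (Nat.le_succ _), f', hf', ?_⟩
  rw [h, transition_succ _ (Nat.left_le_pair n k)]

end AmalgamationMonoid

section GenericLimit

variable {L : FirstOrder.Language.{u, v}}

theorem exists_directLimit_finset_subset_range {ι : Type*} [Preorder ι] [IsDirectedOrder ι]
    [Nonempty ι] {G : ι → Type w} [∀ i, L.Structure (G i)] (f : ∀ i j, i ≤ j → G i ↪[L] G j)
    [DirectedSystem G fun i j h => f i j h] (s : Finset (Language.DirectLimit G f)) :
    ∃ i, (s : Set (Language.DirectLimit G f)) ⊆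
      Set.range (Language.DirectLimit.of L ι G f i) := by
  obtain ⟨i, y, hy⟩ := Language.DirectLimit.exists_quotient_mk'_sigma_mk'_eq G f
    (fun x : s => (x : Language.DirectLimit G f))
  exact ⟨i, fun x hx => ⟨y ⟨x, hx⟩, (congrFun hy ⟨x, hx⟩).symm⟩⟩

variable {U : Type w} [L.Structure U] {S T : Set (U ↪[L] U)} {u : ℕ → (U ↪[L] U)}

/-- The direct limit of the system `U → U → ⋯` with maps `u 0`, `u 1`, …. -/
abbrev SequenceLimit (u : ℕ → (U ↪[L] U)) : Type w :=
  Language.DirectLimit (fun _ : ℕ => U) (transition u)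

/-- The canonical embedding of the `n`-th copy of `U` into the limit. -/
noncomputable abbrev toLimit (u : ℕ → (U ↪[L] U)) (n : ℕ) : U ↪[L] SequenceLimit u :=
  Language.DirectLimit.of L ℕ (fun _ => U) (transition u) n

theorem toLimit_comp_transition (u : ℕ → (U ↪[L] U)) {m n : ℕ} (h : m ≤ n) :
    (toLimit u n).comp (transition u m n h) = toLimit u m :=
  Embedding.ext fun _ => Language.DirectLimit.of_f

theorem exists_mem_range_toLimit (x : SequenceLimit u) (m : ℕ) :
    ∃ n, m ≤ n ∧ x ∈ Set.range (toLimit u n) := by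
  obtain ⟨n, y, rfl⟩ := Language.DirectLimit.exists_of x
  refine ⟨max m n, le_max_left m n, transition u n _ (le_max_right m n) y, ?_⟩
  exact DFunLike.congr_fun (toLimit_comp_transition u (le_max_right m n)) y

instance SequenceLimit.countable [Countable U] : Countable (SequenceLimit u) := by
  refine Function.Surjective.countable (f := fun p : ℕ × U => toLimit u p.1 p.2) fun x => ?_
  obtain ⟨n, -, y, hy⟩ := exists_mem_range_toLimit x 0
  exact ⟨(n, y), hy⟩

theorem SequenceLimit.nonempty_equiv [Countable U] (hU : L.IsUltrahomogeneous U) :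
    Nonempty (SequenceLimit u ≃[L] U) :=
  (IsLocallyCopyOf.of_forall_finset (toLimit u) (exists_directLimit_finset_subset_range _)
    fun _ => ⟨Language.Equiv.refl L U⟩).nonempty_equiv hU

theorem IsGenericSequence.not_surjective_toLimit_zero (hu : IsGenericSequence T u)
    {e : U ↪[L] U} (heT : e ∈ T) (he : ¬ Function.Surjective e) :
    ¬ Function.Surjective (toLimit u 0) := by
  intro hsurj
  obtain ⟨m, hm, f, -, hf⟩ := hu.exists_comp_eq_transition 0 e heT
  refine he fun y => ?_
  obtain ⟨x, hx⟩ := hsurj (toLimit u m (f y))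
  refine ⟨x, f.injective ((toLimit u m).injective ?_)⟩
  rw [← hx, ← toLimit_comp_transition u hm, ← hf]
  rfl

/-- The embeddings of `U` into the limit of `u` that factor through a member of `T` at some
stage. -/
def limitLegs (T : Set (U ↪[L] U)) (u : ℕ → (U ↪[L] U)) : Set (U ↪[L] SequenceLimit u) :=
  {a | ∃ n, ∃ f ∈ T, (toLimit u n).comp f = a}

theorem IsGenericSequence.limitLegs_extension_property (hT : IsAmalgamationMonoid T)
    (hu : IsGenericSequence T u) : ∀ a ∈ limitLegs T u, ∀ b ∈ limitLegs T u, ∀ x,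
      ∃ a' ∈ limitLegs T u, ∃ b' ∈ limitLegs T u, ∃ t : U ↪[L] U,
        a'.comp t = a ∧ b'.comp t = b ∧ x ∈ Set.range a' := by
  rintro _ ⟨k, f, hf, rfl⟩ _ ⟨l, g, hg, rfl⟩ x
  obtain ⟨n, hkn, hx⟩ := exists_mem_range_toLimit x k
  let t := (transition u k n hkn).comp f
  have ht : t ∈ T := hT.comp_mem _ (hT.transition_mem hu.mem hkn) _ hf
  obtain ⟨t', ht', g', hg', htg⟩ := hT.exists_comp_eq_comp t ht g hg
  obtain ⟨m, hlm, g'', hg'', hgm⟩ := hu.exists_comp_eq_transition l g' hg'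
  refine ⟨toLimit u n, ⟨n, _, hT.refl_mem, Embedding.comp_refl _⟩, (toLimit u m).comp (g''.comp t'),
    ⟨m, _, hT.comp_mem _ hg'' _ ht', rfl⟩, t, ?_, ?_, hx⟩
  · rw [← Embedding.comp_assoc, toLimit_comp_transition]
  · calc ((toLimit u m).comp (g''.comp t')).comp t
        = (toLimit u m).comp (g''.comp (t'.comp t)) := by simp only [Embedding.comp_assoc]
      _ = (toLimit u m).comp ((g''.comp g').comp g) := by rw [htg, Embedding.comp_assoc]
      _ = (toLimit u l).comp g := by
        rw [hgm, ← Embedding.comp_assoc, toLimit_comp_transition]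

theorem IsAmalgamationMonoid.exists_proper_extension [Countable U] (hU : L.IsUltrahomogeneous U)
    (hS : IsAmalgamationMonoid S) (haut : ∀ g : U ≃[L] U, g.toEmbedding ∈ S)
    (hne : ∃ e ∈ S, ¬ Function.Surjective e) {H : Set (U ≃[L] U)} (hH : H.Countable) :
    ∃ (V : Type w) (_ : L.Structure V), Nonempty (V ≃[L] U) ∧
      ∃ e : U ↪[L] V, ¬ Function.Surjective e ∧
        ∀ h ∈ H, ∃ g : V ≃[L] V, g.toEmbedding.comp e = e.comp h.toEmbedding := by
  obtain ⟨e, heS, he⟩ := hne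
  obtain ⟨T, hTc, hHT, hT⟩ := hS.exists_countable_submonoid
    ((hH.image Language.Equiv.toEmbedding).insert e)
    (Set.insert_subset heS (Set.image_subset_iff.2 fun g _ => haut g))
  obtain ⟨u, hu⟩ := hT.exists_isGenericSequence hTc
  refine ⟨SequenceLimit u, inferInstance, SequenceLimit.nonempty_equiv hU, toLimit u 0,
    hu.not_surjective_toLimit_zero (hHT (Or.inl rfl)) he, fun h hh => ?_⟩
  exact exists_equiv_comp_eq_of_extension_property (hu.limitLegs_extension_property hT)
    ⟨0, _, hT.refl_mem, Embedding.comp_refl _⟩ ⟨0, _, hHT (Or.inr ⟨h, hh, rfl⟩), rfl⟩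

end GenericLimit

section ChainConstruction

variable {L : FirstOrder.Language.{u, v}} {K : Set (Bundled.{w} L.Structure)} {X : Type w}

/-- `B` is locally in the class `K` if every finite subset of `B` lies in an embedded copy of a
member of `K`. -/
def LocallyIn (K : Set (Bundled.{w} L.Structure)) (B : Type w) [L.Structure B] : Prop :=
  ∀ s : Finset B, ∃ M ∈ K, ∃ e : M ↪[L] B, (s : Set B) ⊆ Set.range e

theorem LocallyIn.of_equiv {M : Bundled.{w} L.Structure} (hM : M ∈ K) {B : Type w} [L.Structure B]
    (e : M ≃[L] B) : LocallyIn K B :=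
  fun _ => ⟨M, hM, e.toEmbedding, fun x _ => e.surjective x⟩

theorem LocallyIn.of_iSup_eq_top {I : Type*} [Nonempty I] {W : Type w} [L.Structure W]
    {C : I → L.Substructure W} (hC : Directed (· ≤ ·) C) (htop : ⨆ i, C i = ⊤)
    (hK : ∀ i, Bundled.of (c := L.Structure) (C i) ∈ K) : LocallyIn K W := by
  intro s
  have hs : (s : Set W) ⊆ ⋃ i, C i := fun x _ =>
    Set.mem_iUnion.2 ((Substructure.mem_iSup_of_directed hC).1 (htop ▸ Substructure.mem_top x))
  obtain ⟨i, hi⟩ := hC.exists_mem_subset_of_finset_subset_biUnion hs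
  exact ⟨_, hK i, (C i).subtype, fun x hx => ⟨⟨x, hi hx⟩, rfl⟩⟩

/-- A class of countable structures, closed under isomorphisms and countable directed unions, all
of whose members can be properly extended within the class. The two closure conditions are
expressed by a single one: the class contains the countable structures that are locally in it. -/
structure IsExtendibleClass (K : Set (Bundled.{w} L.Structure)) : Prop where
  nonempty : K.Nonempty
  countable : ∀ M ∈ K, Countable M
  mem_of_locallyIn : ∀ (B : Type w) [L.Structure B] [Countable B], LocallyIn K B →
    Bundled.of (c := L.Structure) B ∈ K
  exists_proper_extension : ∀ M ∈ K, ∃ N ∈ K, ∃ e : M ↪[L] N, ¬ Function.Surjective e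

theorem IsExtendibleClass.mem_of_equiv (hK : IsExtendibleClass K) {M : Bundled.{w} L.Structure}
    (hM : M ∈ K) {B : Type w} [L.Structure B] (e : M ≃[L] B) :
    Bundled.of (c := L.Structure) B ∈ K := by
  have := hK.countable M hM
  have : Countable B := e.toEquiv.countable_iff.1 this
  exact hK.mem_of_locallyIn B (LocallyIn.of_equiv hM e)

/-- A structure whose universe is a subset of `X`. -/
structure SubsetStructure (L : FirstOrder.Language.{u, v}) (X : Type w) where
  carrier : Set X
  str : L.Structure carrier

namespace SubsetStructure

attribute [instance] SubsetStructure.str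

instance : Preorder (SubsetStructure L X) where
  le p q := ∃ e : p.carrier ↪[L] q.carrier, ∀ x, (e x : X) = x
  le_refl p := ⟨Embedding.refl L _, fun _ => rfl⟩
  le_trans _ _ _ := fun ⟨e, he⟩ ⟨f, hf⟩ => ⟨f.comp e, fun x => (hf _).trans (he x)⟩

theorem carrier_mono {p q : SubsetStructure L X} (h : p ≤ q) : p.carrier ⊆ q.carrier := by
  obtain ⟨e, he⟩ := h
  intro x hx
  have := (e ⟨x, hx⟩).2
  rwa [he] at this

theorem exists_equiv_of_injective {M : Type*} [L.Structure M] {j : M → X}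
    (hj : Function.Injective j) :
    ∃ (p : SubsetStructure L X) (t : M ≃[L] p.carrier), ∀ m, (t m : X) = j m :=
  letI := (_root_.Equiv.ofInjective j hj).inducedStructure (L := L)
  ⟨⟨Set.range j, inferInstance⟩, (_root_.Equiv.ofInjective j hj).inducedStructureEquiv,
    fun _ => rfl⟩

theorem exists_directed_union {I : Type*} [Preorder I] [IsDirectedOrder I] [Nonempty I]
    {F : I → SubsetStructure L X} (hF : Monotone F) :
    ∃ p : SubsetStructure L X, (∀ i, F i ≤ p) ∧ p.carrier = ⋃ i, (F i).carrier := by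
  choose f hf using fun i j (h : i ≤ j) => hF h
  have : DirectedSystem (fun i => (F i).carrier) fun i j h => f i j h :=
    ⟨fun i x => Subtype.ext (hf i i le_rfl x), fun i j k hij hjk x => Subtype.ext <| by
      rw [hf, hf, hf]⟩
  let of i := Language.DirectLimit.of L I (fun i => (F i).carrier) f i
  have of_eq_of_iff {i j : I} (x : (F i).carrier) (y : (F j).carrier) :
      of i x = of j y ↔ (x : X) = y := by
    obtain ⟨k, hik, hjk⟩ := exists_ge_ge i j
    rw [← Language.DirectLimit.of_f (hij := hik), ← Language.DirectLimit.of_f (hij := hjk),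
      (of k).injective.eq_iff, Subtype.ext_iff, hf, hf]
  choose stage point of_point using
    fun z : Language.DirectLimit (fun i => (F i).carrier) f => Language.DirectLimit.exists_of z
  obtain ⟨p, t, ht⟩ := exists_equiv_of_injective (L := L) (j := fun z => (point z : X))
    fun z z' h => by rw [← of_point z, ← of_point z', (of_eq_of_iff _ _).2 h]
  have t_of (i : I) (x : (F i).carrier) : (t (of i x) : X) = x :=
    (ht _).trans ((of_eq_of_iff _ _).1 (of_point _))
  have le_p (i : I) : F i ≤ p := ⟨t.toEmbedding.comp (of i), t_of i⟩
  refine ⟨p, le_p, Set.Subset.antisymm (fun x hx => ?_)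
    (Set.iUnion_subset fun i => carrier_mono (le_p i))⟩
  obtain ⟨z, hz⟩ := t.surjective ⟨x, hx⟩
  have point_eq : (point z : X) = x := (ht z).symm.trans (congrArg Subtype.val hz)
  exact Set.mem_iUnion.2 ⟨stage z, point_eq ▸ (point z).2⟩

theorem exists_monotone_iSup_eq_top {I : Type*} [Preorder I] {F : I → SubsetStructure L X}
    (hF : Monotone F) {p : SubsetStructure L X} (hp : ∀ i, F i ≤ p)
    (hpF : p.carrier = ⋃ i, (F i).carrier) :
    ∃ C : I → L.Substructure p.carrier, Monotone C ∧ ⨆ i, C i = ⊤ ∧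
      ∀ i, Nonempty ((F i).carrier ≃[L] C i) := by
  choose e he using hp
  refine ⟨fun i => (e i).toHom.range, fun i j hij => ?_, top_le_iff.1 fun x _ => ?_,
    fun i => ⟨(e i).equivRange⟩⟩
  · rintro _ ⟨x, rfl⟩
    obtain ⟨f, hf⟩ := hF hij
    exact ⟨f x, Subtype.ext ((he j _).trans ((hf x).trans (he i x).symm))⟩
  · obtain ⟨i, hi⟩ := Set.mem_iUnion.1 (hpF.subset x.2)
    exact le_iSup (fun i => (e i).toHom.range) i ⟨⟨x, hi⟩, Subtype.ext (he i _)⟩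

end SubsetStructure

open SubsetStructure

theorem IsExtendibleClass.exists_le_notMem [Uncountable X] (hK : IsExtendibleClass K)
    {p : SubsetStructure L X} (hp : Bundled.of (c := L.Structure) p.carrier ∈ K) :
    ∃ q : SubsetStructure L X, Bundled.of (c := L.Structure) q.carrier ∈ K ∧ p ≤ q ∧
      ∃ x ∈ q.carrier, x ∉ p.carrier := by
  obtain ⟨N, hN, e, he⟩ := hK.exists_proper_extension _ hp
  have := hK.countable N hN
  obtain ⟨j, hj, hje⟩ := exists_injective_extension_of_uncountable (X := X) e.injective
  obtain ⟨q, t, ht⟩ := exists_equiv_of_injective (L := L) hj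
  obtain ⟨n, hn⟩ := not_forall.1 he
  refine ⟨q, hK.mem_of_equiv hN t, ⟨t.toEmbedding.comp e, fun a => (ht _).trans (hje a)⟩, j n,
    ht n ▸ (t n).2, fun h => hn ⟨⟨j n, h⟩, hj (hje _)⟩⟩

theorem IsExtendibleClass.exists_upper_bound [Uncountable X] (hK : IsExtendibleClass K)
    {I : Type*} [LinearOrder I] [Countable I] {F : I → SubsetStructure L X} (hF : Monotone F)
    (hFK : ∀ i, Bundled.of (c := L.Structure) (F i).carrier ∈ K) :
    ∃ p : SubsetStructure L X, Bundled.of (c := L.Structure) p.carrier ∈ K ∧ ∀ i, F i ≤ p := by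
  rcases isEmpty_or_nonempty I with _ | _
  · obtain ⟨M, hM⟩ := hK.nonempty
    have := hK.countable M hM
    obtain ⟨j, hj, -⟩ := exists_injective_extension_of_uncountable (X := X) (A := ∅)
      (e := fun a => (a.2.elim : M)) fun a => a.2.elim
    obtain ⟨p, t, -⟩ := exists_equiv_of_injective (L := L) hj
    exact ⟨p, hK.mem_of_equiv hM t, isEmptyElim⟩
  · obtain ⟨p, hp, hpF⟩ := exists_directed_union hF
    obtain ⟨C, hC, htop, hFC⟩ := exists_monotone_iSup_eq_top hF hp hpF
    have (i : I) : Countable (F i).carrier := hK.countable _ (hFK i)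
    have : Countable p.carrier := hpF ▸ Set.countable_iUnion fun i => this i
    exact ⟨p, hK.mem_of_locallyIn _ (.of_iSup_eq_top hC.directed_le htop fun i =>
      let ⟨t⟩ := hFC i; hK.mem_of_equiv (hFK i) t), hp⟩

theorem IsExtendibleClass.exists_chain [Uncountable X] (hK : IsExtendibleClass K) {I : Type*}
    [LinearOrder I] [WellFoundedLT I] (hI : ∀ i : I, Countable (Set.Iio i)) :
    ∃ F : I → SubsetStructure L X, Monotone F ∧
      (∀ i, Bundled.of (c := L.Structure) (F i).carrier ∈ K) ∧
      ∀ i, ∃ x ∈ (F i).carrier, ∀ j < i, x ∉ (F j).carrier := by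
  obtain ⟨p₀, -⟩ := hK.exists_upper_bound (X := X) (F := Empty.elim) (fun i => i.elim)
    fun i => i.elim
  have : Nonempty (SubsetStructure L X) := ⟨p₀⟩
  obtain ⟨F, hF⟩ := exists_fun_forall_of_wellFoundedLT (I := I) (P := SubsetStructure L X)
    (Q := fun j f p => Bundled.of (c := L.Structure) p.carrier ∈ K ∧ (∀ i, f i ≤ p) ∧
      ∃ x ∈ p.carrier, ∀ i, x ∉ (f i).carrier)
    (fun j f hf => by
      have := hI j
      have f_mono : Monotone f := monotone_iff_forall_lt.2 fun i k hik => (hf k).2.1 ⟨i, hik⟩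
      obtain ⟨p, hpK, hp⟩ := hK.exists_upper_bound f_mono fun i => (hf i).1
      obtain ⟨q, hqK, hpq, x, hxq, hxp⟩ := hK.exists_le_notMem hpK
      refine ⟨q, hqK, fun i => (hp i).trans hpq, x, hxq, fun i hxi => hxp ?_⟩
      exact carrier_mono (hp i) hxi)
  refine ⟨F, monotone_iff_forall_lt.2 fun i k hik => (hF k).2.1 ⟨i, hik⟩, fun i => (hF i).1,
    fun i => ?_⟩
  obtain ⟨x, hx, hx'⟩ := (hF i).2.2
  exact ⟨x, hx, fun j hj => hx' ⟨j, hj⟩⟩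

theorem IsExtendibleClass.exists_aleph_one_union (hK : IsExtendibleClass K) {I : Type*}
    [LinearOrder I] [WellFoundedLT I] [Uncountable I] (hI : ∀ i : I, Countable (Set.Iio i)) :
    ∃ W : Bundled.{w} L.Structure, #W = aleph 1 ∧ ∃ C : I → L.Substructure W, Monotone C ∧
      ⨆ i, C i = ⊤ ∧ ∀ i, Bundled.of (c := L.Structure) (C i) ∈ K := by
  let X : Type w := (aleph 1).out
  have mk_X : #X = aleph 1 := Cardinal.mk_out _
  have : Uncountable X := by
    rw [← Cardinal.aleph0_lt_mk_iff, mk_X]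
    exact Cardinal.aleph0_lt_aleph_one
  have : Nonempty I := inferInstance
  obtain ⟨F, F_mono, hFK, hF⟩ := hK.exists_chain (X := X) hI
  obtain ⟨p, hp, hpF⟩ := exists_directed_union F_mono
  obtain ⟨C, hC, htop, hFC⟩ := exists_monotone_iSup_eq_top F_mono hp hpF
  choose x hx hx' using hF
  have x_injective : Function.Injective x :=
    Function.Injective.of_eq_imp_le fun {i j} hij =>
      not_lt.1 fun h => hx' i j h (hij ▸ hx j)
  have : Uncountable p.carrier := Function.Injective.uncountable
    (f := fun i => (⟨x i, carrier_mono (hp i) (hx i)⟩ : p.carrier))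
    fun i j hij => x_injective (congrArg Subtype.val hij)
  refine ⟨⟨p.carrier, p.str⟩, le_antisymm (mk_X ▸ Cardinal.mk_set_le _) ?_, C, hC, htop,
    fun i => let ⟨t⟩ := hFC i; hK.mem_of_equiv (hFK i) t⟩
  rw [← Cardinal.succ_aleph0, Order.succ_le_iff, Cardinal.aleph0_lt_mk_iff]
  exact this

end ChainConstruction

section Marking

variable {L : FirstOrder.Language.{u, v}} {M N B : Type w} {n : ℕ}

section TupleIso

variable [L.Structure M] [L.Structure B]

/-- The tuples `x` and `y` are images of a single generating tuple, that is, `x i ↦ y i` extends to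
an isomorphism between the substructures they generate. -/
def TupleIso (L : FirstOrder.Language.{u, v}) [L.Structure M] (x y : Fin n → M) : Prop :=
  ∃ (P : Type w) (_ : L.Structure P) (p : Fin n → P), Substructure.closure L (Set.range p) = ⊤ ∧
    ∃ f g : P ↪[L] M, f ∘ p = x ∧ g ∘ p = y

theorem TupleIso.of_comp (e : M ↪[L] B) {x y : Fin n → M} (h : TupleIso L (e ∘ x) (e ∘ y)) :
    TupleIso L x y := by
  obtain ⟨P, _, p, hp, f, g, hf, hg⟩ := h
  have factors {h : P ↪[L] B} {z : Fin n → M} (hz : h ∘ p = e ∘ z) :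
      ∃ h₀ : P ↪[L] M, h₀ ∘ p = z := by
    obtain ⟨h₀, rfl⟩ := exists_comp_eq_of_range_le (range_le_range_of_closure_eq_top hp
      (j := e) (f := h) (by rintro _ ⟨i, rfl⟩; exact ⟨z i, (congrFun hz i).symm⟩))
    exact ⟨h₀, funext fun i => e.injective (congrFun hz i)⟩
  obtain ⟨f₀, hf₀⟩ := factors hf
  obtain ⟨g₀, hg₀⟩ := factors hg
  exact ⟨P, _, p, hp, f₀, g₀, hf₀, hg₀⟩

theorem TupleIso.exists_equiv (hM : L.IsUltrahomogeneous M) {x y : Fin n → M}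
    (h : TupleIso L x y) : ∃ g : M ≃[L] M, g ∘ x = y := by
  obtain ⟨P, _, p, hp, f, g, rfl, rfl⟩ := h
  have hP : Structure.FG L P := ⟨hp ▸ Substructure.fg_closure (Set.finite_range p)⟩
  obtain ⟨t, rfl⟩ := isUltrahomogeneous_iff_forall_exists_comp_eq.1 hM P hP f g
  exact ⟨t, rfl⟩

theorem isUltrahomogeneous_of_forall_tupleIso
    (h : ∀ (n : ℕ) (x y : Fin n → M), TupleIso L x y → ∃ g : M ≃[L] M, g ∘ x = y) :
    L.IsUltrahomogeneous M := by
  refine isUltrahomogeneous_iff_forall_exists_comp_eq.2 fun P _ hP f g => ?_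
  obtain ⟨n, p, hp⟩ := Substructure.fg_iff_exists_fin_generating_family.1 hP.out
  obtain ⟨t, ht⟩ := h n (f ∘ p) (g ∘ p) ⟨P, _, p, hp, f, g, rfl, rfl⟩
  refine ⟨t, Embedding.ext fun z => ?_⟩
  have : (t.toEmbedding.comp f).toHom = g.toHom := Hom.eq_of_eqOn_dense hp (by
    rintro _ ⟨i, rfl⟩
    exact congrFun ht i)
  exact DFunLike.congr_fun this z

theorem exists_equiv_of_forall_finset {t : B → B}
    (h : ∀ s : Finset B, ∃ (M : Type w) (_ : L.Structure M) (e : M ↪[L] B) (g : M ≃[L] M),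
      (s : Set B) ⊆ Set.range e ∧ ∀ m, t (e m) = e (g m)) :
    ∃ g : B ≃[L] B, ⇑g = t := by
  classical
  have injective : Function.Injective t := fun x y hxy => by
    obtain ⟨M, _, e, g, hs, ht⟩ := h {x, y}
    obtain ⟨a, rfl⟩ := hs (show x ∈ _ by simp)
    obtain ⟨b, rfl⟩ := hs (show y ∈ _ by simp)
    rw [ht, ht] at hxy
    rw [g.injective (e.injective hxy)]
  have surjective : Function.Surjective t := fun y => by
    obtain ⟨M, _, e, g, hs, ht⟩ := h {y}
    obtain ⟨a, rfl⟩ := hs (show y ∈ _ by simp)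
    exact ⟨e (g.symm a), by rw [ht, g.apply_symm_apply]⟩
  have local_tuple {n : ℕ} (x : Fin n → B) :
      ∃ (M : Type w) (_ : L.Structure M) (e : M ↪[L] B) (g : M ≃[L] M) (a : Fin n → M),
        x = e ∘ a ∧ t ∘ e = e ∘ g := by
    obtain ⟨M, _, e, g, hs, ht⟩ := h (Finset.univ.image x)
    choose a ha using fun i => hs (show x i ∈ _ by simp)
    exact ⟨M, _, e, g, a, funext fun i => (ha i).symm, funext ht⟩
  refine ⟨⟨_root_.Equiv.ofBijective t ⟨injective, surjective⟩, fun f x => ?_, fun r x => ?_⟩, rfl⟩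
  · obtain ⟨M, _, e, g, a, rfl, ht⟩ := local_tuple x
    change t _ = Structure.funMap f (t ∘ e ∘ a)
    rw [← Function.comp_assoc, ht, Function.comp_assoc, ← e.map_fun, ← e.map_fun, ← g.map_fun]
    exact congrFun ht _
  · obtain ⟨M, _, e, g, a, rfl, ht⟩ := local_tuple x
    change Structure.RelMap r (t ∘ e ∘ a) ↔ _
    rw [← Function.comp_assoc, ht, Function.comp_assoc, e.map_rel, e.map_rel, g.map_rel]

end TupleIso

/-- The function symbols of `markLanguage`. -/
inductive MarkFunctions : ℕ → Type
  | transport (n : ℕ) : MarkFunctions (n + n + 1)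

/-- The language with, for each `n`, a function symbol taking a pair of `n`-tuples and a point, so
that in a structure every pair of `n`-tuples, encoded as one tuple of length `n + n`, names a
self-map. -/
abbrev markLanguage : FirstOrder.Language.{0, 0} :=
  ⟨MarkFunctions, fun _ => Empty⟩

/-- The self-map named by the pair of tuples `w`. -/
def transport [markLanguage.Structure M] (w : Fin (n + n) → M) (z : M) : M :=
  Structure.funMap (L := markLanguage) (MarkFunctions.transport n) (Fin.snoc w z)

/-- The `markLanguage`-structure in which `w` names the self-map `act w`. -/
abbrev markStructure (act : ∀ {n : ℕ}, (Fin (n + n) → M) → M → M) : markLanguage.Structure M where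
  funMap
    | MarkFunctions.transport _, v => act (Fin.init v) (v (Fin.last _))
  RelMap r := nomatch r

theorem transport_markStructure (act : ∀ {n : ℕ}, (Fin (n + n) → M) → M → M)
    (w : Fin (n + n) → M) : letI := markStructure act; transport w = act w := by
  funext z
  simp only [transport, Structure.funMap, Fin.init_snoc, Fin.snoc_last]

section

variable [markLanguage.Structure M] [markLanguage.Structure N]

theorem map_transport (e : M ↪[markLanguage] N) (w : Fin (n + n) → M) (z : M) :
    e (transport w z) = transport (e ∘ w) (e z) := by
  rw [transport, transport, Embedding.map_fun, Fin.comp_snoc]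

/-- An injection that commutes with all named self-maps, as an embedding. -/
def markEmbedding (e : M ↪ N)
    (he : ∀ (n : ℕ) (w : Fin (n + n) → M) (z : M), e (transport w z) = transport (e ∘ w) (e z)) :
    M ↪[markLanguage] N where
  toEmbedding := e
  map_fun'
    | MarkFunctions.transport n, v => by
      rw [← Fin.snoc_init_self v, Fin.comp_snoc]
      exact he n (Fin.init v) (v (Fin.last _))
  map_rel' r := nomatch r

end

section HomogeneityMarking

variable [L.Structure M] [L.Structure B]

/-- A marking of `M` by self-maps witnesses the homogeneity of `M` if all named maps are
automorphisms, and a pair `(x, y)` of isomorphic tuples names one that takes `x` to `y`. -/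
structure IsHomogeneityMarking (L : FirstOrder.Language.{u, v}) (M : Type w) [L.Structure M]
    [markLanguage.Structure M] : Prop where
  exists_equiv : ∀ {n : ℕ} (w : Fin (n + n) → M), ∃ g : M ≃[L] M, ⇑g = transport w
  transport_comp : ∀ {n : ℕ} (w : Fin (n + n) → M),
    TupleIso L (w ∘ Fin.castAdd n) (w ∘ Fin.natAdd n) →
      transport w ∘ w ∘ Fin.castAdd n = w ∘ Fin.natAdd n

theorem IsHomogeneityMarking.isUltrahomogeneous [markLanguage.Structure M]
    (hM : IsHomogeneityMarking L M) : L.IsUltrahomogeneous M := by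
  refine isUltrahomogeneous_of_forall_tupleIso fun n x y hxy => ?_
  have hx : Fin.append x y ∘ Fin.castAdd n = x := funext fun i => Fin.append_left x y i
  have hy : Fin.append x y ∘ Fin.natAdd n = y := funext fun i => Fin.append_right x y i
  obtain ⟨g, hg⟩ := hM.exists_equiv (Fin.append x y)
  have := hM.transport_comp (Fin.append x y) (by rwa [hx, hy])
  exact ⟨g, by rwa [hx, hy, ← hg] at this⟩

theorem isHomogeneityMarking_markStructure (g : ∀ {n : ℕ}, (Fin (n + n) → M) → (M ≃[L] M))
    (hg : ∀ {n : ℕ} (w : Fin (n + n) → M),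
      TupleIso L (w ∘ Fin.castAdd n) (w ∘ Fin.natAdd n) →
        g w ∘ w ∘ Fin.castAdd n = w ∘ Fin.natAdd n) :
    letI := markStructure fun w => g w; IsHomogeneityMarking L M := by
  let := markStructure fun {n} (w : Fin (n + n) → M) => g w
  refine ⟨fun w => ⟨g w, (transport_markStructure (fun w => g w) w).symm⟩, fun w hw => ?_⟩
  rw [transport_markStructure (fun w => g w)]
  exact hg w hw

theorem exists_equiv_comp_eq_of_tupleIso (hM : L.IsUltrahomogeneous M)
    (x y : Fin n → M) : ∃ g : M ≃[L] M, TupleIso L x y → g ∘ x = y := by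
  by_cases h : TupleIso L x y
  · obtain ⟨g, hg⟩ := h.exists_equiv hM
    exact ⟨g, fun _ => hg⟩
  · exact ⟨Language.Equiv.refl L M, fun h' => (h h').elim⟩

theorem exists_isHomogeneityMarking (hM : L.IsUltrahomogeneous M) :
    ∃ _ : markLanguage.Structure M, IsHomogeneityMarking L M := by
  choose g hg using fun {n : ℕ} (w : Fin (n + n) → M) =>
    exists_equiv_comp_eq_of_tupleIso hM (w ∘ Fin.castAdd n) (w ∘ Fin.natAdd n)
  exact ⟨_, isHomogeneityMarking_markStructure (fun w => g w) fun w => hg w⟩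

theorem IsHomogeneityMarking.exists_extension [markLanguage.Structure M]
    (hM : IsHomogeneityMarking L M) (hB : L.IsUltrahomogeneous B) (e : M ↪[L] B)
    (hext : ∀ {n : ℕ} (w : Fin (n + n) → M), ∃ g : B ≃[L] B, ∀ z, g (e z) = e (transport w z)) :
    ∃ _ : markLanguage.Structure B, IsHomogeneityMarking L B ∧
      ∃ e' : M ↪[markLanguage] B, ⇑e' = e := by
  have choice {n : ℕ} (w : Fin (n + n) → B) : ∃ g : B ≃[L] B,
      (TupleIso L (w ∘ Fin.castAdd n) (w ∘ Fin.natAdd n) →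
        g ∘ w ∘ Fin.castAdd n = w ∘ Fin.natAdd n) ∧
      ∀ w₀, e ∘ w₀ = w → ∀ z, g (e z) = e (transport w₀ z) := by
    by_cases h : ∃ w₀, e ∘ w₀ = w
    · obtain ⟨w₀, rfl⟩ := h
      obtain ⟨g, hg⟩ := hext w₀
      refine ⟨g, fun hw => funext fun i => ?_, fun w₁ hw₁ => ?_⟩
      · exact (hg _).trans
          (congrArg e (congrFun (hM.transport_comp w₀ (TupleIso.of_comp e hw)) i))
      · rwa [e.injective.comp_left hw₁]
    · obtain ⟨g, hg⟩ := exists_equiv_comp_eq_of_tupleIso hB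
        (w ∘ Fin.castAdd n) (w ∘ Fin.natAdd n)
      exact ⟨g, hg, fun w₀ hw₀ => (h ⟨w₀, hw₀⟩).elim⟩
  choose g hg hge using @choice
  let := markStructure fun {n} (w : Fin (n + n) → B) => g w
  refine ⟨_, isHomogeneityMarking_markStructure (fun w => g w) fun w => hg w,
    markEmbedding e.toEmbedding fun n w z => ?_, rfl⟩
  rw [transport_markStructure (fun w => g w)]
  exact (hge _ w rfl z).symm

theorem IsHomogeneityMarking.of_forall_finset [markLanguage.Structure B]
    (h : ∀ s : Finset B, ∃ (M : Type w) (_ : L.Structure M) (_ : markLanguage.Structure M)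
      (e : M ↪[L] B) (e' : M ↪[markLanguage] B), ⇑e' = e ∧ (s : Set B) ⊆ Set.range e ∧
        IsHomogeneityMarking L M) : IsHomogeneityMarking L B := by
  classical
  have local_marking {n : ℕ} (w : Fin (n + n) → B) (s : Finset B) :
      ∃ (M : Type w) (_ : L.Structure M) (_ : markLanguage.Structure M) (e : M ↪[L] B)
        (w₀ : Fin (n + n) → M), IsHomogeneityMarking L M ∧ (s : Set B) ⊆ Set.range e ∧
          w = e ∘ w₀ ∧ ∀ z, transport w (e z) = e (transport w₀ z) := by
    obtain ⟨M, _, _, e, e', he, hs, hM⟩ := h (s ∪ Finset.univ.image w)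
    rw [Finset.coe_union, Set.union_subset_iff] at hs
    choose w₀ hw₀ using fun i => hs.2 (show w i ∈ _ by simp)
    obtain rfl : e ∘ w₀ = w := funext hw₀
    refine ⟨M, _, _, e, w₀, hM, hs.1, rfl, fun z => ?_⟩
    rw [← he, map_transport]
  refine ⟨fun w => exists_equiv_of_forall_finset fun s => ?_, fun w hw => ?_⟩
  · obtain ⟨M, _, _, e, w₀, hM, hs, -, htransport⟩ := local_marking w s
    obtain ⟨g, hg⟩ := hM.exists_equiv w₀
    exact ⟨M, _, e, g, hs, fun z => by rw [htransport, hg]⟩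
  · obtain ⟨M, _, _, e, w₀, hM, -, rfl, htransport⟩ := local_marking w ∅
    have := hM.transport_comp w₀ (TupleIso.of_comp e hw)
    exact funext fun i => (htransport _).trans (congrArg e (congrFun this i))

end HomogeneityMarking

end Marking

section SumLanguage

variable {L : FirstOrder.Language.{u, v}} {L' : FirstOrder.Language.{u', v'}} {M N : Type w}
  [L.Structure M] [L.Structure N] [L'.Structure M] [L'.Structure N]

/-- The embedding of reducts underlying an embedding, where the structures in the smaller language
are given as arbitrary reducts. -/
def embeddingReduct (φ : L →ᴸ L') [φ.IsExpansionOn M] [φ.IsExpansionOn N] (e : M ↪[L'] N) :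
    M ↪[L] N where
  toEmbedding := e.toEmbedding
  map_fun' f x := by
    rw [← φ.map_onFunction, ← φ.map_onFunction]
    exact e.map_fun _ x
  map_rel' r x := by
    rw [← φ.map_onRelation, ← φ.map_onRelation]
    exact e.map_rel _ x

theorem iSup_substructureReduct_eq_top (φ : L →ᴸ L') [φ.IsExpansionOn M] {I : Type*} [Nonempty I]
    {C : I → L'.Substructure M}
    (hC : Directed (· ≤ ·) C) (htop : ⨆ i, C i = ⊤) : ⨆ i, φ.substructureReduct (C i) = ⊤ := by
  refine top_le_iff.1 fun x _ => ?_
  obtain ⟨i, hi⟩ := (Substructure.mem_iSup_of_directed hC).1 (htop ▸ Substructure.mem_top x)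
  exact le_iSup (fun i => φ.substructureReduct (C i)) i hi

/-- A map that is an embedding for two languages, as an embedding for their sum. -/
def sumEmbedding [(L.sum L').Structure M] [(L.sum L').Structure N]
    [(LHom.sumInl : L →ᴸ L.sum L').IsExpansionOn M] [(LHom.sumInl : L →ᴸ L.sum L').IsExpansionOn N]
    [(LHom.sumInr : L' →ᴸ L.sum L').IsExpansionOn M]
    [(LHom.sumInr : L' →ᴸ L.sum L').IsExpansionOn N]
    (e : M ↪[L] N) (e' : M ↪[L'] N) (h : ⇑e' = e) : M ↪[L.sum L'] N where
  toEmbedding := e.toEmbedding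
  map_fun'
    | Sum.inl f, x => by
      rw [LHom.funMap_sumInl, LHom.funMap_sumInl]
      exact e.map_fun f x
    | Sum.inr f, x => by
      rw [LHom.funMap_sumInr, LHom.funMap_sumInr]
      change e _ = Structure.funMap f (e ∘ x)
      rw [← h, e'.map_fun]
  map_rel'
    | Sum.inl r, x => by
      change Structure.RelMap ((LHom.sumInl : L →ᴸ L.sum L').onRelation r) (e ∘ x) ↔
        Structure.RelMap ((LHom.sumInl : L →ᴸ L.sum L').onRelation r) x
      rw [LHom.map_onRelation, LHom.map_onRelation, e.map_rel]
    | Sum.inr r, x => by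
      change Structure.RelMap ((LHom.sumInr : L' →ᴸ L.sum L').onRelation r) (e ∘ x) ↔
        Structure.RelMap ((LHom.sumInr : L' →ᴸ L.sum L').onRelation r) x
      rw [LHom.map_onRelation, LHom.map_onRelation, ← h, e'.map_rel]

/-- The reduct to the left summand of the language. -/
instance leftReduct (M : Bundled.{w} (L.sum L').Structure) : L.Structure M :=
  (LHom.sumInl : L →ᴸ L.sum L').reduct M

/-- The reduct to the right summand of the language. -/
instance rightReduct (M : Bundled.{w} (L'.sum L).Structure) : L.Structure M :=
  (LHom.sumInr : L →ᴸ L'.sum L).reduct M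

-- Takes precedence over the structure assembled from the two reducts, which instance search
-- would otherwise find first and which is equal to this one only after unfolding.
instance sumStructureBundled (M : Bundled.{w} (L.sum L').Structure) : (L.sum L').Structure M :=
  M.str

instance sumInl_isExpansionOn_bundled (M : Bundled.{w} (L.sum L').Structure) :
    (LHom.sumInl : L →ᴸ L.sum L').IsExpansionOn M :=
  LHom.isExpansionOn_reduct _ _

instance sumInr_isExpansionOn_bundled (M : Bundled.{w} (L'.sum L).Structure) :
    (LHom.sumInr : L →ᴸ L'.sum L).IsExpansionOn M :=
  LHom.isExpansionOn_reduct _ _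

end SumLanguage

section MarkedCopies

variable {L : FirstOrder.Language.{u, v}} {U : Type w} [L.Structure U] {S : Set (U ↪[L] U)}

/-- The isomorphic copies of `U` equipped with a marking that witnesses their homogeneity. -/
def markedCopies (L : FirstOrder.Language.{u, v}) (U : Type w) [L.Structure U] :
    Set (Bundled.{w} (L.sum markLanguage).Structure) :=
  {M | Nonempty (M ≃[L] U) ∧ IsHomogeneityMarking L M}

theorem LocallyIn.isLocallyCopyOf {B : Bundled.{w} (L.sum markLanguage).Structure}
    (h : LocallyIn (markedCopies L U) B) : IsLocallyCopyOf L U B := by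
  choose M hM e he using h
  exact .of_forall_finset (fun s => embeddingReduct LHom.sumInl (e s)) (fun s => ⟨s, he s⟩)
    fun s => (hM s).1

theorem LocallyIn.isHomogeneityMarking {B : Bundled.{w} (L.sum markLanguage).Structure}
    (h : LocallyIn (markedCopies L U) B) : IsHomogeneityMarking L B :=
  .of_forall_finset fun s =>
    let ⟨M, hM, e, he⟩ := h s
    ⟨M, inferInstance, inferInstance, embeddingReduct LHom.sumInl e,
      embeddingReduct LHom.sumInr e, rfl, he, hM.2⟩

theorem IsAmalgamationMonoid.exists_marked_extension [Countable U] (hU : L.IsUltrahomogeneous U)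
    (hS : IsAmalgamationMonoid S) (haut : ∀ g : U ≃[L] U, g.toEmbedding ∈ S)
    (hne : ∃ e ∈ S, ¬ Function.Surjective e) {M : Type w} [L.Structure M]
    [markLanguage.Structure M] (t : M ≃[L] U) (hM : IsHomogeneityMarking L M) :
    ∃ (V : Type w) (_ : L.Structure V) (_ : markLanguage.Structure V),
      Nonempty (V ≃[L] U) ∧ IsHomogeneityMarking L V ∧
        ∃ (e : M ↪[L] V) (e' : M ↪[markLanguage] V), ⇑e' = e ∧ ¬ Function.Surjective e := by
  have : Countable M := t.toEquiv.countable_iff.2 inferInstance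
  choose g hg using @hM.exists_equiv
  let conj (p : Σ n, Fin (n + n) → M) : U ≃[L] U := (t.comp (g p.2)).comp t.symm
  obtain ⟨V, _, ⟨r⟩, e, he, hext⟩ :=
    hS.exists_proper_extension hU haut hne (Set.countable_range conj)
  obtain ⟨_, hV, e', he'⟩ := hM.exists_extension (isUltrahomogeneous_of_equiv r.symm hU)
    (e.comp t.toEmbedding) fun {n} w => by
      obtain ⟨g', hg'⟩ := hext _ ⟨⟨n, w⟩, rfl⟩
      refine ⟨g', fun z => (DFunLike.congr_fun hg' (t z)).trans ?_⟩
      change e (t (g w (t.symm (t z)))) = e (t (transport w z))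
      rw [t.symm_apply_apply, hg]
  exact ⟨V, _, _, ⟨r⟩, hV, _, e', he', fun h => he (Function.Surjective.of_comp h)⟩

theorem IsAmalgamationMonoid.isExtendibleClass_markedCopies [Countable U]
    (hU : L.IsUltrahomogeneous U) (hS : IsAmalgamationMonoid S)
    (haut : ∀ g : U ≃[L] U, g.toEmbedding ∈ S) (hne : ∃ e ∈ S, ¬ Function.Surjective e) :
    IsExtendibleClass (markedCopies L U) where
  nonempty := by
    obtain ⟨_, h⟩ := exists_isHomogeneityMarking hU
    exact ⟨Bundled.of (c := (L.sum markLanguage).Structure) U, ⟨Language.Equiv.refl L U⟩, h⟩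
  countable M hM := hM.1.elim fun t => t.toEquiv.countable_iff.2 inferInstance
  mem_of_locallyIn B _ _ hB :=
    have hB' : LocallyIn (markedCopies L U) (Bundled.of (c := (L.sum markLanguage).Structure) B) :=
      hB
    have : Countable (Bundled.of (c := (L.sum markLanguage).Structure) B) := ‹Countable B›
    ⟨hB'.isLocallyCopyOf.nonempty_equiv hU, hB'.isHomogeneityMarking⟩
  exists_proper_extension M hM := by
    obtain ⟨⟨t⟩, hM⟩ := hM
    obtain ⟨V, _, _, hVU, hV, e, e', he, hsurj⟩ :=
      hS.exists_marked_extension hU haut hne t hM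
    let f : M ↪[L.sum markLanguage] V := sumEmbedding e e' he
    exact ⟨Bundled.of (c := (L.sum markLanguage).Structure) V, ⟨hVU, hV⟩, f, hsurj⟩

end MarkedCopies

theorem statement1_general (L : FirstOrder.Language.{u, v})
    (U : Type w) [L.Structure U] [Countable U]
    (hU : L.IsUltrahomogeneous U)
    (S : Set (U ↪[L] U)) (hS : IsAmalgamationMonoid S)
    (haut : ∀ g : U ≃[L] U, g.toEmbedding ∈ S)
    (hne : ∃ e ∈ S, ¬ Function.Surjective e) :
    ∃ W : Bundled.{w} L.Structure, #W = aleph 1 ∧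
      L.IsUltrahomogeneous W ∧ L.age W = L.age U ∧
      ∃ C : {o : Ordinal.{0} // o < (aleph 1).ord} → L.Substructure W,
        Monotone C ∧ (⨆ o, C o = (⊤ : L.Substructure W)) ∧
        ∀ o, Nonempty ((C o) ≃[L] U) := by
  have := uncountable_lt_ord_aleph_one.{0}
  obtain ⟨W, hcard, C, C_mono, hC, hCK⟩ :=
    (hS.isExtendibleClass_markedCopies hU haut hne).exists_aleph_one_union
      countable_Iio_of_lt_ord_aleph_one
  have : Nonempty {o : Ordinal.{0} // o < (aleph 1).ord} := inferInstance
  have hW : LocallyIn (markedCopies L U) W := .of_iSup_eq_top C_mono.directed_le hC hCK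
  let φ : L →ᴸ L.sum markLanguage := LHom.sumInl
  exact ⟨Bundled.of (c := L.Structure) W, hcard, hW.isHomogeneityMarking.isUltrahomogeneous,
    hW.isLocallyCopyOf.age_eq, _, (φ.substructureReduct (M := W)).monotone.comp C_mono,
    iSup_substructureReduct_eq_top φ C_mono.directed_le hC, fun o => (hCK o).1⟩

/-- If `U` is a countable ultrahomogeneous structure in a countable language
and `S` is a set of self-embeddings of `U` containing the identity and all automorphisms,
closed under composition, containing a non-surjective embedding, and having the amalgamation
property, then there is an ultrahomogeneous structure `W` of cardinality `ℵ₁` with the same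
age as `U` which is the union of an increasing chain, indexed by the countable ordinals,
of substructures isomorphic to `U`. -/
theorem statement1 (L : FirstOrder.Language.{0, 0}) [Countable L.Symbols]
    (U : Type) [L.Structure U] [Countable U]
    (hU : L.IsUltrahomogeneous U)
    (S : Set (U ↪[L] U))
    (hid : Embedding.refl L U ∈ S)
    (haut : ∀ g : U ≃[L] U, g.toEmbedding ∈ S)
    (hcomp : ∀ f ∈ S, ∀ g ∈ S, Embedding.comp f g ∈ S)
    (hne : ∃ e ∈ S, ¬ Function.Surjective e)
    (hAP : ∀ f ∈ S, ∀ g ∈ S, ∃ f' ∈ S, ∃ g' ∈ S,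
      Embedding.comp f' f = Embedding.comp g' g) :
    ∃ W : Bundled.{0} L.Structure, #W = aleph 1 ∧
      L.IsUltrahomogeneous W ∧ L.age W = L.age U ∧
      ∃ C : {o : Ordinal.{0} // o < (aleph 1).ord} → L.Substructure W,
        Monotone C ∧ (⨆ o, C o = (⊤ : L.Substructure W)) ∧
        ∀ o, Nonempty ((C o) ≃[L] U) := by
  exact statement1_general L U hU S ⟨hid, hcomp, hAP⟩ haut hne
end

section
/- Let L be a countable first-order language, let F be a Fraïssé class of L-structures and let U be its Fraïssé limit. Then the following are equivalent: (1) there exists a self-embedding e : U → U that is not surjective; (2) there exists an uncountable L-structure X that is injective and whose age equals F. -/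
open FirstOrder Language Cardinal CategoryTheory

/-!
Injectivity makes a structure a universal target: any countable structure whose age is small enough
embeds into it, and by back-and-forth two countable injective structures of the same age are
isomorphic. So `U` embeds into an uncountable injective structure `X` of the same age. This
embedding misses a point `x`. The substructure generated by its image and `x` is a countable union
of finitely generated substructures, each of which embeds into `U`, so it is countable and embeds
back into `U`; the composite misses the image of `x`.

Conversely, a non-surjective self-embedding of `U` gives every countable injective structure of the
same age a proper extension isomorphic to `U`. Injectivity and the age survive direct limits, so
Zorn's lemma, applied to such structures carried by subsets of a fixed set of size `ℵ₁` and ordered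
by extension, yields one that is uncountable.
-/

universe u v w x

theorem exists_injective_extension {α β : Type u} {Ω : Type v} {j : α → β} {f : α → Ω}
    (hj : Function.Injective j) (hf : Function.Injective f)
    (hcard : lift.{v} #β ≤ lift.{u} #((Set.range f)ᶜ : Set Ω)) :
    ∃ g : β → Ω, Function.Injective g ∧ ∀ a, g (j a) = f a := by
  obtain ⟨d⟩ := Cardinal.lift_mk_le'.1 hcard
  have hnew : ∀ b, b ∉ Set.range j → Function.extend j f (fun b => d b) b = d b :=
    fun b hb => Function.extend_apply' _ _ b hb
  refine ⟨Function.extend j f fun b => d b, fun b c hbc => ?_, hj.extend_apply _ _⟩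
  by_cases hb : b ∈ Set.range j <;> by_cases hc : c ∈ Set.range j
  · obtain ⟨a, rfl⟩ := hb
    obtain ⟨a', rfl⟩ := hc
    rw [hj.extend_apply, hj.extend_apply] at hbc
    rw [hf hbc]
  · obtain ⟨a, rfl⟩ := hb
    rw [hj.extend_apply, hnew c hc] at hbc
    exact absurd ⟨a, hbc⟩ (d c).2
  · obtain ⟨a, rfl⟩ := hc
    rw [hj.extend_apply, hnew b hb] at hbc
    exact absurd ⟨a, hbc.symm⟩ (d b).2
  · rw [hnew b hb, hnew c hc] at hbc
    exact d.injective (Subtype.ext hbc)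

section Closure

variable {L : FirstOrder.Language.{u, v}} {X : Type w} [L.Structure X]

theorem mem_closure_iff_exists_finset {s : Set X} {a : X} :
    a ∈ Substructure.closure L s ↔
      ∃ t : Finset s, a ∈ Substructure.closure L (Subtype.val '' (t : Set s)) := by
  classical
  have hmono : Monotone fun t : Finset s => Substructure.closure L (Subtype.val '' (t : Set s)) :=
    fun t t' h => Substructure.closure_mono (Set.image_mono h)
  have hs : s = ⋃ t : Finset s, Subtype.val '' (t : Set s) := by
    ext b
    simp only [Set.mem_iUnion, Set.mem_image, Subtype.exists, exists_and_right, exists_eq_right]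
    exact ⟨fun hb => ⟨{⟨b, hb⟩}, hb, by simp⟩, fun ⟨_, hb, _⟩ => hb⟩
  conv_lhs => rw [hs, Substructure.closure_iUnion]
  exact Substructure.mem_iSup_of_directed hmono.directed_le

theorem countable_closure_of_forall_mem_age (h : ∀ A ∈ L.age X, Countable A) {s : Set X}
    (hs : s.Countable) : Countable (Substructure.closure L s) := by
  have := hs.to_subtype
  have hunion : (Substructure.closure L s : Set X) =
      ⋃ t : Finset s, (Substructure.closure L (Subtype.val '' (t : Set s)) : Set X) := by
    ext a
    simpa only [Set.mem_iUnion, SetLike.mem_coe] using mem_closure_iff_exists_finset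
  refine Set.Countable.to_subtype (hunion ▸ Set.countable_iUnion fun t => ?_)
  exact h _ (age.fg_substructure (Substructure.fg_closure (t.finite_toSet.image _)))

end Closure

section DirectLimit

variable {L : FirstOrder.Language.{u, v}} {ι : Type w} [Preorder ι] [IsDirectedOrder ι] [Nonempty ι]
  {G : ι → Type x} [∀ i, L.Structure (G i)] {f : ∀ i j, i ≤ j → G i ↪[L] G j}
  [DirectedSystem G fun i j h => f i j h]

theorem exists_of_comp_eq_of_fg {A : Type*} [L.Structure A] (hA : Structure.FG L A)
    (e : A ↪[L] Language.DirectLimit G f) :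
    ∃ (i : ι) (e' : A ↪[L] G i), (DirectLimit.of L ι G f i).comp e' = e := by
  obtain ⟨i, T, hT⟩ :=
    Language.DirectLimit.exists_fg_substructure_in_Sigma e.toHom.range (hA.range e.toHom)
  let o := DirectLimit.of L ι G f i
  have hle : e.toHom.range ≤ o.toHom.range := by
    rw [← hT, Hom.range_eq_map]
    exact Substructure.monotone_map le_top
  refine ⟨i, o.equivRange.symm.toEmbedding.comp
    ((Substructure.inclusion hle).comp e.equivRange.toEmbedding), ?_⟩
  ext a
  exact congrArg Subtype.val
    (o.equivRange.apply_symm_apply (Substructure.inclusion hle (e.equivRange a)))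

theorem exists_injective_directLimit {Ω : Type*} (φ : ∀ i, G i → Ω)
    (hφ : ∀ i, Function.Injective (φ i)) (hcompat : ∀ i j h a, φ j (f i j h a) = φ i a) :
    ∃ ψ : Language.DirectLimit G f → Ω, Function.Injective ψ ∧
      ∀ i a, ψ (DirectLimit.of L ι G f i a) = φ i a := by
  have of_eq_of_iff : ∀ i j a b,
      DirectLimit.of L ι G f i a = DirectLimit.of L ι G f j b ↔ φ i a = φ j b := by
    intro i j a b
    obtain ⟨k, hik, hjk⟩ := exists_ge_ge i j
    rw [← Language.DirectLimit.of_f (hij := hik), ← Language.DirectLimit.of_f (hij := hjk),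
      (DirectLimit.of L ι G f k).injective.eq_iff, ← hcompat i k hik, ← hcompat j k hjk,
      (hφ k).eq_iff]
  choose idx rep hrep using Language.DirectLimit.exists_of (f := f)
  refine ⟨fun z => φ (idx z) (rep z), fun y z h => ?_, fun i a => ?_⟩
  · rw [← hrep y, ← hrep z]
    exact (of_eq_of_iff _ _ _ _).2 h
  · exact (of_eq_of_iff _ _ _ _).1 (hrep _)

end DirectLimit

section Injective

variable {L : FirstOrder.Language.{u, v}} {X Y : Type w} [L.Structure X] [L.Structure Y]

variable (L X) in
/-- A structure is injective if embeddings into it extend along embeddings between members of its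
age. The inclusion `A ⊆ B` of the classical definition is replaced by an arbitrary embedding. -/
def IsInjectiveStructure : Prop :=
  ∀ A B : Bundled.{w} L.Structure, A ∈ L.age X → B ∈ L.age X →
    ∀ (i : A ↪[L] B) (e : A ↪[L] X), ∃ g : B ↪[L] X, g.comp i = e

namespace IsInjectiveStructure

theorem of_isUltrahomogeneous (hX : L.IsUltrahomogeneous X) : IsInjectiveStructure L X := by
  intro A B hA hB i e
  obtain ⟨g, hg⟩ := hX.extend_embedding hA.1 (h := hB.2) e i
  exact ⟨g, hg.symm⟩

theorem of_equiv (hX : IsInjectiveStructure L X) (q : X ≃[L] Y) : IsInjectiveStructure L Y := by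
  intro A B hA hB i e
  rw [← q.age_eq_age] at hA hB
  obtain ⟨g, hg⟩ := hX A B hA hB i (q.symm.toEmbedding.comp e)
  refine ⟨q.toEmbedding.comp g, ?_⟩
  ext a
  have hga : g (i a) = q.symm (e a) := DFunLike.congr_fun hg a
  simp [hga]

theorem isExtensionPair (hY : IsInjectiveStructure L Y) (h : L.age X ⊆ L.age Y) :
    L.IsExtensionPair X Y := by
  refine isExtensionPair_iff_exists_embedding_closure_singleton_sup.2 fun S hS e m => ?_
  obtain ⟨g, hg⟩ := hY ⟨S, inferInstance⟩ ⟨_, inferInstance⟩ (h (age.fg_substructure hS))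
    (h (age.fg_substructure ((Substructure.fg_closure_singleton m).sup hS)))
    (Substructure.inclusion le_sup_right) e
  exact ⟨g, hg.symm⟩

theorem nonempty_embedding (hY : IsInjectiveStructure L Y) (hX : Structure.CG L X)
    (h : L.age X ⊆ L.age Y) : Nonempty (X ↪[L] Y) := by
  obtain ⟨e⟩ := (h (age.fg_substructure Substructure.fg_bot)).2
  exact ⟨(embedding_from_cg hX ⟨⟨⊥, _, e.equivRange⟩, Substructure.fg_bot⟩
    (hY.isExtensionPair h)).choose⟩

theorem nonempty_equiv (hX : IsInjectiveStructure L X) (hY : IsInjectiveStructure L Y)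
    (hXcg : Structure.CG L X) (hYcg : Structure.CG L Y) (h : L.age X = L.age Y) :
    Nonempty (X ≃[L] Y) := by
  obtain ⟨e⟩ := (h.subset (age.fg_substructure Substructure.fg_bot)).2
  exact ⟨(equiv_between_cg hXcg hYcg ⟨⟨⊥, _, e.equivRange⟩, Substructure.fg_bot⟩
    (hY.isExtensionPair h.subset) (hX.isExtensionPair h.superset)).choose⟩

theorem directLimit {ι : Type w} [Preorder ι] [IsDirectedOrder ι] [Nonempty ι]
    {G : ι → Type (max w x)} [∀ i, L.Structure (G i)] {f : ∀ i j, i ≤ j → G i ↪[L] G j}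
    [DirectedSystem G fun i j h => f i j h] (hG : ∀ i, IsInjectiveStructure L (G i)) :
    IsInjectiveStructure L (Language.DirectLimit G f) := by
  rintro A B ⟨hA, -⟩ ⟨hB, ⟨r⟩⟩ i e
  obtain ⟨j, e', rfl⟩ := exists_of_comp_eq_of_fg hA e
  obtain ⟨k, r', -⟩ := exists_of_comp_eq_of_fg hB r
  obtain ⟨l, hjl, hkl⟩ := exists_ge_ge j k
  let eₗ : A ↪[L] G l := (f j l hjl).comp e'
  obtain ⟨g, hg⟩ := hG l A B ⟨hA, ⟨eₗ⟩⟩ ⟨hB, ⟨(f k l hkl).comp r'⟩⟩ i eₗ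
  refine ⟨(DirectLimit.of L ι G f l).comp g, ?_⟩
  rw [Embedding.comp_assoc, hg]
  ext a
  exact Language.DirectLimit.of_f

end IsInjectiveStructure

theorem exists_embedding_not_surjective_of_not_countable [Countable Y]
    (hX : IsInjectiveStructure L X) (hXu : ¬ Countable X) (hY : IsInjectiveStructure L Y)
    (h : L.age X = L.age Y) : ∃ e : Y ↪[L] Y, ¬ Function.Surjective e := by
  obtain ⟨f⟩ := hX.nonempty_embedding (Structure.cg_of_countable (M := Y)) h.superset
  obtain ⟨a, ha⟩ : ∃ a, a ∉ Set.range f := by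
    by_contra! hf
    exact hXu (Function.Surjective.countable hf)
  let S := Substructure.closure L (insert a (Set.range f))
  have haS : a ∈ S := Substructure.subset_closure (Set.mem_insert _ _)
  have hfS : ∀ y, f y ∈ S := fun y =>
    Substructure.subset_closure (Set.mem_insert_of_mem _ (Set.mem_range_self y))
  have hage : ∀ A ∈ L.age X, Countable A := by
    rintro A hA
    obtain ⟨e⟩ := (h.subset hA).2
    exact e.injective.countable
  have : Countable S :=
    countable_closure_of_forall_mem_age hage ((Set.countable_range f).insert a)
  obtain ⟨g⟩ := hY.nonempty_embedding (Structure.cg_of_countable (M := S))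
    (S.subtype.age_subset_age.trans h.subset)
  refine ⟨g.comp (f.codRestrict S hfS), fun hsurj => ha ?_⟩
  obtain ⟨y, hy⟩ := hsurj (g ⟨a, haS⟩)
  exact ⟨y, congrArg Subtype.val (g.injective hy)⟩

end Injective

section MaximalExtension

variable {L : FirstOrder.Language.{u, u}} {K : Set (Bundled.{u} L.Structure)} {Ω : Type u}

/-- A class of structures is closed under direct limits. This is the hypothesis on a class that
makes Zorn's lemma applicable to its members, ordered by extension. -/
def ClosedUnderDirectLimits (K : Set (Bundled.{u} L.Structure)) : Prop :=
  ∀ {ι : Type u} [Preorder ι] [IsDirectedOrder ι] [Nonempty ι] (G : ι → Type u)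
    [∀ i, L.Structure (G i)] (f : ∀ i j, i ≤ j → G i ↪[L] G j)
    [DirectedSystem G fun i j h => f i j h],
    (∀ i, Bundled.of (c := L.Structure) (G i) ∈ K) →
      Bundled.of (c := L.Structure) (Language.DirectLimit G f) ∈ K

variable (K Ω) in
/-- A member of `K` carried by a subset of `Ω`. Fixing the ambient set turns the proper class of
members of `K` into a type to which Zorn's lemma applies. -/
structure SubsetModel where
  carrier : Set Ω
  [str : L.Structure carrier]
  mem : Bundled.of (c := L.Structure) carrier ∈ K

namespace SubsetModel

attribute [instance] SubsetModel.str

instance : Preorder (SubsetModel K Ω) where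
  le M N := ∃ f : M.carrier ↪[L] N.carrier, ∀ a, (f a : Ω) = a
  le_refl M := ⟨Embedding.refl L _, fun _ => rfl⟩
  le_trans _ _ _ := fun ⟨f, hf⟩ ⟨g, hg⟩ => ⟨g.comp f, fun a => (hg (f a)).trans (hf a)⟩

theorem exists_equiv (hiso : ∀ M N : Bundled.{u} L.Structure, Nonempty (M ≃[L] N) → M ∈ K → N ∈ K)
    {M : Bundled.{u} L.Structure} (hM : M ∈ K) {φ : M → Ω} (hφ : Function.Injective φ) :
    ∃ (N : SubsetModel K Ω) (q : M ≃[L] N.carrier), ∀ a, (q a : Ω) = φ a := by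
  let E := _root_.Equiv.ofInjective φ hφ
  let _ : L.Structure (Set.range φ) := E.inducedStructure
  let q : M ≃[L] Set.range φ := E.inducedStructureEquiv
  exact ⟨⟨Set.range φ, hiso M _ ⟨q⟩ hM⟩, q, fun _ => rfl⟩

theorem bddAbove_of_isChain
    (hiso : ∀ M N : Bundled.{u} L.Structure, Nonempty (M ≃[L] N) → M ∈ K → N ∈ K)
    (hlim : ClosedUnderDirectLimits K) {c : Set (SubsetModel K Ω)} (hc : IsChain (· ≤ ·) c)
    (hne : c.Nonempty) : BddAbove c := by
  have : Nonempty c := hne.to_subtype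
  have : IsDirectedOrder c := ⟨hc.directed⟩
  let G : c → Type u := fun M => M.1.carrier
  let _ : ∀ M, L.Structure (G M) := fun M => M.1.str
  have hle : ∀ M N : c, M ≤ N → ∃ f : G M ↪[L] G N, ∀ a, (f a).1 = a.1 := fun _ _ h => h
  choose f hf using hle
  have : DirectedSystem G fun M N h => f M N h :=
    ⟨fun _ _ => Subtype.ext (hf _ _ _ _), fun _ _ _ _ _ _ => Subtype.ext (by simp only [hf])⟩
  obtain ⟨ψ, hψ, hψof⟩ := exists_injective_directLimit (f := f) (fun M (a : G M) => a.1)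
    (fun _ => Subtype.val_injective) hf
  obtain ⟨N, q, hq⟩ := exists_equiv hiso (hlim G f fun M => M.1.mem) hψ
  exact ⟨N, fun M hM => ⟨q.toEmbedding.comp (DirectLimit.of L c G f ⟨M, hM⟩),
    fun a => (hq _).trans (hψof ⟨M, hM⟩ a)⟩⟩

theorem exists_not_le (hiso : ∀ M N : Bundled.{u} L.Structure, Nonempty (M ≃[L] N) → M ∈ K → N ∈ K)
    (M : SubsetModel K Ω) {N : Bundled.{u} L.Structure} (hN : N ∈ K)
    (hcard : #N ≤ #(M.carrierᶜ : Set Ω)) {j : M.carrier ↪[L] N} (hj : ¬ Function.Surjective j) :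
    ∃ N' : SubsetModel K Ω, M ≤ N' ∧ ¬ N' ≤ M := by
  obtain ⟨φ, hφ, hφj⟩ := exists_injective_extension (f := ((↑) : M.carrier → Ω)) j.injective
    Subtype.val_injective (by simpa only [Subtype.range_coe, lift_id] using hcard)
  obtain ⟨N', q, hq⟩ := exists_equiv hiso hN hφ
  refine ⟨N', ⟨q.toEmbedding.comp j, fun a => (hq _).trans (hφj a)⟩, fun ⟨p, hp⟩ => hj fun n => ?_⟩
  exact ⟨p (q n), hφ (by rw [hφj, hp, hq])⟩

end SubsetModel

theorem exists_mem_mk_eq_of_forall_exists_extension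
    (hiso : ∀ M N : Bundled.{u} L.Structure, Nonempty (M ≃[L] N) → M ∈ K → N ∈ K)
    (hlim : ClosedUnderDirectLimits K) {κ : Cardinal.{u}} (hκ : ℵ₀ ≤ κ)
    (hne : ∃ M ∈ K, #M ≤ κ)
    (hext : ∀ M ∈ K, #M < κ → ∃ N ∈ K, #N ≤ κ ∧ ∃ j : M ↪[L] N, ¬ Function.Surjective j) :
    ∃ M ∈ K, #M = κ := by
  induction κ using Cardinal.inductionOn with | mk Ω
  have : Infinite Ω := infinite_iff.2 hκ
  obtain ⟨M₀, hM₀, ⟨φ⟩⟩ := hne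
  have : Nonempty (SubsetModel K Ω) := ⟨(SubsetModel.exists_equiv hiso hM₀ φ.injective).choose⟩
  obtain ⟨M, hmax⟩ := zorn_le_nonempty (α := SubsetModel K Ω) fun c =>
    SubsetModel.bddAbove_of_isChain hiso hlim
  refine ⟨_, M.mem, (mk_set_le M.carrier).eq_of_not_lt fun hlt => ?_⟩
  obtain ⟨N, hN, hNcard, j, hj⟩ := hext _ M.mem hlt
  obtain ⟨N', hle, hnle⟩ :=
    M.exists_not_le hiso hN (hNcard.trans_eq (mk_compl_of_infinite _ hlt).symm) hj
  exact hnle (hmax hle)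

theorem closedUnderDirectLimits_isInjectiveStructure (K : Set (Bundled.{u} L.Structure)) :
    ClosedUnderDirectLimits {M : Bundled.{u} L.Structure |
      IsInjectiveStructure L M ∧ L.age M = K} := by
  intro ι _ _ _ G _ f _ hG
  refine ⟨.directLimit fun i => (hG i).1, ?_⟩
  rw [← Set.iUnion_const (ι := ι) K, ← Set.iUnion_congr fun i => (hG i).2]
  exact age_directLimit G f

theorem exists_isInjectiveStructure_mk_eq_aleph_one {U : Type u} [L.Structure U] [Countable U]
    (hU : IsInjectiveStructure L U) {e : U ↪[L] U} (he : ¬ Function.Surjective e) :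
    ∃ X : Bundled.{u} L.Structure, #X = ℵ₁ ∧ IsInjectiveStructure L X ∧ L.age X = L.age U := by
  have hUcard : #U ≤ ℵ₁ := mk_le_aleph0.trans aleph0_lt_aleph_one.le
  obtain ⟨X, hX, hXcard⟩ := exists_mem_mk_eq_of_forall_exists_extension
    (fun M N ⟨q⟩ hM => ⟨hM.1.of_equiv q, q.age_eq_age.symm.trans hM.2⟩)
    (closedUnderDirectLimits_isInjectiveStructure (L.age U)) aleph0_lt_aleph_one.le
    ⟨Bundled.of U, ⟨hU, rfl⟩, hUcard⟩ fun M ⟨hM, hage⟩ hcard => by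
      have : Countable M := mk_le_aleph0_iff.1 (lt_aleph_one_iff.1 hcard)
      obtain ⟨q⟩ := hM.nonempty_equiv hU Structure.cg_of_countable Structure.cg_of_countable hage
      exact ⟨Bundled.of U, ⟨hU, rfl⟩, hUcard, e.comp q.toEmbedding,
        fun h => he (Function.Surjective.of_comp h)⟩
  exact ⟨X, hXcard, hX⟩

end MaximalExtension

theorem statement3_general {L : FirstOrder.Language.{u, u}} {U : Type u} [L.Structure U]
    [Countable U] (hU : L.IsUltrahomogeneous U) :
    (∃ e : U ↪[L] U, ¬ Function.Surjective e) ↔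
      ∃ X : Bundled.{u} L.Structure, ¬ Countable X ∧ IsInjectiveStructure L X ∧
        L.age X = L.age U := by
  have hUinj := IsInjectiveStructure.of_isUltrahomogeneous hU
  constructor
  · rintro ⟨e, he⟩
    obtain ⟨X, hcard, hX⟩ := exists_isInjectiveStructure_mk_eq_aleph_one hUinj he
    exact ⟨X, not_countable_iff.2 (aleph0_lt_mk_iff.1 (hcard ▸ aleph0_lt_aleph_one)), hX⟩
  · rintro ⟨X, hXu, hX, hage⟩
    exact exists_embedding_not_surjective_of_not_countable hX hXu hUinj hage

/-- For a Fraïssé class `K` with Fraïssé limit `U` in a countable language,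
there exists a non-surjective self-embedding of `U` if and only if there exists an uncountable
injective structure whose age is `K`. -/
theorem statement3 (L : FirstOrder.Language.{0, 0}) [Countable L.Symbols]
    (K : Set (Bundled.{0} L.Structure)) [IsFraisse K]
    (U : Type) [L.Structure U] [Countable U]
    (hU : IsFraisseLimit K U) :
    (∃ e : U ↪[L] U, ¬ Function.Surjective e) ↔
      ∃ X : Bundled.{0} L.Structure, ¬ Countable X ∧
        (∀ (A B : Bundled.{0} L.Structure), A ∈ L.age X → B ∈ L.age X →
          ∀ (i : A ↪[L] B) (e : A ↪[L] X), ∃ g : B ↪[L] X, g.comp i = e) ∧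
        L.age X = K := by
  exact hU.age ▸ statement3_general hU.ultrahomogeneous
end

section
/- Let L be a finite relational first-order language, let F be a Fraïssé class of L-structures whose Fraïssé limit U is infinite, and let p be a non-principal ultrafilter on ℕ. Then the ultrapower U^ℕ/p is ultrahomogeneous, has cardinality 2^ℵ₀, and its age equals F. -/
open FirstOrder Language Cardinal CategoryTheory Filter

/-!
In a finite relational language the isomorphism type of a finite tuple is given by finitely many
atomic conditions, and an ultrafilter decides each of them coordinatewise. So a map from a finite
structure into an ultraproduct is an embedding iff almost all of its coordinate maps are. This
yields the age at once, and ultrahomogeneity after extending almost every coordinate of a partial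
isomorphism to an automorphism and taking the ultraproduct of these automorphisms.

For the cardinality, a free ultrafilter on a countable index set carries an index function `h`
tending to infinity. Sending a binary sequence `x` to the class of `i ↦ x|_{h i}`, with finite
binary words coded in the `i`-th factor, is injective, since two distinct sequences have distinct
initial segments of all sufficiently large lengths.
-/

universe u v w z

section Embeddings

variable {L : FirstOrder.Language.{u, v}}

theorem exists_embedding_coe_eq_iff [L.IsRelational] {M : Type w} {N : Type z} [L.Structure M]
    [L.Structure N] (r : N → M) :
    (∃ f : N ↪[L] M, ⇑f = r) ↔
      (∀ x y, r x = r y → x = y) ∧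
        ∀ (R : Σ k, L.Relations k) (x : Fin R.1 → N),
          Structure.RelMap R.2 (fun j => r (x j)) ↔ Structure.RelMap R.2 x := by
  constructor
  · rintro ⟨f, rfl⟩
    exact ⟨f.injective, fun R x => f.map_rel R.2 x⟩
  · rintro ⟨hinj, hrel⟩
    exact ⟨{ toFun := r
             inj' := fun x y => hinj x y
             map_fun' := fun f => isEmptyElim f
             map_rel' := fun R x => hrel ⟨_, R⟩ x }, rfl⟩

theorem exists_equiv_apply_embedding_eq {M : Type w} {N : Type z} [L.Structure M]
    [L.Structure N] (hM : L.IsUltrahomogeneous M) (hN : Structure.FG L N) (f g : N ↪[L] M) :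
    ∃ σ : M ≃[L] M, ∀ x, σ (f x) = g x := by
  obtain ⟨σ, hσ⟩ := hM f.toHom.range (hN.range f.toHom) (g.comp f.equivRange.symm.toEmbedding)
  refine ⟨σ, fun x => ?_⟩
  simpa using (DFunLike.congr_fun hσ (f.equivRange x)).symm

end Embeddings

section FilterProduct

variable {ι : Type w} {M : ι → Type z}

/-- The class of a family in a filter product. Mathlib's coercion to the filter product has the
underlying quotient as its type; this one has `Filter.Product`, which carries the `L`-structure. -/
def filterProductMk (l : Filter ι) (x : ∀ i, M i) : l.Product M :=
  Quotient.mk'' x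

theorem filterProductMk_surjective (l : Filter ι) :
    Function.Surjective (filterProductMk l : (∀ i, M i) → l.Product M) :=
  Quotient.mk''_surjective

theorem filterProductMk_eq_iff {l : Filter ι} {x y : ∀ i, M i} :
    filterProductMk l x = filterProductMk l y ↔ ∀ᶠ i in l, x i = y i :=
  Quotient.eq''

theorem continuum_le_mk_filterProduct [∀ i, Infinite (M i)] {l : Filter ι} [l.NeBot] {h : ι → ℕ}
    (hh : Tendsto h l atTop) : 𝔠 ≤ #(l.Product M) := by
  let code (i : ι) (b : List Bool) : M i := Infinite.natEmbedding (M i) (Encodable.encode b)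
  have code_injective (i : ι) : Function.Injective (code i) :=
    (Infinite.natEmbedding (M i)).injective.comp Encodable.encode_injective
  let F (x : ℕ → Bool) : l.Product M := filterProductMk l fun i => code i ((List.range (h i)).map x)
  have F_injective : Function.Injective F := by
    intro x y hxy
    funext k
    obtain ⟨i, hi, hki⟩ :=
      ((filterProductMk_eq_iff.1 hxy).and (hh.eventually_gt_atTop k)).exists
    exact List.map_inj_left.1 (code_injective i hi) k (List.mem_range.2 hki)
  simpa using lift_mk_le_lift_mk_of_injective F_injective

theorem mk_filterProduct_le_continuum [Countable ι] (hM : ∀ i, #(M i) ≤ 𝔠) (l : Filter ι) :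
    #(l.Product M) ≤ 𝔠 :=
  calc #(l.Product M) ≤ #(∀ i, M i) := mk_le_of_surjective (filterProductMk_surjective l)
    _ = prod fun i => #(M i) := mk_pi M
    _ ≤ prod fun _ : ι => 𝔠 := prod_le_prod _ _ hM
    _ = 𝔠 ^ lift.{z} #ι := by rw [prod_const, lift_continuum]
    _ ≤ 𝔠 ^ ℵ₀ := power_le_power_left continuum_ne_zero (lift_le_aleph0.2 mk_le_aleph0)
    _ = 𝔠 := continuum_power_aleph0

theorem mk_ultraproduct_eq_continuum [Countable ι] [∀ i, Infinite (M i)] (hM : ∀ i, #(M i) ≤ 𝔠)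
    {p : Ultrafilter ι} (hp : ∀ i, p ≠ pure i) : #((p : Filter ι).Product M) = 𝔠 := by
  obtain ⟨h, h_injective⟩ := exists_injective_nat ι
  have p_le_cofinite : (p : Filter ι) ≤ cofinite :=
    p.le_cofinite_or_eq_pure.resolve_right fun ⟨i, hi⟩ => hp i hi
  have h_tendsto : Tendsto h p atTop :=
    Nat.cofinite_eq_atTop ▸ h_injective.tendsto_cofinite.mono_left p_le_cofinite
  exact (mk_filterProduct_le_continuum hM p).antisymm (continuum_le_mk_filterProduct h_tendsto)

end FilterProduct

section Ultraproduct

variable {L : FirstOrder.Language.{u, v}} {ι : Type w} {M : ι → Type z} [∀ i, L.Structure (M i)]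
  (p : Ultrafilter ι)

theorem funMap_filterProductMk {k : ℕ} (F : L.Functions k) (x : Fin k → ∀ i, M i) :
    Structure.funMap F (fun j => filterProductMk p (x j)) =
      filterProductMk p fun i => Structure.funMap F fun j => x j i :=
  Ultraproduct.funMap_cast F x

theorem relMap_filterProductMk_iff {k : ℕ} (R : L.Relations k) (x : Fin k → ∀ i, M i) :
    Structure.RelMap R (fun j => filterProductMk p (x j)) ↔
      ∀ᶠ i in p, Structure.RelMap R fun j => x j i :=
  relMap_quotient_mk' (s := (p : Filter ι).productSetoid M) R x

/-- The isomorphism of ultraproducts induced by a family of isomorphisms of the factors. -/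
def ultraproductCongr {M' : ι → Type*} [∀ i, L.Structure (M' i)] (σ : ∀ i, M i ≃[L] M' i) :
    ((p : Filter ι).Product M) ≃[L] ((p : Filter ι).Product M') where
  toEquiv := Quotient.congr (Equiv.piCongrRight fun i => (σ i).toEquiv) fun _ _ =>
    eventually_congr (Eventually.of_forall fun i => (σ i).injective.eq_iff.symm)
  map_fun' F x := by
    obtain ⟨y, rfl⟩ := (filterProductMk_surjective (p : Filter ι)).comp_left x
    refine (congrArg (Quotient.congr _ _) (funMap_filterProductMk p F y)).trans
      (Eq.trans ?_ (funMap_filterProductMk p F fun j i => σ i (y j i)).symm)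
    exact congrArg (filterProductMk p) (funext fun i => (σ i).map_fun F fun j => y j i)
  map_rel' R x := by
    obtain ⟨y, rfl⟩ := (filterProductMk_surjective (p : Filter ι)).comp_left x
    refine (relMap_filterProductMk_iff p R fun j i => σ i (y j i)).trans
      (Iff.trans ?_ (relMap_filterProductMk_iff p R y).symm)
    exact eventually_congr (Eventually.of_forall fun i => (σ i).map_rel R fun j => y j i)

theorem ultraproductCongr_filterProductMk {M' : ι → Type*} [∀ i, L.Structure (M' i)]
    (σ : ∀ i, M i ≃[L] M' i) (x : ∀ i, M i) :
    ultraproductCongr p σ (filterProductMk p x) = filterProductMk p fun i => σ i (x i) :=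
  rfl

variable [L.IsRelational] [Finite L.Symbols]

theorem exists_embedding_ultraproduct_coe_eq_iff {N : Type*} [L.Structure N] [Finite N]
    (r : N → ∀ i, M i) :
    (∃ e : N ↪[L] (p : Filter ι).Product M, ⇑e = filterProductMk p ∘ r) ↔
      ∀ᶠ i in p, ∃ f : N ↪[L] M i, ⇑f = fun x => r x i := by
  have : Finite (Σ k, L.Relations k) :=
    Finite.of_injective (β := L.Symbols) Sum.inr Sum.inr_injective
  simp only [exists_embedding_coe_eq_iff, Function.comp_apply, filterProductMk_eq_iff,
    relMap_filterProductMk_iff, iff_iff_implies_and_implies, eventually_and, eventually_all,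
    Ultrafilter.eventually_imp, eventually_const]

theorem nonempty_embedding_ultraproduct_iff [∀ i, Nonempty (M i)] {N : Type*} [L.Structure N]
    [Finite N] :
    Nonempty (N ↪[L] (p : Filter ι).Product M) ↔ ∀ᶠ i in p, Nonempty (N ↪[L] M i) := by
  constructor
  · rintro ⟨e⟩
    obtain ⟨r, hr⟩ := (filterProductMk_surjective (p : Filter ι)).comp_left e
    exact ((exists_embedding_ultraproduct_coe_eq_iff p r).1 ⟨e, hr.symm⟩).mono fun i ⟨f, _⟩ => ⟨f⟩
  · intro h
    have hN : ∀ᶠ i in p, ∃ s : N → M i, ∃ f : N ↪[L] M i, ⇑f = s :=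
      h.mono fun i ⟨f⟩ => ⟨f, f, rfl⟩
    obtain ⟨s, hs⟩ := skolem.1 hN
    obtain ⟨e, _⟩ := (exists_embedding_ultraproduct_coe_eq_iff p fun x i => s i x).2 hs
    exact ⟨e⟩

theorem mem_age_ultraproduct_iff {ι : Type w} {M : ι → Type w} [∀ i, L.Structure (M i)]
    [∀ i, Nonempty (M i)] (p : Ultrafilter ι) (N : Bundled.{w} L.Structure) :
    N ∈ L.age ((p : Filter ι).Product M) ↔ ∀ᶠ i in p, N ∈ L.age (M i) := by
  simp only [age, Set.mem_ofPred_eq, eventually_and, eventually_const]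
  refine and_congr_right fun hN => ?_
  have : Finite N := hN.finite
  exact nonempty_embedding_ultraproduct_iff p

theorem isUltrahomogeneous_ultraproduct (hM : ∀ i, L.IsUltrahomogeneous (M i)) :
    L.IsUltrahomogeneous ((p : Filter ι).Product M) := by
  intro S hS f
  have : Finite S := hS.finite
  obtain ⟨r, hr⟩ := (filterProductMk_surjective (p : Filter ι)).comp_left S.subtype
  obtain ⟨s, hs⟩ := (filterProductMk_surjective (p : Filter ι)).comp_left f
  have exists_σ : ∀ᶠ i in p, ∃ σ : M i ≃[L] M i, ∀ x, σ (r x i) = s x i := by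
    filter_upwards [(exists_embedding_ultraproduct_coe_eq_iff p r).1 ⟨S.subtype, hr.symm⟩,
      (exists_embedding_ultraproduct_coe_eq_iff p s).1 ⟨f, hs.symm⟩] with i ⟨g, hg⟩ ⟨h, hh⟩
    simpa only [hg, hh] using exists_equiv_apply_embedding_eq (hM i) Structure.FG.of_finite g h
  have (i : ι) : Nonempty (M i ≃[L] M i) := ⟨.refl L (M i)⟩
  obtain ⟨σ, hσ⟩ := skolem.1 exists_σ
  refine ⟨ultraproductCongr p σ, Embedding.ext fun x => ?_⟩
  calc f x = filterProductMk p (s x) := (congrFun hs x).symm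
    _ = filterProductMk p fun i => σ i (r x i) :=
      filterProductMk_eq_iff.2 (hσ.mono fun i hi => (hi x).symm)
    _ = ultraproductCongr p σ (filterProductMk p (r x)) :=
      (ultraproductCongr_filterProductMk p σ (r x)).symm
    _ = ultraproductCongr p σ (S.subtype x) := congrArg _ (congrFun hr x)

end Ultraproduct

theorem statement6_general {L : FirstOrder.Language.{u, v}} [L.IsRelational] [Finite L.Symbols]
    {K : Set (Bundled.{w} L.Structure)} {ι : Type w} [Countable ι] {M : ι → Type w}
    [∀ i, L.Structure (M i)] [∀ i, Infinite (M i)] (hM : ∀ i, L.IsUltrahomogeneous (M i))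
    (hage : ∀ i, L.age (M i) = K) (hcard : ∀ i, #(M i) ≤ 𝔠)
    {p : Ultrafilter ι} (hp : ∀ i, p ≠ pure i) :
    L.IsUltrahomogeneous ((p : Filter ι).Product M) ∧
      #((p : Filter ι).Product M) = 2 ^ aleph0 ∧
      L.age ((p : Filter ι).Product M) = K := by
  refine ⟨isUltrahomogeneous_ultraproduct p hM, ?_, ?_⟩
  · rw [mk_ultraproduct_eq_continuum hcard hp, two_power_aleph0]
  · ext N
    simp only [mem_age_ultraproduct_iff, hage, eventually_const]

/-- If `K` is a Fraïssé class in a finite relational language whose Fraïssé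
limit `U` is infinite, and `p` is a non-principal ultrafilter on `ℕ`, then the ultrapower
`U^ℕ/p` is ultrahomogeneous, has cardinality `2^ℵ₀`, and its age is `K`. -/
theorem statement6 (L : FirstOrder.Language.{0, 0}) [L.IsRelational] [Finite L.Symbols]
    (K : Set (Bundled.{0} L.Structure)) [IsFraisse K]
    (U : Type) [L.Structure U] [Countable U] [Infinite U]
    (hU : IsFraisseLimit K U)
    (p : Ultrafilter ℕ) (hp : ∀ n : ℕ, p ≠ pure n) :
    L.IsUltrahomogeneous ((p : Filter ℕ).Product fun _ => U) ∧
      #((p : Filter ℕ).Product fun _ => U) = 2 ^ aleph0 ∧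
      L.age ((p : Filter ℕ).Product fun _ => U) = K :=
  statement6_general (fun _ => hU.ultrahomogeneous) (fun _ => hU.age)
    (fun _ => mk_le_aleph0.trans aleph0_le_continuum) hp
end

section
/- Let L be a countable first-order language, let F be a Fraïssé class of L-structures and let U be its Fraïssé limit. Assume that for every countable set G of automorphisms of U there exists a non-surjective embedding e : U → U that is G-extensible. Then there exists an ultrahomogeneous L-structure of cardinality ℵ₁ whose age equals F. -/
open FirstOrder Language Cardinal CategoryTheory

/-!
Fix a set `Ω` of cardinality `ℵ₁` and consider the ultrahomogeneous structures with the same age as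
`U` whose elements are labelled injectively by `Ω`. Each of them carries, for every finite set `p`
of pairs of labels, one chosen automorphism extending `p` whenever some automorphism does. Order
these structures by label-preserving embeddings along which the chosen automorphisms extend. The
choices being coherent along a chain, they glue to automorphisms of its direct limit, which are
enough to make the limit ultrahomogeneous; so Zorn's lemma gives a maximal structure.

A maximal structure cannot be countable: otherwise it is isomorphic to `U` and has only countably
many chosen automorphisms, and a non-surjective embedding into `U` extensible for these would
produce a strictly larger one. Hence it has cardinality `ℵ₁`.
-/

universe u v w w'

open Set

section Auxiliary

variable {L : FirstOrder.Language.{u, v}} {S M N : Type*}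
  [L.Structure S] [L.Structure M] [L.Structure N]

theorem exists_equiv_coe_eq_of_surjective (F : M ↪[L] N) (hF : Function.Surjective F) :
    ∃ E : M ≃[L] N, ⇑E = F :=
  ⟨⟨Equiv.ofBijective F ⟨F.injective, hF⟩, F.map_fun', F.map_rel'⟩, rfl⟩

theorem exists_comp_eq_of_range_le_s7 (o : M ↪[L] N) (e : S ↪[L] N)
    (h : e.toHom.range ≤ o.toHom.range) : ∃ a : S ↪[L] M, o.comp a = e := by
  refine ⟨o.equivRange.symm.toEmbedding.comp
    (e.codRestrict o.toHom.range fun x => h (e.toHom.mem_range_self x)), ?_⟩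
  ext x
  change o (o.equivRange.symm _) = e x
  rw [← Embedding.equivRange_apply, Language.Equiv.apply_symm_apply, Embedding.codRestrict_apply]

theorem exists_equiv_comp_eq_of_isUltrahomogeneous (hM : L.IsUltrahomogeneous M)
    (hS : Structure.FG L S) (a b : S ↪[L] M) : ∃ g : M ≃[L] M, g.toEmbedding.comp a = b := by
  obtain ⟨g, hg⟩ := hM a.toHom.range (hS.range _) (b.comp a.equivRange.symm.toEmbedding)
  refine ⟨g, ?_⟩
  ext x
  have hgx := DFunLike.congr_fun hg (a.equivRange x)
  simpa using hgx.symm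

theorem exists_embedding_extending {α β Ω : Type*} [Countable β] [Uncountable Ω]
    (e : α ↪ β) (a : α ↪ Ω) : ∃ ρ : β ↪ Ω, ∀ x, ρ (e x) = a x := by
  have : Countable α := e.countable
  have hcompl : ¬ (range a)ᶜ.Countable := fun h =>
    not_countable (countable_univ_iff.1 (union_compl_self (range a) ▸ (countable_range a).union h))
  obtain ⟨c⟩ : Nonempty (β ↪ ((range a)ᶜ : Set Ω)) :=
    lift_mk_le'.1 ((lift_le_aleph0.2 mk_le_aleph0).trans
      (aleph0_le_lift.2 (not_le.1 (le_aleph0_iff_set_countable.not.2 hcompl)).le))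
  have hac : ∀ x y, a x ≠ c y := fun x y h => (c y).2 ⟨x, h⟩
  let ρ : β → Ω := Function.extend e a fun y => c y
  have hρ : ∀ x, ρ (e x) = a x := e.injective.extend_apply a _
  have hρ' : ∀ y, (¬ ∃ x, e x = y) → ρ y = c y := Function.extend_apply' a _
  refine ⟨⟨ρ, fun y z hyz => ?_⟩, hρ⟩
  rcases em (∃ x, e x = y) with ⟨x, rfl⟩ | hy <;> rcases em (∃ x, e x = z) with ⟨x', rfl⟩ | hz
  · rw [hρ, hρ] at hyz
    exact congrArg e (a.injective hyz)
  · rw [hρ, hρ' z hz] at hyz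
    exact (hac x z hyz).elim
  · rw [hρ, hρ' y hy] at hyz
    exact (hac x' y hyz.symm).elim
  · rw [hρ' y hy, hρ' z hz] at hyz
    exact c.injective (Subtype.ext hyz)

end Auxiliary

section Uniqueness

variable {L : FirstOrder.Language.{u, v}} {M N : Type w} [L.Structure M] [L.Structure N]

theorem isExtensionPair_of_age_subset (hN : L.IsUltrahomogeneous N) (h : L.age M ⊆ L.age N) :
    L.IsExtensionPair M N := by
  rw [isExtensionPair_iff_exists_embedding_closure_singleton_sup]
  intro S hS f m
  have hSm : (Substructure.closure L {m} ⊔ S).FG := (Substructure.fg_closure_singleton m).sup hS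
  obtain ⟨-, hemb⟩ :
      (⟨↥(Substructure.closure L {m} ⊔ S), inferInstance⟩ : Bundled.{w} L.Structure) ∈ L.age N :=
    h ⟨(Substructure.fg_iff_structure_fg _).1 hSm, ⟨Substructure.subtype _⟩⟩
  exact hN.extend_embedding (h := hemb) ((Substructure.fg_iff_structure_fg S).1 hS) f _

theorem nonempty_equiv_of_age_eq [Countable M] [Countable N] (hM : L.IsUltrahomogeneous M)
    (hN : L.IsUltrahomogeneous N) (h : L.age M = L.age N) : Nonempty (M ≃[L] N) := by
  have hbot : (⊥ : L.Substructure M).FG := Substructure.fg_bot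
  obtain ⟨-, ⟨f⟩⟩ :
      (⟨↥(⊥ : L.Substructure M), inferInstance⟩ : Bundled.{w} L.Structure) ∈ L.age N :=
    h ▸ ⟨(Substructure.fg_iff_structure_fg _).1 hbot, ⟨Substructure.subtype _⟩⟩
  obtain ⟨E, -⟩ := equiv_between_cg Structure.cg_of_countable Structure.cg_of_countable
    ⟨⟨⊥, f.toHom.range, f.equivRange⟩, hbot⟩
    (isExtensionPair_of_age_subset hN h.le) (isExtensionPair_of_age_subset hM h.ge)
  exact ⟨E⟩

end Uniqueness

section DirectLimit

open Language.DirectLimit (of of_f)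

variable {L : FirstOrder.Language.{u, v}} {ι : Type w} [Preorder ι] [IsDirectedOrder ι] [Nonempty ι]
  {G : ι → Type w'} [∀ i, L.Structure (G i)] {f : ∀ i j, i ≤ j → G i ↪[L] G j}
  [DirectedSystem G fun i j h => f i j h]

theorem exists_lift_of_tail {P : Type*} [L.Structure P] (i₀ : ι) (u : ∀ i, i₀ ≤ i → G i ↪[L] P)
    (hu : ∀ i j (hi : i₀ ≤ i) (hij : i ≤ j) x, u j (hi.trans hij) (f i j hij x) = u i hi x) :
    ∃ F : Language.DirectLimit G f ↪[L] P, ∀ i hi x, F (of L ι G f i x) = u i hi x := by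
  choose k hik hk using fun i => directed_of (· ≤ ·) i i₀
  let v (i : ι) : G i ↪[L] P := (u (k i) (hk i)).comp (f i (k i) (hik i))
  have hv : ∀ i j (hij : i ≤ j) (hj : i₀ ≤ j) x, u j hj (f i j hij x) = v i x := by
    intro i j hij hj x
    obtain ⟨l, hkl, hjl⟩ := directed_of (· ≤ ·) (k i) j
    rw [Embedding.comp_apply, ← hu _ l (hk i) hkl, ← hu j l hj hjl,
      DirectedSystem.map_map' f, DirectedSystem.map_map' f]
  refine ⟨Language.DirectLimit.lift L ι G f v fun i j hij x => ?_, fun i hi x => ?_⟩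
  · rw [← hv j (k j) (hik j) (hk j), DirectedSystem.map_map' f, hv i]
  · rw [Language.DirectLimit.lift_of, ← hv i i le_rfl hi, DirectedSystem.map_self' f]

theorem exists_equiv_of_tail (i₀ : ι) (g : ∀ i, i₀ ≤ i → G i ≃[L] G i)
    (hg : ∀ i j (hi : i₀ ≤ i) (hij : i ≤ j) x,
      g j (hi.trans hij) (f i j hij x) = f i j hij (g i hi x)) :
    ∃ F : Language.DirectLimit G f ≃[L] Language.DirectLimit G f,
      ∀ i hi x, F (of L ι G f i x) = of L ι G f i (g i hi x) := by
  obtain ⟨F, hF⟩ := exists_lift_of_tail i₀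
    (fun i hi => (of L ι G f i).comp (g i hi).toEmbedding) fun i j hi hij x => by
      change of L ι G f j (g j _ _) = of L ι G f i (g i hi x)
      rw [hg i j hi hij, of_f]
  have hsurj : Function.Surjective F := by
    intro y
    obtain ⟨i, x, rfl⟩ := Language.DirectLimit.exists_of y
    obtain ⟨k, hik, hk⟩ := directed_of (· ≤ ·) i i₀
    refine ⟨of L ι G f k ((g k hk).symm (f i k hik x)), ?_⟩
    rw [hF k hk, Embedding.comp_apply, Language.Equiv.coe_toEmbedding,
      Language.Equiv.apply_symm_apply, of_f]
  obtain ⟨E, hE⟩ := exists_equiv_coe_eq_of_surjective F hsurj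
  exact ⟨E, fun i hi x => hE ▸ hF i hi x⟩

theorem isUltrahomogeneous_directLimit (hG : ∀ i, L.IsUltrahomogeneous (G i))
    (hext : ∀ i (g : G i ≃[L] G i) (B : Set (G i)), B.Finite →
      ∃ F : Language.DirectLimit G f ≃[L] Language.DirectLimit G f, ∀ b ∈ B,
        F (of L ι G f i b) = of L ι G f i (g b)) :
    L.IsUltrahomogeneous (Language.DirectLimit G f) := by
  intro S hS e
  have hS' := (Substructure.fg_iff_structure_fg S).1 hS
  obtain ⟨i, T, hT⟩ :=
    Language.DirectLimit.exists_fg_substructure_in_Sigma _ (hS.sup (hS'.range e.toHom))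
  have hrange : S ⊔ e.toHom.range ≤ (of L ι G f i).toHom.range :=
    hT ▸ Hom.map_le_range
  obtain ⟨a, ha⟩ := exists_comp_eq_of_range_le_s7 (of L ι G f i) S.subtype
    ((Substructure.range_subtype S).trans_le (le_sup_left.trans hrange))
  obtain ⟨b, hb⟩ := exists_comp_eq_of_range_le_s7 (of L ι G f i) e
    (le_sup_right.trans hrange)
  obtain ⟨g, hg⟩ := exists_equiv_comp_eq_of_isUltrahomogeneous (hG i) hS' a b
  obtain ⟨B, hB⟩ := hS'.out
  obtain ⟨F, hF⟩ := hext i g (a '' B) (B.finite_toSet.image a)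
  have hdense : e.toHom = (F.toEmbedding.comp S.subtype).toHom := by
    refine Hom.eq_of_eqOn_dense hB fun x hx => ?_
    calc e x = of L ι G f i (g (a x)) := by rw [← hb, ← hg]; rfl
      _ = F (of L ι G f i (a x)) := (hF _ (mem_image_of_mem a hx)).symm
      _ = F (S.subtype x) := by rw [← ha]; rfl
  exact ⟨F, Embedding.ext fun x => DFunLike.congr_fun hdense x⟩

theorem exists_label_directLimit {Ω : Type*} (ℓ : ∀ i, G i ↪ Ω)
    (hℓ : ∀ i j (hij : i ≤ j) x, ℓ j (f i j hij x) = ℓ i x) :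
    ∃ ρ : Language.DirectLimit G f ↪ Ω, ∀ i x, ρ (of L ι G f i x) = ℓ i x := by
  have of_eq_of_iff : ∀ i j (x : G i) (y : G j),
      of L ι G f i x = of L ι G f j y ↔ ℓ i x = ℓ j y := by
    intro i j x y
    obtain ⟨k, hik, hjk⟩ := directed_of (· ≤ ·) i j
    rw [← of_f (hij := hik), ← of_f (hij := hjk),
      (of L ι G f k).injective.eq_iff, ← hℓ i k hik, ← hℓ j k hjk,
      (ℓ k).injective.eq_iff]
  choose i x hx using Language.DirectLimit.exists_of (G := G) (f := f)
  refine ⟨⟨fun z => ℓ (i z) (x z), fun z z' hzz' => ?_⟩, fun j y => ?_⟩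
  · rw [← hx z, ← hx z', of_eq_of_iff]
    exact hzz'
  · exact (of_eq_of_iff _ _ _ _).1 (hx _)

end DirectLimit

section LabelledGraph

/-- The graph of a self-map `g` of `M`, read off through a labelling `ℓ` of `M`. It allows self-maps
of different sets labelled by `Ω` to be compared by inclusion. -/
def labelledGraph {M Ω : Type*} (ℓ : M → Ω) (g : M → M) : Set (Ω × Ω) :=
  range fun x => (ℓ x, ℓ (g x))

theorem apply_eq_of_mem_labelledGraph {M Ω : Type*} {ℓ : M → Ω} (hℓ : Function.Injective ℓ)
    {g : M → M} {x y : M} (h : (ℓ x, ℓ y) ∈ labelledGraph ℓ g) : g x = y := by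
  obtain ⟨z, hz⟩ := h
  obtain ⟨hzx, hzy⟩ := Prod.ext_iff.1 hz
  exact hℓ hzx ▸ hℓ hzy

theorem labelledGraph_subset_iff {M N Ω : Type*} {ℓ : M → Ω} {ℓ' : N → Ω}
    (hℓ' : Function.Injective ℓ') {j : M → N} (hj : ∀ x, ℓ' (j x) = ℓ x) {g : M → M} {g' : N → N} :
    labelledGraph ℓ g ⊆ labelledGraph ℓ' g' ↔ ∀ x, g' (j x) = j (g x) := by
  constructor
  · intro h x
    refine apply_eq_of_mem_labelledGraph hℓ' ?_
    rw [hj, hj]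
    exact h ⟨x, rfl⟩
  · rintro h _ ⟨x, rfl⟩
    exact ⟨j x, by simp only [h, hj]⟩

end LabelledGraph

/-- An ultrahomogeneous structure with age `K` whose elements are labelled injectively by `Ω`,
together with a choice, for every finite `p ⊆ Ω × Ω`, of an automorphism whose labelled graph
contains `p` whenever such an automorphism exists. If none exists, the value `aut p` is junk. -/
structure LabelledModel (L : FirstOrder.Language.{u, v}) (K : Set (Bundled.{w} L.Structure))
    (Ω : Type w) where
  carrier : Type w
  [str : L.Structure carrier]
  isUltrahomogeneous : L.IsUltrahomogeneous carrier
  age_eq : L.age carrier = K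
  label : carrier ↪ Ω
  aut : Finset (Ω × Ω) → carrier ≃[L] carrier
  subset_labelledGraph_aut (p : Finset (Ω × Ω)) (g : carrier ≃[L] carrier) :
    ↑p ⊆ labelledGraph label g → ↑p ⊆ labelledGraph label (aut p)

namespace LabelledModel

open Language.DirectLimit (of)

attribute [instance] LabelledModel.str

variable {L : FirstOrder.Language.{u, v}} {K : Set (Bundled.{w} L.Structure)} {Ω : Type w}

/-- The labelled graph of the automorphism chosen for `p`. The choice is meaningful if and only if
`p` is a subset of it. -/
def autGraph (s : LabelledModel L K Ω) (p : Finset (Ω × Ω)) : Set (Ω × Ω) :=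
  labelledGraph s.label (s.aut p)

instance : Preorder (LabelledModel L K Ω) where
  le s t := (∃ j : s.carrier ↪[L] t.carrier, ∀ x, t.label (j x) = s.label x) ∧
    ∀ p, ↑p ⊆ s.autGraph p → s.autGraph p ⊆ t.autGraph p
  le_refl s := ⟨⟨Embedding.refl L _, fun _ => rfl⟩, fun _ _ => subset_rfl⟩
  le_trans := by
    rintro s t r ⟨⟨j, hj⟩, hst⟩ ⟨⟨k, hk⟩, htr⟩
    refine ⟨⟨k.comp j, fun x => (hk _).trans (hj x)⟩, fun p hp => ?_⟩
    exact (hst p hp).trans (htr p (hp.trans (hst p hp)))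

variable {s t : LabelledModel L K Ω}

theorem range_label_subset_of_le (h : s ≤ t) : range s.label ⊆ range t.label := by
  obtain ⟨⟨j, hj⟩, -⟩ := h
  rintro _ ⟨x, rfl⟩
  exact ⟨j x, hj x⟩

theorem le_of_range_label_subset (h : t ≤ s) (hr : range s.label ⊆ range t.label) : s ≤ t := by
  obtain ⟨⟨j, hj⟩, haut⟩ := h
  have hsurj : Function.Surjective j := by
    intro x
    obtain ⟨y, hy⟩ := hr ⟨x, rfl⟩
    exact ⟨y, s.label.injective ((hj y).trans hy)⟩
  obtain ⟨E, hE⟩ := exists_equiv_coe_eq_of_surjective j hsurj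
  have hEt : ∀ x, s.label (E x) = t.label x := fun x => hE ▸ hj x
  have hEs : ∀ x, t.label (E.symm x) = s.label x := fun x => by
    rw [← hEt, E.apply_symm_apply]
  refine ⟨⟨E.symm.toEmbedding, hEs⟩, fun p hp => ?_⟩
  have hconj : s.autGraph p ⊆ labelledGraph t.label ((E.symm.comp (s.aut p)).comp E) :=
    (labelledGraph_subset_iff t.label.injective hEs).2 fun x => by simp
  have hts : t.autGraph p ⊆ s.autGraph p :=
    haut p (t.subset_labelledGraph_aut p _ (hp.trans hconj))
  refine (labelledGraph_subset_iff t.label.injective hEs).2 fun x => E.injective ?_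
  rw [← (labelledGraph_subset_iff s.label.injective hEt).1 hts]
  simp

theorem exists_mem_upperBounds {D : Type w} [L.Structure D] (hD : L.IsUltrahomogeneous D)
    (hage : L.age D = K) (ρ : D ↪ Ω) (C : Set (LabelledModel L K Ω))
    (hemb : ∀ s ∈ C, ∃ j : s.carrier ↪[L] D, ∀ x, ρ (j x) = s.label x)
    (haut : ∀ p, ∃ g : D ≃[L] D, ∀ s ∈ C, ↑p ⊆ s.autGraph p →
      s.autGraph p ⊆ labelledGraph ρ g) :
    ∃ t ∈ upperBounds C, range t.label = range ρ := by
  have hchoice : ∀ p : Finset (Ω × Ω), ∃ a : D ≃[L] D,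
      (∀ g : D ≃[L] D, ↑p ⊆ labelledGraph ρ g → ↑p ⊆ labelledGraph ρ a) ∧
      ∀ s ∈ C, ↑p ⊆ s.autGraph p → s.autGraph p ⊆ labelledGraph ρ a := by
    intro p
    by_cases hp : ∃ s ∈ C, ↑p ⊆ s.autGraph p
    · obtain ⟨s, hs, hps⟩ := hp
      obtain ⟨a, ha⟩ := haut p
      exact ⟨a, fun _ _ => hps.trans (ha s hs hps), ha⟩
    · have hC : ∀ a : D ≃[L] D, ∀ s ∈ C, ↑p ⊆ s.autGraph p → s.autGraph p ⊆ labelledGraph ρ a :=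
        fun _ s hs hps => (hp ⟨s, hs, hps⟩).elim
      by_cases hg : ∃ g : D ≃[L] D, ↑p ⊆ labelledGraph ρ g
      · obtain ⟨g, hg⟩ := hg
        exact ⟨g, fun _ _ => hg, hC g⟩
      · exact ⟨Language.Equiv.refl L D, fun g h => (hg ⟨g, h⟩).elim, hC _⟩
  choose a ha haC using hchoice
  exact ⟨⟨D, hD, hage, ρ, a, ha⟩, fun s hs => ⟨hemb s hs, fun p => haC p s hs⟩, rfl⟩

theorem nonempty_of_embedding {D : Type w} [L.Structure D] (hD : L.IsUltrahomogeneous D)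
    (hage : L.age D = K) (ρ : D ↪ Ω) : Nonempty (LabelledModel L K Ω) :=
  let ⟨t, _⟩ := exists_mem_upperBounds hD hage ρ ∅ (by simp)
    fun _ => ⟨Language.Equiv.refl L D, by simp⟩
  ⟨t⟩

theorem exists_subset_autGraph (s : LabelledModel L K Ω) (g : s.carrier ≃[L] s.carrier)
    {B : Set s.carrier} (hB : B.Finite) : ∃ p : Finset (Ω × Ω),
      ↑p ⊆ s.autGraph p ∧ ∀ b ∈ B, (s.label b, s.label (g b)) ∈ p := by
  classical
  refine ⟨hB.toFinset.image fun b => (s.label b, s.label (g b)),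
    s.subset_labelledGraph_aut _ g ?_, fun b hb => Finset.mem_image_of_mem _ (hB.mem_toFinset.2 hb)⟩
  rw [Finset.coe_image]
  exact image_subset_range _ _

section Chain

variable {ι : Type w} [Preorder ι] [IsDirectedOrder ι] [Nonempty ι] {s : ι → LabelledModel L K Ω}

theorem exists_equiv_autGraph_subset (hs : Monotone s)
    {j : ∀ i k, i ≤ k → (s i).carrier ↪[L] (s k).carrier}
    (hj : ∀ i k (hik : i ≤ k) x, (s k).label (j i k hik x) = (s i).label x)
    [DirectedSystem (fun i => (s i).carrier) fun i k hik => j i k hik]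
    {ρ : Language.DirectLimit (fun i => (s i).carrier) j ↪ Ω}
    (hρ : ∀ i x, ρ (of L ι _ j i x) = (s i).label x) (p : Finset (Ω × Ω)) :
    ∃ F : Language.DirectLimit (fun i => (s i).carrier) j ≃[L] Language.DirectLimit _ j,
      ∀ i, ↑p ⊆ (s i).autGraph p → (s i).autGraph p ⊆ labelledGraph ρ F := by
  by_cases hp : ∃ i₀, ↑p ⊆ (s i₀).autGraph p
  · obtain ⟨i₀, hi₀⟩ := hp
    obtain ⟨F, hF⟩ := exists_equiv_of_tail i₀ (fun i _ => (s i).aut p) fun i k hi hik =>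
      (labelledGraph_subset_iff (s k).label.injective (hj i k hik)).1
        ((hs hik).2 p (hi₀.trans ((hs hi).2 p hi₀)))
    refine ⟨F, fun i hi => ?_⟩
    obtain ⟨k, hik, hk⟩ := directed_of (· ≤ ·) i i₀
    exact ((hs hik).2 p hi).trans ((labelledGraph_subset_iff ρ.injective (hρ k)).2 (hF k hk))
  · exact ⟨Language.Equiv.refl L _, fun i hi => (hp ⟨i, hi⟩).elim⟩

theorem bddAbove_range_of_monotone (hs : Monotone s) : BddAbove (range s) := by
  choose j hj using fun i k (hik : i ≤ k) => (hs hik).1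
  have : DirectedSystem (fun i => (s i).carrier) fun i k hik => j i k hik :=
    ⟨fun i x => (s i).label.injective (hj i i le_rfl x),
      fun _ _ _ _ _ _ => (s _).label.injective (((hj _ _ _ _).trans (hj _ _ _ _)).trans
        (hj _ _ _ _).symm)⟩
  obtain ⟨ρ, hρ⟩ := exists_label_directLimit (fun i => (s i).label) hj
  have haut := exists_equiv_autGraph_subset hs hj hρ
  have huh : L.IsUltrahomogeneous (Language.DirectLimit (fun i => (s i).carrier) j) := by
    refine isUltrahomogeneous_directLimit (fun i => (s i).isUltrahomogeneous) fun i g B hB => ?_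
    obtain ⟨p, hp, hpB⟩ := (s i).exists_subset_autGraph g hB
    obtain ⟨F, hF⟩ := haut p
    refine ⟨F, fun b hb => apply_eq_of_mem_labelledGraph ρ.injective ?_⟩
    rw [hρ, hρ]
    exact hF i hp (hp (hpB b hb))
  have hage : L.age (Language.DirectLimit (fun i => (s i).carrier) j) = K := by
    rw [age_directLimit, iUnion_congr fun i => (s i).age_eq, iUnion_const]
  obtain ⟨t, ht, -⟩ := exists_mem_upperBounds huh hage ρ (range s)
    (by rintro _ ⟨i, rfl⟩; exact ⟨of L ι _ j i, hρ i⟩) (by simpa only [forall_mem_range] using haut)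
  exact ⟨t, ht⟩

end Chain

theorem bddAbove_of_isChain {C : Set (LabelledModel L K Ω)} (hC : IsChain (· ≤ ·) C)
    (hne : C.Nonempty) : BddAbove C := by
  have hle : ∀ s ∈ C, ∀ t ∈ C, range s.label ⊆ range t.label → s ≤ t := fun s hs t ht h =>
    (hC.total hs ht).elim id (le_of_range_label_subset · h)
  -- `C` lives in a universe too large to index a direct limit in `Type w`, so it is replaced by the
  -- sets of labels of its members, which determine the members up to equivalence in the preorder.
  let labelSets : Set (Set Ω) := (fun s => range s.label) '' C
  choose r hrC hr using
    show ∀ A : labelSets, ∃ s ∈ C, range s.label = A from Subtype.property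
  have hmono : Monotone r := fun A B hAB =>
    hle _ (hrC A) _ (hrC B) ((hr A).subset.trans (Subset.trans hAB (hr B).superset))
  have : Nonempty labelSets := (hne.image _).to_subtype
  have : IsDirectedOrder labelSets := ⟨fun A B => by
    rcases hC.total (hrC A) (hrC B) with h | h
    · exact ⟨B, (hr A).superset.trans ((range_label_subset_of_le h).trans (hr B).subset), le_rfl⟩
    · exact ⟨A, le_rfl, (hr B).superset.trans ((range_label_subset_of_le h).trans (hr A).subset)⟩⟩
  obtain ⟨t, ht⟩ := bddAbove_range_of_monotone hmono
  refine ⟨t, fun s hs => ?_⟩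
  let A : labelSets := ⟨range s.label, s, hs, rfl⟩
  exact (hle s hs (r A) (hrC A) (hr A).superset).trans (ht ⟨A, rfl⟩)

theorem countable_setOf_subset_autGraph (m : LabelledModel L K Ω) [Countable m.carrier] :
    {p : Finset (Ω × Ω) | ↑p ⊆ m.autGraph p}.Countable := by
  have hlabels := (countable_range m.label).prod (countable_range m.label)
  refine ((countable_ofPred_finite_subset hlabels).preimage Finset.coe_injective).mono ?_
  intro p hp
  refine ⟨p.finite_toSet, hp.trans ?_⟩
  rintro _ ⟨x, rfl⟩
  exact ⟨⟨x, rfl⟩, ⟨_, rfl⟩⟩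

end LabelledModel

/-- `G`-extensibility of an embedding `e : M → N`, for a set `G` of automorphisms of `M`. -/
def IsExtensible {L : FirstOrder.Language.{u, v}} {M N : Type*} [L.Structure M] [L.Structure N]
    (G : Set (M ≃[L] M)) (e : M ↪[L] N) : Prop :=
  ∀ h ∈ G, ∃ h' : N ≃[L] N, e.comp h.toEmbedding = h'.toEmbedding.comp e

theorem IsExtensible.comp_equiv {L : FirstOrder.Language.{u, v}} {M N P : Type*} [L.Structure M]
    [L.Structure N] [L.Structure P] (φ : M ≃[L] N) {G : Set (M ≃[L] M)} {e : N ↪[L] P}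
    (he : IsExtensible ((fun h => (φ.comp h).comp φ.symm) '' G) e) :
    IsExtensible G (e.comp φ.toEmbedding) := by
  intro h hG
  obtain ⟨h', hh'⟩ := he _ (mem_image_of_mem _ hG)
  refine ⟨h', Embedding.ext fun x => ?_⟩
  simpa using DFunLike.congr_fun hh' (φ x)

section

variable {L : FirstOrder.Language.{u, v}} {U : Type w} [L.Structure U] [Countable U]

theorem LabelledModel.not_isMax_of_isExtensible {K : Set (Bundled.{w} L.Structure)} {Ω : Type w}
    [Uncountable Ω] (hU : L.IsUltrahomogeneous U) (hage : L.age U = K) (m : LabelledModel L K Ω)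
    (e : m.carrier ↪[L] U) (hns : ¬ Function.Surjective e)
    (he : IsExtensible (m.aut '' {p | ↑p ⊆ m.autGraph p}) e) : ¬ IsMax m := by
  intro hmax
  obtain ⟨ρ, hρ⟩ := exists_embedding_extending e.toEmbedding m.label
  have haut : ∀ p, ∃ h : U ≃[L] U, ↑p ⊆ m.autGraph p → m.autGraph p ⊆ labelledGraph ρ h := by
    intro p
    by_cases hp : ↑p ⊆ m.autGraph p
    · obtain ⟨h, hh⟩ := he _ (mem_image_of_mem _ hp)
      exact ⟨h, fun _ => (labelledGraph_subset_iff ρ.injective hρ).2 fun x =>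
        (DFunLike.congr_fun hh x).symm⟩
    · exact ⟨Language.Equiv.refl L U, fun h => (hp h).elim⟩
  obtain ⟨t, ht, htρ⟩ := exists_mem_upperBounds hU hage ρ {m}
    (by rintro _ rfl; exact ⟨e, hρ⟩) (by simpa only [mem_singleton_iff, forall_eq] using haut)
  have hsub : range ρ ⊆ range m.label :=
    htρ ▸ range_label_subset_of_le (hmax (ht rfl))
  refine hns fun y => ?_
  obtain ⟨x, hx⟩ := hsub ⟨y, rfl⟩
  exact ⟨x, ρ.injective ((hρ x).trans hx)⟩

theorem LabelledModel.uncountable_of_isMax {Ω : Type w} [Uncountable Ω]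
    (hU : L.IsUltrahomogeneous U)
    (hext : ∀ G : Set (U ≃[L] U), G.Countable →
      ∃ e : U ↪[L] U, ¬ Function.Surjective e ∧ IsExtensible G e)
    {m : LabelledModel L (L.age U) Ω} (hm : IsMax m) : Uncountable m.carrier := by
  rw [← not_countable_iff]
  intro _
  obtain ⟨φ⟩ := nonempty_equiv_of_age_eq m.isUltrahomogeneous hU m.age_eq
  obtain ⟨e, hns, he⟩ := hext _ ((m.countable_setOf_subset_autGraph.image m.aut).image
    fun h => (φ.comp h).comp φ.symm)
  refine m.not_isMax_of_isExtensible hU rfl (e.comp φ.toEmbedding) (fun hsurj => hns ?_)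
    (IsExtensible.comp_equiv φ he) hm
  exact Function.Surjective.of_comp hsurj

theorem statement7_general (hU : L.IsUltrahomogeneous U)
    (hext : ∀ G : Set (U ≃[L] U), G.Countable →
      ∃ e : U ↪[L] U, ¬ Function.Surjective e ∧ IsExtensible G e) :
    ∃ N : Bundled.{w} L.Structure, #N = ℵ₁ ∧ L.IsUltrahomogeneous N ∧ L.age N = L.age U := by
  obtain ⟨Ω, hΩ⟩ : ∃ Ω : Type w, #Ω = ℵ₁ := ⟨(ℵ₁).out, mk_out _⟩
  have : Uncountable Ω := by rw [← aleph0_lt_mk_iff, hΩ]; exact aleph0_lt_aleph_one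
  obtain ⟨ρ⟩ : Nonempty (U ↪ Ω) := mk_le_aleph0.trans (aleph0_le_mk Ω)
  have : Nonempty (LabelledModel L (L.age U) Ω) :=
    LabelledModel.nonempty_of_embedding hU rfl ρ
  obtain ⟨m, hm⟩ := zorn_le_nonempty fun (C : Set (LabelledModel L (L.age U) Ω)) hC hne =>
    LabelledModel.bddAbove_of_isChain hC hne
  have hunc : Uncountable m.carrier := LabelledModel.uncountable_of_isMax hU hext hm
  refine ⟨Bundled.of m.carrier, le_antisymm ?_ ?_, m.isUltrahomogeneous, m.age_eq⟩
  · exact hΩ ▸ mk_le_of_injective m.label.injective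
  · exact aleph_one_le_iff.2 (aleph0_lt_mk_iff.2 hunc)

end

/-- Let `K` be a Fraïssé class in a countable language with Fraïssé limit `U`.
If for every countable set `G` of automorphisms of `U` there is a non-surjective `G`-extensible
self-embedding of `U`, then there is an ultrahomogeneous structure of cardinality `ℵ₁` whose
age is `K`. -/
theorem statement7 (L : FirstOrder.Language.{0, 0}) [Countable L.Symbols]
    (K : Set (Bundled.{0} L.Structure)) [IsFraisse K]
    (U : Type) [L.Structure U] [Countable U]
    (hU : IsFraisseLimit K U)
    (hext : ∀ G : Set (U ≃[L] U), G.Countable →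
      ∃ e : U ↪[L] U, ¬ Function.Surjective e ∧
        ∀ h ∈ G, ∃ h' : U ≃[L] U,
          e.comp (Language.Equiv.toEmbedding h) = (Language.Equiv.toEmbedding h').comp e) :
    ∃ N : Bundled.{0} L.Structure, #N = aleph 1 ∧
      L.IsUltrahomogeneous N ∧ L.age N = K := by
  rw [← hU.age]
  exact statement7_general hU.ultrahomogeneous hext
end

section
/- Let L be a countable first-order language, let F be a Fraïssé class of L-structures and let U be its Fraïssé limit. Assume there exists a non-surjective embedding e : U → U that is extensible, i.e., for every automorphism h of U there exists an automorphism h̃ of U with e ∘ h = h̃ ∘ e. Then there exists an uncountable ultrahomogeneous L-structure whose age equals F. -/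
open FirstOrder Language Cardinal CategoryTheory

/-!
Build an `ω₁`-chain of copies of `U` in which the union of the copies below `c` is embedded in the
copy at `c` as the range of `e`. The recursion can go on as long as the union of a countable chain
is again isomorphic to `U`, and this holds because such a union is countably generated, has the age
of `U`, and is ultrahomogeneous.

Ultrahomogeneity of unions, of countable or uncountable length, is where extensibility is used: an
automorphism of one copy climbs the chain, extending along `e` at each stage after being glued over
all earlier stages, and so extends to the whole union. As a finitely generated substructure and
its image under an embedding lie in a common copy of `U`, ultrahomogeneity passes from `U` to the
union. Finally, a point outside the range of `e` gives a new element at every stage, so the union of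
the whole `ω₁`-chain is uncountable.
-/

universe u v w

namespace ExtensibleTower

open FirstOrder.Language Set

theorem exists_forall_of_wellFoundedLT {ι : Type*} [LT ι] [WellFoundedLT ι] {X : ι → Type*}
    [∀ a, Nonempty (X a)] (P : ∀ a, (∀ b < a, X b) → X a → Prop)
    (step : ∀ (a : ι) (f : ∀ b, X b), (∀ b < a, P b (fun c _ => f c) (f b)) →
      ∃ x, P a (fun b _ => f b) x) :
    ∃ f : ∀ a, X a, ∀ a, P a (fun b _ => f b) (f a) := by
  let F : ∀ a, (∀ b < a, X b) → X a := fun a g => Classical.epsilon (P a g)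
  let f : ∀ a, X a := wellFounded_lt.fix F
  have hf (a : ι) : f a = Classical.epsilon (P a fun b _ => f b) := WellFounded.fix_eq _ F a
  refine ⟨f, fun a => ?_⟩
  induction a using WellFoundedLT.induction with | ind a ih =>
    rw [hf a]
    exact Classical.epsilon_spec (step a f ih)

variable {L : FirstOrder.Language.{u, v}}

section Ultrahomogeneous

variable {K M N : Type*} [L.Structure K] [L.Structure M] [L.Structure N]

theorem exists_comp_eq_of_range_le (m : M ↪[L] N) (f : K ↪[L] N)
    (h : f.toHom.range ≤ m.toHom.range) : ∃ s : K ↪[L] M, m.comp s = f := by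
  refine ⟨m.equivRange.symm.toEmbedding.comp
    (f.codRestrict m.toHom.range fun x => h ⟨x, rfl⟩), ?_⟩
  ext x
  exact congrArg Subtype.val (m.equivRange.apply_symm_apply _)

theorem exists_equiv_comp_eq (hM : L.IsUltrahomogeneous M) (hK : Structure.FG L K)
    (s t : K ↪[L] M) : ∃ g : M ≃[L] M, g.toEmbedding.comp s = t := by
  obtain ⟨g, hg⟩ := hM s.toHom.range (hK.range _) (t.comp s.equivRange.symm.toEmbedding)
  refine ⟨g, ?_⟩
  ext x
  simpa using (DFunLike.congr_fun hg (s.equivRange x)).symm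

theorem isExtensionPair_of_age_subset {M N : Type w} [L.Structure M] [L.Structure N]
    (hN : L.IsUltrahomogeneous N) (h : L.age M ⊆ L.age N) : L.IsExtensionPair M N := by
  rw [isExtensionPair_iff_exists_embedding_closure_singleton_sup]
  intro S hS f x
  have hfg := (Substructure.fg_closure_singleton (L := L) x).sup hS
  have : Nonempty (↥(Substructure.closure L {x} ⊔ S) ↪[L] N) :=
    (h (age.fg_substructure hfg)).2
  exact hN.extend_embedding ((Substructure.fg_iff_structure_fg S).1 hS) f
    (Substructure.inclusion le_sup_right)

-- `IsFraisseLimit.nonempty_equiv` covers only countable `M` and `N` over countably many functions.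
theorem nonempty_equiv_of_age_eq {M N : Type w} [L.Structure M] [L.Structure N]
    (hMcg : Structure.CG L M) (hNcg : Structure.CG L N) (hM : L.IsUltrahomogeneous M)
    (hN : L.IsUltrahomogeneous N) (h : L.age M = L.age N) : Nonempty (M ≃[L] N) := by
  obtain ⟨j⟩ : Nonempty ((⊥ : L.Substructure M) ↪[L] N) :=
    (h.subset (age.fg_substructure Substructure.fg_bot)).2
  obtain ⟨i, -⟩ := equiv_between_cg hMcg hNcg
    ⟨⟨⊥, j.toHom.range, j.equivRange⟩, Substructure.fg_bot⟩
    (isExtensionPair_of_age_subset hN h.subset) (isExtensionPair_of_age_subset hM h.superset)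
  exact ⟨i⟩

end Ultrahomogeneous

section Extensible

variable {K M N : Type*} [L.Structure K] [L.Structure M] [L.Structure N]

/-- An embedding is extensible if every automorphism of its domain extends along it to an
automorphism of its codomain. -/
def IsExtensible (e : M ↪[L] N) : Prop :=
  ∀ h : M ≃[L] M, ∃ h' : N ≃[L] N, e.comp h.toEmbedding = h'.toEmbedding.comp e

/-- Every automorphism of the substructure `A` extends to an automorphism of the substructure `B`.
Automorphisms of substructures are encoded as partial equivalences of the ambient structure, so
that they can be compared and glued across different substructures. -/
def AutExtends (A B : L.Substructure N) : Prop :=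
  ∀ p : N ≃ₚ[L] N, p.dom = A → p.cod = A → ∃ q, p ≤ q ∧ q.dom = B ∧ q.cod = B

/-- The automorphism of the range of `m` obtained by transporting the automorphism `h` along `m`,
as a partial equivalence of the codomain. -/
noncomputable def rangeConj (m : M ↪[L] N) (h : M ≃[L] M) : N ≃ₚ[L] N where
  dom := m.toHom.range
  cod := m.toHom.range
  toEquiv := m.equivRange.comp (h.comp m.equivRange.symm)

theorem coe_rangeConj_apply (m : M ↪[L] N) (h : M ≃[L] M) (x : M) (hx : m x ∈ m.toHom.range) :
    ((rangeConj m h).toEquiv ⟨m x, hx⟩ : N) = m (h x) :=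
  congrArg (fun y => m (h y)) (m.equivRange.symm_apply_apply x)

theorem exists_eq_rangeConj (m : M ↪[L] N) (p : N ≃ₚ[L] N) (hdom : p.dom = m.toHom.range)
    (hcod : p.cod = m.toHom.range) : ∃ h : M ≃[L] M, p = rangeConj m h := by
  obtain ⟨_, _, t⟩ := p
  dsimp only at hdom hcod
  subst hdom hcod
  have ht : t = m.equivRange.comp
      ((m.equivRange.symm.comp (t.comp m.equivRange)).comp m.equivRange.symm) := by
    ext x
    simp
  exact ⟨_, congrArg (Language.PartialEquiv.mk _ _) ht⟩

theorem rangeConj_comp_le_iff (m : M ↪[L] N) (e : K ↪[L] M) (h : K ≃[L] K) (h' : M ≃[L] M) :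
    rangeConj (m.comp e) h ≤ rangeConj m h' ↔
      e.comp h.toEmbedding = h'.toEmbedding.comp e := by
  have hle : (m.comp e).toHom.range ≤ m.toHom.range := by
    rintro _ ⟨x, rfl⟩
    exact ⟨e x, rfl⟩
  refine ⟨fun ⟨_, heq⟩ => ?_, fun heq => ⟨hle, ?_⟩⟩
  · ext x
    have hx := DFunLike.congr_fun heq ⟨m (e x), x, rfl⟩
    exact m.injective ((coe_rangeConj_apply (m.comp e) h x ⟨x, rfl⟩).symm.trans
      (hx.symm.trans (coe_rangeConj_apply m h' (e x) ⟨e x, rfl⟩)))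
  · ext ⟨_, x, rfl⟩
    have hx : e (h x) = h' (e x) := DFunLike.congr_fun heq x
    exact (coe_rangeConj_apply m h' (e x) ⟨e x, rfl⟩).trans
      ((congrArg m hx.symm).trans (coe_rangeConj_apply (m.comp e) h x ⟨x, rfl⟩).symm)

theorem isExtensible_iff_autExtends_range (m : M ↪[L] N) (e : K ↪[L] M) :
    IsExtensible e ↔ AutExtends (m.comp e).toHom.range m.toHom.range := by
  constructor
  · intro he p hdom hcod
    obtain ⟨h, rfl⟩ := exists_eq_rangeConj (m.comp e) p hdom hcod
    obtain ⟨h', hh'⟩ := he h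
    exact ⟨rangeConj m h', (rangeConj_comp_le_iff m e h h').2 hh', rfl, rfl⟩
  · intro hext h
    obtain ⟨q, hle, hdom, hcod⟩ := hext (rangeConj (m.comp e) h) rfl rfl
    obtain ⟨h', rfl⟩ := exists_eq_rangeConj m q hdom hcod
    exact ⟨h', (rangeConj_comp_le_iff m e h h').1 hle⟩

theorem isExtensible_iff_autExtends_top (e : M ↪[L] N) :
    IsExtensible e ↔ AutExtends e.toHom.range ⊤ := by
  have hrefl : (Embedding.refl L N).toHom.range = ⊤ := Hom.range_id
  rw [isExtensible_iff_autExtends_range (Embedding.refl L N), hrefl, Embedding.refl_comp]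

theorem IsExtensible.exists_extend_of_range_le {e : M ↪[L] N} (he : IsExtensible e)
    (hM : L.IsUltrahomogeneous M) (hK : Structure.FG L K) (f g : K ↪[L] N)
    (hf : f.toHom.range ≤ e.toHom.range) (hg : g.toHom.range ≤ e.toHom.range) :
    ∃ h : N ≃[L] N, h.toEmbedding.comp f = g := by
  obtain ⟨s, rfl⟩ := exists_comp_eq_of_range_le e f hf
  obtain ⟨t, rfl⟩ := exists_comp_eq_of_range_le e g hg
  obtain ⟨h, rfl⟩ := exists_equiv_comp_eq hM hK s t
  obtain ⟨h', hh'⟩ := he h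
  exact ⟨h', by rw [← Embedding.comp_assoc, ← hh', Embedding.comp_assoc]⟩

end Extensible

section Chain

variable {N : Type*} [L.Structure N] {ι : Type*} [LinearOrder ι]

theorem exists_partialEquiv_dom_cod_eq_iSup [Nonempty ι] {q : ι → N ≃ₚ[L] N} (hq : Monotone q) :
    ∃ r, (∀ a, q a ≤ r) ∧ r.dom = ⨆ a, (q a).dom ∧ r.cod = ⨆ a, (q a).cod :=
  ⟨DirectLimit.partialEquivLimit ⟨q, hq⟩, Language.DirectLimit.le_partialEquivLimit ⟨q, hq⟩,
    rfl, rfl⟩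

variable [WellFoundedLT ι] {S : ι → L.Substructure N}

theorem autExtends_bot_iSup [OrderBot ι]
    (hS : ∀ c, ⊥ < c → AutExtends (⨆ b : Iio c, S b) (S c)) : AutExtends (S ⊥) (⨆ c, S c) := by
  intro p hdom hcod
  obtain ⟨q, hq⟩ := exists_forall_of_wellFoundedLT (X := fun _ : ι => N ≃ₚ[L] N)
    (fun c g x => x.dom = S c ∧ x.cod = S c ∧ p ≤ x ∧ ∀ b hb, g b hb ≤ x) (by
      intro c q hq
      rcases eq_bot_or_bot_lt c with rfl | hc
      · exact ⟨p, hdom, hcod, le_rfl, fun b hb => (not_lt_bot hb).elim⟩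
      have : Nonempty (Iio c) := ⟨⟨⊥, hc⟩⟩
      obtain ⟨r, hr, hrdom, hrcod⟩ := exists_partialEquiv_dom_cod_eq_iSup
        (q := fun b : Iio c => q b) (monotone_iff_forall_lt.2 fun a b hab => (hq b b.2).2.2.2 a hab)
      obtain ⟨x, hrx, hxdom, hxcod⟩ := hS c hc r
        (hrdom.trans (iSup_congr fun b => (hq b b.2).1))
        (hrcod.trans (iSup_congr fun b => (hq b b.2).2.1))
      exact ⟨x, hxdom, hxcod, ((hq ⊥ hc).2.2.1.trans (hr ⟨⊥, hc⟩)).trans hrx,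
        fun b hb => (hr ⟨b, hb⟩).trans hrx⟩)
  obtain ⟨r, hr, hrdom, hrcod⟩ := exists_partialEquiv_dom_cod_eq_iSup
    (q := q) (monotone_iff_forall_lt.2 fun a b hab => (hq b).2.2.2 a hab)
  exact ⟨r, (hq ⊥).2.2.1.trans (hr ⊥), hrdom.trans (iSup_congr fun b => (hq b).1),
    hrcod.trans (iSup_congr fun b => (hq b).2.1)⟩

theorem autExtends_iSup (hmono : Monotone S)
    (hS : ∀ c, (Iio c).Nonempty → AutExtends (⨆ b : Iio c, S b) (S c)) (a : ι) :
    AutExtends (S a) (⨆ c, S c) := by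
  have htail : ⨆ c : Ici a, S c = ⨆ c, S c :=
    hmono.iSup_comp_eq fun c => ⟨⟨max a c, le_max_left a c⟩, le_max_right a c⟩
  rw [← htail]
  refine autExtends_bot_iSup (S := fun c : Ici a => S c) fun c hc => ?_
  have hac : a < c := hc
  have htail_lt : ⨆ b : Iio c, S b = ⨆ b : Iio c.1, S b :=
    (hmono.comp (Subtype.mono_coe _)).iSup_comp_eq (s := fun b : Iio c => (⟨b.1, b.2⟩ : Iio c.1))
      fun b => ⟨⟨⟨max a b, le_max_left a b.1⟩, max_lt hac b.2⟩, le_max_right a b.1⟩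
  rw [htail_lt]
  exact hS c ⟨a, hac⟩

end Chain

section Tower

variable {U : Type w} [L.Structure U] {e : U ↪[L] U} {ι : Type w} [LinearOrder ι]

/-- A directed system of copies of `U` indexed by `ι` in which the union of the copies strictly
below a non-minimal `c` sits inside the copy at `c` as the range of `e`. The map `map b c` is
meaningful only for `b ≤ c`. -/
structure Tower (e : U ↪[L] U) (ι : Type w) [LinearOrder ι] where
  map : ι → ι → (U ↪[L] U)
  map_self : ∀ c, map c c = Embedding.refl L U
  map_comp_map : ∀ {a b c}, a ≤ b → b ≤ c → (map b c).comp (map a b) = map a c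
  iSup_range_map : ∀ {c}, (Iio c).Nonempty →
    ⨆ b : Iio c, (map b c).toHom.range = e.toHom.range

namespace Tower

instance directedSystem (T : Tower e ι) :
    DirectedSystem (fun _ : ι => U) (fun b c _ => T.map b c) where
  map_self c x := by simp [T.map_self]
  map_map a b c hab hbc x := DFunLike.congr_fun (T.map_comp_map hab hbc) x

variable [Nonempty ι]

/-- The direct limit of a tower. -/
abbrev Limit (T : Tower e ι) : Type w :=
  Language.DirectLimit (fun _ : ι => U) (fun b c _ => T.map b c)

/-- The canonical embedding of the copy of `U` at stage `c` into the limit of a tower. -/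
noncomputable abbrev toLimit (T : Tower e ι) (c : ι) : U ↪[L] T.Limit :=
  Language.DirectLimit.of L ι (fun _ : ι => U) (fun b c _ => T.map b c) c

variable (T : Tower e ι)

theorem toLimit_comp_map {b c : ι} (hbc : b ≤ c) :
    (T.toLimit c).comp (T.map b c) = T.toLimit b := by
  ext x
  exact Language.DirectLimit.of_f (G := fun _ : ι => U) (f := fun b c _ => T.map b c) (hij := hbc)

theorem range_toLimit_of_le {b c : ι} (hbc : b ≤ c) :
    (T.toLimit b).toHom.range = (T.map b c).toHom.range.map (T.toLimit c).toHom := by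
  rw [← T.toLimit_comp_map hbc, Embedding.comp_toHom, Hom.range_comp]

theorem monotone_range_toLimit : Monotone fun c => (T.toLimit c).toHom.range :=
  fun _ _ hbc => (T.range_toLimit_of_le hbc).trans_le Hom.map_le_range

theorem iSup_range_toLimit_lt {c : ι} (hc : (Iio c).Nonempty) :
    ⨆ b : Iio c, (T.toLimit b).toHom.range = ((T.toLimit c).comp e).toHom.range := by
  calc ⨆ b : Iio c, (T.toLimit b).toHom.range
      = ⨆ b : Iio c, (T.map b c).toHom.range.map (T.toLimit c).toHom :=
        iSup_congr fun b => T.range_toLimit_of_le (le_of_lt b.2)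
    _ = e.toHom.range.map (T.toLimit c).toHom := by
        rw [← Substructure.map_iSup, T.iSup_range_map hc]
    _ = ((T.toLimit c).comp e).toHom.range := by
        rw [Embedding.comp_toHom, Hom.range_comp]

theorem isExtensible_toLimit [WellFoundedLT ι] (he : IsExtensible e) (c : ι) :
    IsExtensible (T.toLimit c) := by
  rw [isExtensible_iff_autExtends_top, ← Language.DirectLimit.iSup_range_of_eq_top]
  refine autExtends_iSup T.monotone_range_toLimit (fun b hb => ?_) c
  rw [T.iSup_range_toLimit_lt hb]
  exact (isExtensible_iff_autExtends_range (T.toLimit b) e).1 he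

theorem exists_le_range_toLimit {S : L.Substructure T.Limit} (hS : S.FG) :
    ∃ c, S ≤ (T.toLimit c).toHom.range := by
  obtain ⟨c, A, rfl⟩ := Language.DirectLimit.exists_fg_substructure_in_Sigma S hS
  exact ⟨c, Hom.map_le_range⟩

theorem isUltrahomogeneous_limit [WellFoundedLT ι] (he : IsExtensible e)
    (hU : L.IsUltrahomogeneous U) : L.IsUltrahomogeneous T.Limit := by
  intro S hS f
  have hSfg : Structure.FG L S := (Substructure.fg_iff_structure_fg S).1 hS
  obtain ⟨c, hc⟩ := T.exists_le_range_toLimit (hS.sup (hSfg.range f.toHom))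
  obtain ⟨g, hg⟩ := (T.isExtensible_toLimit he c).exists_extend_of_range_le hU hSfg S.subtype f
    (S.range_subtype.trans_le (le_sup_left.trans hc)) (le_sup_right.trans hc)
  exact ⟨g, hg.symm⟩

theorem age_limit : L.age T.Limit = L.age U :=
  (age_directLimit (fun _ : ι => U) _).trans (iUnion_const _)

theorem nonempty_equiv_limit [Countable ι] [WellFoundedLT ι] (he : IsExtensible e)
    (hU : L.IsUltrahomogeneous U) (hcg : Structure.CG L U) : Nonempty (T.Limit ≃[L] U) :=
  nonempty_equiv_of_age_eq (Language.DirectLimit.cg _ fun _ => hcg) hcg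
    (T.isUltrahomogeneous_limit he hU) hU T.age_limit

theorem toLimit_apply_ne_of_lt {b c : ι} (hbc : b < c) {x : U} (hx : x ∉ e.toHom.range) :
    T.toLimit b x ≠ T.toLimit c x := by
  intro heq
  have hmem : (T.toLimit b x) ∈ ((T.toLimit c).comp e).toHom.range :=
    T.iSup_range_toLimit_lt ⟨b, hbc⟩ ▸
      le_iSup (fun b : Iio c => (T.toLimit b).toHom.range) ⟨b, hbc⟩ ⟨x, rfl⟩
  obtain ⟨y, hy⟩ := hmem
  exact hx ⟨y, (T.toLimit c).injective (hy.trans heq)⟩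

theorem uncountable_limit [Uncountable ι] (hns : ¬ Function.Surjective e) :
    Uncountable T.Limit := by
  obtain ⟨x, hx⟩ := not_forall.1 hns
  have hinj : Function.Injective fun c => T.toLimit c x :=
    .of_lt_imp_ne fun b c hbc => T.toLimit_apply_ne_of_lt hbc hx
  exact hinj.uncountable

end Tower

/-- The maps `x b` from the copies of `U` at stages `b ≤ c` into the copy at stage `c` prolong to
stage `c` the tower whose maps into each earlier stage `b` are `g b`. -/
structure IsStage (e : U ↪[L] U) (c : ι) (g : ∀ b < c, ι → (U ↪[L] U)) (x : ι → (U ↪[L] U)) :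
    Prop where
  map_self : x c = Embedding.refl L U
  comp_map : ∀ {a b} (hb : b < c), a ≤ b → (x b).comp (g b hb a) = x a
  iSup_range : (Iio c).Nonempty → ⨆ b : Iio c, (x b).toHom.range = e.toHom.range

/-- The tower assembled from compatible stages. -/
def Tower.ofStages (f : ι → ι → (U ↪[L] U)) (hf : ∀ c, IsStage e c (fun b _ => f b) (f c)) :
    Tower e ι where
  map b c := f c b
  map_self c := (hf c).map_self
  map_comp_map {a b c} hab hbc := by
    rcases hbc.eq_or_lt with rfl | hbc
    · rw [(hf b).map_self, Embedding.refl_comp]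
    · exact (hf c).comp_map hbc hab
  iSup_range_map {c} := (hf c).iSup_range

theorem IsStage.restrict_Iio {f : ι → ι → (U ↪[L] U)} {c : ι} {b : Iio c}
    (h : IsStage e b.1 (fun a _ => f a) (f b)) :
    IsStage e b (fun a _ i => f a i) (fun i => f b i) where
  map_self := h.map_self
  comp_map ha := h.comp_map ha
  iSup_range := by
    rintro ⟨a, ha⟩
    rw [← h.iSup_range ⟨a, ha⟩]
    have hsurj : Function.Surjective fun i : Iio b => (⟨i, i.2⟩ : Iio b.1) :=
      fun i => ⟨⟨⟨i, i.2.trans b.2⟩, i.2⟩, rfl⟩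
    exact hsurj.iSup_comp (g := fun i : Iio b.1 => (f b i).toHom.range)

theorem exists_isStage [WellFoundedLT ι] (he : IsExtensible e) (hU : L.IsUltrahomogeneous U)
    (hcg : Structure.CG L U) {c : ι} [Countable (Iio c)] (f : ι → ι → (U ↪[L] U))
    (hf : ∀ b < c, IsStage e b (fun a _ => f a) (f b)) :
    ∃ x, IsStage e c (fun b _ => f b) x := by
  by_cases hc : (Iio c).Nonempty
  · have : Nonempty (Iio c) := hc.to_subtype
    let T : Tower e (Iio c) :=
      Tower.ofStages (fun b a => f b a) fun b => (hf b b.2).restrict_Iio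
    obtain ⟨i⟩ := T.nonempty_equiv_limit he hU hcg
    let x (b : ι) : U ↪[L] U :=
      if hb : b < c then (e.comp i.toEmbedding).comp (T.toLimit ⟨b, hb⟩) else Embedding.refl L U
    have hx (b : Iio c) : x b = (e.comp i.toEmbedding).comp (T.toLimit b) := dif_pos b.2
    refine ⟨x, dif_neg (lt_irrefl c), fun {a b} hb hab => ?_, fun _ => ?_⟩
    · rw [hx ⟨b, hb⟩, hx ⟨a, hab.trans_lt hb⟩, Embedding.comp_assoc]
      exact congrArg _ (T.toLimit_comp_map (b := ⟨a, hab.trans_lt hb⟩) (c := ⟨b, hb⟩) hab)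
    · simp_rw [hx, Embedding.comp_toHom, Hom.range_comp]
      rw [← Substructure.map_iSup, Language.DirectLimit.iSup_range_of_eq_top]
      rw [← Hom.range_eq_map, Hom.range_comp, Language.Equiv.toEmbedding_toHom,
        Language.Equiv.toHom_range, Hom.range_eq_map]
  · exact ⟨fun _ => Embedding.refl L U, rfl, fun hb => (hc ⟨_, hb⟩).elim, fun h => (hc h).elim⟩

theorem nonempty_tower [WellFoundedLT ι] (he : IsExtensible e) (hU : L.IsUltrahomogeneous U)
    (hcg : Structure.CG L U) (hι : ∀ c : ι, (Iio c).Countable) : Nonempty (Tower e ι) := by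
  have : Nonempty (U ↪[L] U) := ⟨e⟩
  obtain ⟨f, hf⟩ := exists_forall_of_wellFoundedLT (X := fun _ : ι => ι → (U ↪[L] U)) (IsStage e)
    fun c f hf =>
      have : Countable (Iio c) := (hι c).to_subtype
      exists_isStage he hU hcg f hf
  exact ⟨Tower.ofStages f hf⟩

end Tower

end ExtensibleTower

open ExtensibleTower in
theorem statement8_general {L : FirstOrder.Language.{u, v}} {U : Type w} [L.Structure U]
    (hcg : Structure.CG L U) (hU : L.IsUltrahomogeneous U) {e : U ↪[L] U}
    (hns : ¬ Function.Surjective e) (he : IsExtensible e) :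
    ∃ N : Bundled.{w} L.Structure, Uncountable N ∧
      L.IsUltrahomogeneous N ∧ L.age N = L.age U := by
  let ι : Type w := (ℵ₁ : Cardinal.{w}).ord.ToType
  have : Uncountable ι := by
    rw [← Cardinal.aleph0_lt_mk_iff, Cardinal.mk_ord_toType]
    exact Cardinal.aleph0_lt_aleph_one
  have hIio (c : ι) : (Set.Iio c).Countable := by
    rw [← Cardinal.le_aleph0_iff_set_countable, ← Cardinal.lt_aleph_one_iff]
    simpa [ι] using Cardinal.mk_Iio_lt c
  obtain ⟨T⟩ := nonempty_tower he hU hcg hIio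
  exact ⟨Bundled.of T.Limit, T.uncountable_limit hns, T.isUltrahomogeneous_limit he hU,
    T.age_limit⟩

/-- Let `K` be a Fraïssé class in a countable language with Fraïssé limit `U`.
If there is a non-surjective extensible self-embedding of `U` (every automorphism of `U`
commutes with it up to an automorphism), then there is an uncountable ultrahomogeneous
structure whose age is `K`. -/
theorem statement8 (L : FirstOrder.Language.{0, 0}) [Countable L.Symbols]
    (K : Set (Bundled.{0} L.Structure)) [IsFraisse K]
    (U : Type) [L.Structure U] [Countable U]
    (hU : IsFraisseLimit K U)
    (hext : ∃ e : U ↪[L] U, ¬ Function.Surjective e ∧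
      ∀ h : U ≃[L] U, ∃ h' : U ≃[L] U,
        e.comp (Language.Equiv.toEmbedding h) = (Language.Equiv.toEmbedding h').comp e) :
    ∃ N : Bundled.{0} L.Structure, ¬ Countable N ∧
      L.IsUltrahomogeneous N ∧ L.age N = K := by
  obtain ⟨e, hns, he⟩ := hext
  obtain ⟨N, hN, hNu, hage⟩ :=
    statement8_general Structure.cg_of_countable hU.ultrahomogeneous hns he
  exact ⟨N, not_countable, hNu, hage.trans hU.age⟩
end
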